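/- Let q* ∈ D satisfy Δ(q*) = 0, ∇Δ(q*) ≠ 0, a(q*) ≠ 0, and (a·Δ_t − b·Δ_x)(q*) ≠ 0, and let p* ∈ ℝ be a non-isotropic simple root of the cubic M(q*, ·): M(q*, p*) = 0, ∂M/∂p(q*, p*) ≠ 0, and F(q*, p*) = a(q*)p*² + 2b(q*)p* + c(q*) ≠ 0. Then V(q*, p*) = 0, and the germ of V at the singular point (q*, p*) is C^∞-smoothly orbitally equivalent to the germ at 0 of the vector field ξ̇ = ξ, η̇ = −η, ζ̇ = ξη. -/

import Mathlib

open Filter Topology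

/-- Partial derivative of `g : ℝ² → ℝ` with respect to the first coordinate. -/
noncomputable def d1 (g : ℝ × ℝ → ℝ) (q : ℝ × ℝ) : ℝ := fderiv ℝ g q ((1 : ℝ), (0 : ℝ))

/-- Partial derivative of `g : ℝ² → ℝ` with respect to the second coordinate. -/
noncomputable def d2 (g : ℝ × ℝ → ℝ) (q : ℝ × ℝ) : ℝ := fderiv ℝ g q ((0 : ℝ), (1 : ℝ))

/-- Two vector fields `V`, `N` with marked points `x₀`, `y₀` are `C^∞`-smoothly orbitally
equivalent (as germs) if there are open neighborhoods `U ∋ x₀`, `U' ∋ y₀` with `U`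
contained in the domain `Dom`, a `C^∞` diffeomorphism `Φ : U → U'` with `Φ x₀ = y₀`, and
a `C^∞` nowhere-vanishing function `h : U → ℝ` with `DΦ(x)·V(x) = h(x)·N(Φ(x))` on `U`. -/
def OrbEquiv {E : Type*} [NormedAddCommGroup E] [NormedSpace ℝ E]
    (Dom : Set E) (V N : E → E) (x₀ y₀ : E) : Prop :=
  ∃ (U U' : Set E) (Φ Ψ : E → E) (h : E → ℝ),
    IsOpen U ∧ IsOpen U' ∧ x₀ ∈ U ∧ y₀ ∈ U' ∧ U ⊆ Dom ∧
    ContDiffOn ℝ (⊤ : ℕ∞) Φ U ∧ ContDiffOn ℝ (⊤ : ℕ∞) Ψ U' ∧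
    Φ x₀ = y₀ ∧ Set.MapsTo Φ U U' ∧ Set.MapsTo Ψ U' U ∧
    (∀ x ∈ U, Ψ (Φ x) = x) ∧ (∀ y ∈ U', Φ (Ψ y) = y) ∧
    ContDiffOn ℝ (⊤ : ℕ∞) h U ∧ (∀ x ∈ U, h x ≠ 0) ∧
    ∀ x ∈ U, fderiv ℝ Φ x (V x) = h x • N (Φ x)

/-!
At a non-isotropic zero of the cubic `M` over the curve `Δ = 0` one has `∂M/∂p = -2 k` with
`k = Δ_t + p Δ_x`, so the nonzero eigenvalues of the linear part of `V` there are `k` and `-k`.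
Divided by `k` and rectified by `(v, x, p) = (Δ, x - x* - p* (t - t*), (p - p*) / k)`, the field
becomes `(v, v p, m)` with `∂m/∂p = -1` on `{v = m = 0}`.

Solutions of `v dx/dv = v p`, `v dp/dv = m` that are smooth across `v = 0` satisfy
`p(v) = ∫₀¹ (p + m)(s v, x(s v), p(s v)) ds`, which the implicit function theorem in `C([0, 1], ℝ)`
solves smoothly in `v` and in `x(0)`. Straightening this family of leaves gives
`(v, v p, -p (1 - r))` with `r = 0` on `{v = p = 0}`.

It remains to solve `Z f = R` for such a saddle field `Z` when `R` vanishes on `{v = p = 0}`. Terms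
`v A(v, x)` and `p B(x, p)` can be integrated directly, up to multiples of `v p`, hence of
`U = v p exp (-φ)`, which for a suitable `φ` is constant along `Z` up to order `U ^ 2`. This gives a
formal power series in `U`, summed by Borel's lemma up to an error flat along `{p = 0}`; as the
forward flow contracts `p`, that error is integrated along the flow. With `R = r`, the function
`η = p exp (-f)` has eigenvalue exactly `-1`, and a function `ζ` with derivative `v η` is
found in the same way.
-/

open scoped ContDiff unitInterval

universe u v

section PathSpace

variable {K : Type*} [TopologicalSpace K] [CompactSpace K]
  {E F : Type*} [NormedAddCommGroup E] [NormedSpace ℝ E] [NormedAddCommGroup F] [NormedSpace ℝ F]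

/-- Pointwise application of a continuous family of continuous linear maps, as a bounded bilinear
map. It expresses the derivative of composition with a fixed map. -/
noncomputable def pointwiseApply : C(K, E →L[ℝ] F) →L[ℝ] C(K, E) →L[ℝ] C(K, F) :=
  LinearMap.mkContinuous₂
    (LinearMap.mk₂ ℝ (fun (A : C(K, E →L[ℝ] F)) (η : C(K, E)) =>
        (⟨fun s => A s (η s), A.continuous.clm_apply η.continuous⟩ : C(K, F)))
      (fun _ _ _ => by ext; simp) (fun _ _ _ => by ext; simp)
      (fun _ _ _ => by ext; simp) (fun _ _ _ => by ext; simp)) 1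
    (fun A η => by
      rw [one_mul]
      refine (ContinuousMap.norm_le _ (by positivity)).2 fun s => ?_
      exact ((A s).le_opNorm _).trans
        (mul_le_mul (A.norm_coe_le_norm s) (η.norm_coe_le_norm s) (norm_nonneg _) (by positivity)))

@[simp] lemma pointwiseApply_apply (A : C(K, E →L[ℝ] F)) (η : C(K, E)) (s : K) :
    pointwiseApply A η s = A s (η s) := rfl

lemma hasFDerivAt_continuousMap_comp {g : C(E, F)} {g' : C(E, E →L[ℝ] F)}
    (hg : ∀ x, HasFDerivAt g (g' x) x) (γ : C(K, E)) :
    HasFDerivAt (fun γ : C(K, E) => g.comp γ) (pointwiseApply (g'.comp γ)) γ := by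
  rw [hasFDerivAt_iff_isLittleO_nhds_zero, Asymptotics.isLittleO_iff]
  intro ε hε
  obtain ⟨δ, hδ, hclose⟩ := (Metric.continuousAt_iff (f := fun γ : C(K, E) => g'.comp γ)).1
    (ContinuousMap.continuous_postcomp g').continuousAt ε hε
  filter_upwards [Metric.ball_mem_nhds (0 : C(K, E)) hδ] with η hη
  rw [mem_ball_zero_iff] at hη
  refine (ContinuousMap.norm_le _ (by positivity)).2 fun s => ?_
  have hsegment : ∀ x ∈ segment ℝ (γ s) (γ s + η s), ‖g' x - g' (γ s)‖ ≤ ε := by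
    intro x hx
    obtain ⟨θ, hθ, rfl⟩ := (segment_eq_image' ℝ (γ s) (γ s + η s)) ▸ hx
    have hdist : dist (γ + θ • η) γ < δ := by
      rw [dist_eq_norm, add_sub_cancel_left, norm_smul, Real.norm_of_nonneg hθ.1]
      exact (mul_le_of_le_one_left (norm_nonneg η) hθ.2).trans_lt hη
    have hs := (ContinuousMap.dist_apply_le_dist s).trans (hclose hdist).le
    simpa [dist_eq_norm] using hs
  have hmean := (convex_segment (γ s) (γ s + η s)).norm_image_sub_le_of_norm_hasFDerivWithin_le'
    (fun x _ => (hg x).hasFDerivWithinAt) hsegment (left_mem_segment ℝ _ _)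
    (right_mem_segment ℝ _ _)
  simp only [add_sub_cancel_left] at hmean
  simpa using hmean.trans (mul_le_mul_of_nonneg_left (η.norm_coe_le_norm s) hε.le)

lemma contDiff_continuousMap_comp (n : ℕ) {E : Type u} {F : Type (max u v)}
    [NormedAddCommGroup E] [NormedSpace ℝ E] [NormedAddCommGroup F] [NormedSpace ℝ F]
    (g : C(E, F)) (hg : ContDiff ℝ n g) : ContDiff ℝ n fun γ : C(K, E) => g.comp γ := by
  induction n generalizing F with
  | zero => exact contDiff_zero.2 (ContinuousMap.continuous_postcomp g)
  | succ n ih =>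
    have hg1 : ContDiff ℝ 1 g := hg.of_le (by exact_mod_cast Nat.succ_le_succ (Nat.zero_le n))
    have hfderiv : ContDiff ℝ n (fderiv ℝ g) := hg.fderiv_right (by norm_cast)
    let g' : C(E, E →L[ℝ] F) := ⟨fderiv ℝ g, hfderiv.continuous⟩
    have hderiv : ContDiff ℝ n fun γ : C(K, E) =>
        (pointwiseApply (g'.comp γ) : C(K, E) →L[ℝ] C(K, F)) :=
      ContDiff.comp (g := (pointwiseApply : C(K, E →L[ℝ] F) →L[ℝ] C(K, E) →L[ℝ] C(K, F)))
        (ContinuousLinearMap.contDiff _) (ih g' hfderiv)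
    push_cast
    rw [contDiff_succ_iff_hasFDerivAt]
    exact ⟨_, hderiv,
      hasFDerivAt_continuousMap_comp fun x => (hg1.differentiable one_ne_zero x).hasFDerivAt⟩

theorem contDiff_infty_continuousMap_comp {E : Type u} {F : Type v}
    [NormedAddCommGroup E] [NormedSpace ℝ E] [NormedAddCommGroup F] [NormedSpace ℝ F]
    (g : C(E, F)) (hg : ContDiff ℝ ∞ g) : ContDiff ℝ ∞ fun γ : C(K, E) => g.comp γ := by
  let lift : ULift.{u} F ≃L[ℝ] F := ContinuousLinearEquiv.ulift
  let glift : C(E, ULift.{u} F) := ⟨lift.symm ∘ g, lift.symm.continuous.comp g.continuous⟩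
  have hglift : ContDiff ℝ ∞ fun γ : C(K, E) => glift.comp γ := contDiff_infty.2 fun n =>
    contDiff_continuousMap_comp n glift (lift.symm.contDiff.comp (contDiff_infty.1 hg n))
  exact (ContinuousLinearMap.compLeftContinuous (R := ℝ) K
    (lift : ULift.{u} F →L[ℝ] F)).contDiff.comp hglift

variable (K F) in
/-- The inclusion of the constant functions, as a bounded linear map. -/
noncomputable def constCLM : F →L[ℝ] C(K, F) :=
  LinearMap.mkContinuous ⟨⟨ContinuousMap.const K, fun _ _ => rfl⟩, fun _ _ => rfl⟩ 1
    fun x => by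
      rw [one_mul]
      exact (ContinuousMap.norm_le _ (norm_nonneg _)).2 fun _ => le_rfl

@[simp] lemma constCLM_apply (x : F) (s : K) : constCLM K F x s = x := rfl

/-- The extension of a path on the unit interval to the line, constant on either side. -/
noncomputable abbrev pathExtend {X : Type*} [TopologicalSpace X] (γ : C(I, X)) : ℝ → X :=
  Set.IccExtend zero_le_one γ

lemma continuous_pathExtend {X : Type*} [TopologicalSpace X] (γ : C(I, X)) :
    Continuous (pathExtend γ) :=
  γ.continuous.Icc_extend'

lemma norm_integral_pathExtend_mul_le (γ : C(I, F)) (t : ℝ) :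
    ‖∫ τ in (0 : ℝ)..1, pathExtend γ (t * τ)‖ ≤ ‖γ‖ := by
  simpa using intervalIntegral.norm_integral_le_of_norm_le_const (a := 0) (b := 1)
    (f := fun τ => pathExtend γ (t * τ)) fun τ _ => γ.norm_coe_le_norm _

variable (F) in
/-- The averaging operator `γ ↦ (t ↦ ∫₀¹ γ (t τ) dτ)`. Unlike `t⁻¹ ∫₀ᵗ γ`, it makes sense at
`t = 0`. -/
noncomputable def averageCLM : C(I, F) →L[ℝ] C(I, F) :=
  LinearMap.mkContinuous
    { toFun := fun γ => ⟨fun t => ∫ τ in (0 : ℝ)..1, pathExtend γ (t * τ), by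
        apply intervalIntegral.continuous_parametric_intervalIntegral_of_continuous'
        exact (continuous_pathExtend γ).comp
          ((continuous_subtype_val.comp continuous_fst).mul continuous_snd)⟩
      map_add' := fun γ η => by
        ext t
        have hint (γ : C(I, F)) := ((continuous_pathExtend γ).comp
          (continuous_const_mul (t : ℝ))).intervalIntegrable (μ := MeasureTheory.volume) 0 1
        exact intervalIntegral.integral_add (hint γ) (hint η)
      map_smul' := fun c γ => by
        ext t
        exact intervalIntegral.integral_smul c _ } 1
    fun γ => by
      rw [one_mul]
      exact (ContinuousMap.norm_le _ (by positivity)).2 fun t => norm_integral_pathExtend_mul_le γ t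

lemma averageCLM_apply (γ : C(I, F)) (t : I) :
    averageCLM F γ t = ∫ τ in (0 : ℝ)..1, pathExtend γ (t * τ) := rfl

lemma norm_averageCLM_apply_le (γ : C(I, F)) (t : I) : ‖averageCLM F γ t‖ ≤ ‖γ‖ :=
  norm_integral_pathExtend_mul_le γ t

lemma smul_averageCLM (γ : C(I, F)) (t : I) :
    (t : ℝ) • averageCLM F γ t = ∫ s in (0 : ℝ)..t, pathExtend γ s := by
  rw [averageCLM_apply, intervalIntegral.smul_integral_comp_mul_left]
  simp

variable (F) in
/-- The Volterra operator `γ ↦ (t ↦ ∫₀ᵗ γ)`. -/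
noncomputable def volterraCLM : C(I, F) →L[ℝ] C(I, F) :=
  LinearMap.mkContinuous
    { toFun := fun γ => ⟨fun t => (t : ℝ) • averageCLM F γ t,
        continuous_subtype_val.smul (averageCLM F γ).continuous⟩
      map_add' := fun γ η => by ext t; simp
      map_smul' := fun c γ => by ext t; simp [smul_comm c] } 1
    fun γ => by
      rw [one_mul]
      refine (ContinuousMap.norm_le _ (by positivity)).2 fun t => ?_
      refine (norm_smul_le _ _).trans ?_
      rw [Real.norm_of_nonneg t.2.1]
      exact (mul_le_of_le_one_left (norm_nonneg _) t.2.2).trans (norm_averageCLM_apply_le γ t)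

lemma volterraCLM_apply (γ : C(I, F)) (t : I) :
    volterraCLM F γ t = ∫ s in (0 : ℝ)..t, pathExtend γ s := smul_averageCLM γ t

lemma volterraCLM_eq_smul (γ : C(I, F)) (t : I) :
    volterraCLM F γ t = (t : ℝ) • averageCLM F γ t := rfl

lemma norm_volterraCLM_le : ‖volterraCLM F‖ ≤ 1 :=
  LinearMap.mkContinuous_norm_le _ zero_le_one _

lemma contDiff_path_of_contDiff (g : ℝ × E → F) (hg : ContDiff ℝ ∞ g) :
    ContDiff ℝ ∞ fun z : E => (⟨fun s : I => g (s, z), by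
      exact hg.continuous.comp (continuous_subtype_val.prodMk continuous_const)⟩ : C(I, F)) := by
  let segment : C(I, ℝ × E) := ⟨fun s => (s, 0), by fun_prop⟩
  have h : ContDiff ℝ ∞ fun z : E => (⟨g, hg.continuous⟩ : C(ℝ × E, F)).comp
      (segment + constCLM I (ℝ × E) (ContinuousLinearMap.inr ℝ ℝ E z)) :=
    (contDiff_infty_continuousMap_comp ⟨g, hg.continuous⟩ hg).comp
      (contDiff_const.add ((constCLM I (ℝ × E)).comp (ContinuousLinearMap.inr ℝ ℝ E)).contDiff)
  convert h using 2 with z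
  ext s
  simp [segment]

lemma contDiff_integral_unitInterval {g : ℝ × E → F} (hg : ContDiff ℝ ∞ g) :
    ContDiff ℝ ∞ fun z : E => ∫ s in (0 : ℝ)..1, g (s, z) := by
  let path (z : E) : C(I, F) := ⟨fun s => g (s, z), by
    exact hg.continuous.comp (continuous_subtype_val.prodMk continuous_const)⟩
  have hpath : ContDiff ℝ ∞ path := contDiff_path_of_contDiff g hg
  have h : ContDiff ℝ ∞ fun z => averageCLM F (path z) 1 :=
    ((ContinuousMap.evalCLM ℝ (1 : I)).comp (averageCLM F)).contDiff.comp hpath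
  convert h using 2 with z
  rw [averageCLM_apply]
  refine intervalIntegral.integral_congr fun s hs => ?_
  rw [Set.uIcc_of_le zero_le_one] at hs
  simp [pathExtend, Set.IccExtend_of_mem zero_le_one _ hs, path]

end PathSpace

section InverseFunction

variable {E F : Type*} [NormedAddCommGroup E] [NormedSpace ℝ E] [CompleteSpace E]
  [NormedAddCommGroup F] [NormedSpace ℝ F]

lemma exists_contDiff_rightInverse_id_sub {N : E → E} (hN : ContDiff ℝ ∞ N) {k : NNReal}
    (hk : k < 1) (hL : LipschitzWith k N) :
    ∃ S : E → E, ContDiff ℝ ∞ S ∧ ∀ y, S y - N (S y) = y := by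
  have happrox : ApproximatesLinearOn (fun x => x - N x)
      (ContinuousLinearEquiv.refl ℝ E : E →L[ℝ] E) Set.univ k := fun x _ y _ => by
    simpa [sub_sub_sub_comm x (N x) y, norm_sub_rev] using hL.norm_sub_le x y
  have hsmall : Subsingleton E ∨
      k < ‖((ContinuousLinearEquiv.refl ℝ E).symm : E →L[ℝ] E)‖₊⁻¹ := by
    rcases subsingleton_or_nontrivial E with hE | hE
    · exact Or.inl hE
    · right
      simpa using hk
  let e := happrox.toHomeomorph _ hsmall
  have hderiv (x : E) : ∃ A : E ≃L[ℝ] E, HasFDerivAt e (A : E →L[ℝ] E) x := by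
    have hNx : HasFDerivAt N (fderiv ℝ N x) x := (hN.differentiable (by simp) x).hasFDerivAt
    have hnorm : ‖fderiv ℝ N x‖ < 1 := (hNx.le_of_lipschitz hL).trans_lt (by exact_mod_cast hk)
    exact ⟨ContinuousLinearEquiv.ofUnit (Units.oneSub _ hnorm), (hasFDerivAt_id x).sub hNx⟩
  choose A hA using hderiv
  exact ⟨e.symm, e.contDiff_symm hA (contDiff_id.sub hN), e.apply_symm_apply⟩

lemma exists_smooth_openPartialHomeomorph {f : E → F} {a : E}
    (hf : ∀ᶠ z in 𝓝 a, ContDiffAt ℝ ∞ f z) {e : E ≃L[ℝ] F}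
    (he : HasFDerivAt f (e : E →L[ℝ] F) a) {W : Set E} (hW : W ∈ 𝓝 a) :
    ∃ P : OpenPartialHomeomorph E F, ⇑P = f ∧ a ∈ P.source ∧ P.source ⊆ W ∧
      (∀ z ∈ P.source, ContDiffAt ℝ ∞ f z) ∧ ∀ y ∈ P.target, ContDiffAt ℝ ∞ P.symm y := by
  have hfa : ContDiffAt ℝ ∞ f a := hf.self_of_nhds
  let P₀ := hfa.toOpenPartialHomeomorph f he (by simp)
  have hcont : ContinuousAt (fderiv ℝ f) a := (hfa.fderiv_right (m := 0) (by simp)).continuousAt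
  have hinvertible :
      ∀ᶠ z in 𝓝 a, fderiv ℝ f z ∈ Set.range ((↑) : (E ≃L[ℝ] F) → (E →L[ℝ] F)) := by
    apply hcont
    rw [he.fderiv]
    exact ContinuousLinearEquiv.nhds e
  obtain ⟨O, hO, hOopen, haO⟩ := eventually_nhds_iff.1 (hf.and (hinvertible.and hW))
  have haP : a ∈ P₀.source := hfa.mem_toOpenPartialHomeomorph_source he (by simp)
  let P := P₀.restrOpen O hOopen
  refine ⟨P, rfl, ⟨haP, haO⟩, fun z hz => (hO z hz.2).2.2, fun z hz => (hO z hz.2).1,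
    fun y hy => ?_⟩
  obtain ⟨hsmooth, ⟨A, hA⟩, -⟩ := hO (P.symm y) (P.map_target hy).2
  exact P.contDiffAt_symm hy (hA ▸ (hsmooth.differentiableAt (by simp)).hasFDerivAt) hsmooth

end InverseFunction

section FixedPoint

variable {E F : Type*} [NormedAddCommGroup E] [NormedSpace ℝ E] [CompleteSpace E]
  [NormedAddCommGroup F] [NormedSpace ℝ F] [CompleteSpace F]

lemma exists_smooth_fixedPoint {T : E × F → F} (hT : ContDiff ℝ ∞ T) (hT0 : T 0 = 0)
    (hTF : HasFDerivAt (fun x => T (0, x)) (0 : F →L[ℝ] F) 0) :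
    ∃ S : E → F, S 0 = 0 ∧ (∀ᶠ u in 𝓝 0, ContDiffAt ℝ ∞ S u) ∧
      (∀ᶠ u in 𝓝 0, T (u, S u) = S u) ∧ ∀ᶠ z in 𝓝 (0 : E × F), T z = z.2 → S z.1 = z.2 := by
  let B : E × F →L[ℝ] F := fderiv ℝ T 0
  have hB : HasFDerivAt T B 0 := (hT.differentiable (by simp) 0).hasFDerivAt
  let ι : F →L[ℝ] E × F := ContinuousLinearMap.inr ℝ E F
  have hBι : B.comp ι = 0 :=
    (HasFDerivAt.comp (0 : F) (by simpa using hB) ι.hasFDerivAt).unique hTF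
  have hBι_apply (x : F) : B (ι x) = 0 := congrArg (· x) hBι
  let e : (E × F) ≃L[ℝ] E × F :=
    ContinuousLinearEquiv.equivOfInverse (.id ℝ _ - ι.comp B) (.id ℝ _ + ι.comp B)
      (fun x => by simp [hBι_apply]) (fun x => by simp [hBι_apply])
  have he : HasFDerivAt (fun z => z - ι (T z)) (e : E × F →L[ℝ] E × F) 0 :=
    (hasFDerivAt_id _).sub (ι.hasFDerivAt.comp _ hB)
  have hsmooth : ContDiff ℝ ∞ fun z => z - ι (T z) := contDiff_id.sub (ι.contDiff.comp hT)
  obtain ⟨P, hP, h0, -, -, hPsymm⟩ := exists_smooth_openPartialHomeomorph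
    (Eventually.of_forall fun z => hsmooth.contDiffAt) he univ_mem
  have hP_apply (z : E × F) : P z = (z.1, z.2 - T z) := by simp [hP, ι, Prod.ext_iff]
  have hP0 : P 0 = 0 := by simp [hP_apply, hT0]
  have h0target : (0 : E × F) ∈ P.target := hP0 ▸ P.map_source h0
  have hsymm0 : P.symm 0 = 0 := by simpa [hP0] using P.left_inv h0
  have hincl : ∀ᶠ u in 𝓝 (0 : E), (u, (0 : F)) ∈ P.target :=
    (Continuous.prodMk_left (0 : F)).continuousAt.eventually_mem (P.open_target.mem_nhds h0target)
  refine ⟨fun u => (P.symm (u, 0)).2, congrArg Prod.snd hsymm0, ?_, ?_, ?_⟩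
  · filter_upwards [hincl] with u hu
    exact ((hPsymm _ hu).comp u (contDiffAt_id.prodMk contDiffAt_const)).snd
  · filter_upwards [hincl] with u hu
    obtain ⟨hfst, hsnd⟩ := Prod.mk.inj ((hP_apply _).symm.trans (P.right_inv hu))
    have hpair : (u, (P.symm (u, 0)).2) = P.symm (u, 0) := Prod.ext hfst.symm rfl
    rw [hpair]
    exact (sub_eq_zero.1 hsnd).symm
  · filter_upwards [P.open_source.mem_nhds h0] with z hz hTz
    have hPz : P z = (z.1, 0) := by rw [hP_apply, hTz, sub_self]
    rw [← hPz, P.left_inv hz]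

end FixedPoint

section Flow

variable {E : Type*} [NormedAddCommGroup E] [NormedSpace ℝ E]

/-- The paths `γ z` are the integral curves on `[0, 1]` of the field `Z`, and depend smoothly on
the initial point `z`. Packaging them as elements of `C(I, E)` encodes the joint regularity of the
flow; the value of the flow at time `s` is `pathExtend (γ z) s`. -/
structure IsFlowPath (Z : E → E) (γ : E → C(I, E)) : Prop where
  contDiff : ContDiff ℝ ∞ γ
  zero : ∀ z, pathExtend (γ z) 0 = z
  deriv : ∀ z, ∀ s ∈ Set.Ico (0 : ℝ) 1,
    HasDerivWithinAt (pathExtend (γ z)) (Z (pathExtend (γ z) s)) (Set.Ici s) s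

lemma lipschitzWith_volterraCLM_comp {Z : C(E, E)} {k : NNReal} (hL : LipschitzWith k Z) :
    LipschitzWith k fun γ : C(I, E) => volterraCLM E (Z.comp γ) := by
  refine LipschitzWith.of_dist_le_mul fun γ η => ?_
  rw [dist_eq_norm, dist_eq_norm, ← map_sub]
  refine ((volterraCLM E).le_of_opNorm_le norm_volterraCLM_le _).trans ?_
  rw [one_mul]
  refine (ContinuousMap.norm_le _ (by positivity)).2 fun s => ?_
  refine (hL.norm_sub_le (γ s) (η s)).trans ?_
  gcongr
  exact (γ - η).norm_coe_le_norm s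

lemma exists_isFlowPath [CompleteSpace E] {Z : E → E} (hZ : ContDiff ℝ ∞ Z) {k : NNReal}
    (hk : k < 1) (hL : LipschitzWith k Z) : ∃ γ : E → C(I, E), IsFlowPath Z γ := by
  let Zmap : C(E, E) := ⟨Z, hZ.continuous⟩
  have hpicard : ContDiff ℝ ∞ fun γ : C(I, E) => volterraCLM E (Zmap.comp γ) :=
    (volterraCLM E).contDiff.comp (contDiff_infty_continuousMap_comp Zmap hZ)
  obtain ⟨S, hS, hSfix⟩ := exists_contDiff_rightInverse_id_sub hpicard hk
    (lipschitzWith_volterraCLM_comp (Z := Zmap) hL)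
  let γ (z : E) : C(I, E) := S (constCLM I E z)
  have hintegral (z : E) : ∀ t ∈ Set.Icc (0 : ℝ) 1,
      pathExtend (γ z) t = z + ∫ s in (0 : ℝ)..t, Z (pathExtend (γ z) s) := by
    intro t ht
    have h := DFunLike.congr_fun (hSfix (constCLM I E z)) ⟨t, ht⟩
    rw [ContinuousMap.sub_apply, volterraCLM_apply, constCLM_apply, sub_eq_iff_eq_add] at h
    rwa [pathExtend, Set.IccExtend_of_mem zero_le_one (γ z) ht]
  refine ⟨γ, hS.comp (constCLM I E).contDiff, fun z => ?_, fun z s hs => ?_⟩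
  · rw [hintegral z 0 (by simp), intervalIntegral.integral_same, add_zero]
  · have hcont : Continuous fun s => Z (pathExtend (γ z) s) :=
      hZ.continuous.comp (continuous_pathExtend _)
    have hderiv := (hcont.integral_hasStrictDerivAt 0 s).hasDerivAt.const_add z
    refine hderiv.hasDerivWithinAt.congr_of_eventuallyEq ?_ (hintegral z s ⟨hs.1, hs.2.le⟩)
    filter_upwards [Ico_mem_nhdsGE hs.2] with t ht
    exact hintegral z t ⟨hs.1.trans ht.1, ht.2.le⟩

namespace IsFlowPath

variable {Z : E → E} {γ : E → C(I, E)} {k : NNReal}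

lemma eq_of_hasDerivWithinAt (h : IsFlowPath Z γ) (hL : LipschitzWith k Z) {c : ℝ → E} {b : ℝ}
    (hb : b ≤ 1) {z : E} (hc0 : c 0 = z) (hc : ContinuousOn c (Set.Icc 0 b))
    (hc' : ∀ t ∈ Set.Ico (0 : ℝ) b, HasDerivWithinAt c (Z (c t)) (Set.Ici t) t)
    {t : ℝ} (ht : t ∈ Set.Icc (0 : ℝ) b) : pathExtend (γ z) t = c t := by
  refine ODE_solution_unique (v := fun _ => Z) (K := k) (a := 0) (b := b) (fun _ => hL)
    (continuous_pathExtend _).continuousOn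
    (fun t ht => h.deriv z t ⟨ht.1, ht.2.trans_le hb⟩) hc hc' ?_ ht
  rw [h.zero, hc0]

lemma hasDerivWithinAt_add (h : IsFlowPath Z γ) (z : E) {s t : ℝ} (hs : 0 ≤ s + t)
    (hst : s + t < 1) :
    HasDerivWithinAt (fun t => pathExtend (γ z) (s + t)) (Z (pathExtend (γ z) (s + t)))
      (Set.Ici t) t := by
  have hshift : HasDerivWithinAt (fun t : ℝ => s + t) 1 (Set.Ici t) t :=
    ((hasDerivAt_id t).const_add s).hasDerivWithinAt
  have hcomp := (h.deriv z (s + t) ⟨hs, hst⟩).scomp t hshift fun x hx => by simpa using hx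
  rwa [one_smul] at hcomp

lemma pathExtend_add (h : IsFlowPath Z γ) (hL : LipschitzWith k Z) {s t : ℝ} (hs : 0 ≤ s)
    (ht : 0 ≤ t) (hst : s + t ≤ 1) (z : E) :
    pathExtend (γ (pathExtend (γ z) s)) t = pathExtend (γ z) (s + t) := by
  refine h.eq_of_hasDerivWithinAt hL (c := fun t => pathExtend (γ z) (s + t)) (b := 1 - s)
    (by linarith) (by simp) ((continuous_pathExtend _).comp (by fun_prop)).continuousOn
    (fun τ hτ => ?_) ⟨ht, by linarith⟩
  exact h.hasDerivWithinAt_add z (by linarith [hτ.1]) (by linarith [hτ.2])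

lemma contDiff_time (h : IsFlowPath Z γ) (s : ℝ) : ContDiff ℝ ∞ fun z => pathExtend (γ z) s :=
  (ContinuousMap.evalCLM ℝ (Set.projIcc (0 : ℝ) 1 zero_le_one s) :
    C(I, E) →L[ℝ] E).contDiff.comp h.contDiff

lemma fderiv_apply_eq_of_hasDerivWithinAt {F : Type*} [NormedAddCommGroup F] [NormedSpace ℝ F]
    (h : IsFlowPath Z γ) {f : E → F} {z : E} (hf : DifferentiableAt ℝ f z) {f' : F}
    (hf' : HasDerivWithinAt (fun s => f (pathExtend (γ z) s)) f' (Set.Ici 0) 0) :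
    fderiv ℝ f z (Z z) = f' := by
  have hpath := h.deriv z 0 (by simp)
  rw [h.zero] at hpath
  have hfz : HasFDerivAt f (fderiv ℝ f z) (pathExtend (γ z) 0) := by
    rw [h.zero]
    exact hf.hasFDerivAt
  exact (uniqueDiffWithinAt_Ici (0 : ℝ)).eq_deriv _ (hfz.comp_hasDerivWithinAt 0 hpath) hf'

lemma fderiv_time_apply (h : IsFlowPath Z γ) (hL : LipschitzWith k Z) {t : ℝ} (ht : 0 ≤ t)
    (ht1 : t < 1) (z : E) :
    fderiv ℝ (fun z => pathExtend (γ z) t) z (Z z) = Z (pathExtend (γ z) t) := by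
  refine h.fderiv_apply_eq_of_hasDerivWithinAt ((h.contDiff_time t).differentiable (by simp) z) ?_
  have hshift := h.hasDerivWithinAt_add z (s := t) (t := 0) (by simpa) (by simpa)
  rw [add_zero] at hshift
  refine hshift.congr_of_eventuallyEq ?_ (by rw [h.zero, add_zero])
  filter_upwards [Icc_mem_nhdsGE (sub_pos.2 ht1)] with s hs
  rw [h.pathExtend_add hL hs.1 ht (by linarith [hs.2]), add_comm]

lemma fderiv_integral_apply (h : IsFlowPath Z γ) (hL : LipschitzWith k Z) {e : E → ℝ}
    (he : Continuous e) {t : ℝ} (ht : 0 ≤ t) (ht1 : t < 1) {z : E}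
    (hd : DifferentiableAt ℝ (fun z => ∫ s in (0 : ℝ)..t, e (pathExtend (γ z) s)) z) :
    fderiv ℝ (fun z => ∫ s in (0 : ℝ)..t, e (pathExtend (γ z) s)) z (Z z) =
      e (pathExtend (γ z) t) - e z := by
  refine h.fderiv_apply_eq_of_hasDerivWithinAt hd ?_
  have hcont : Continuous fun s => e (pathExtend (γ z) s) := he.comp (continuous_pathExtend _)
  have hshift : ∀ s ∈ Set.Icc 0 (1 - t),
      ∫ τ in (0 : ℝ)..t, e (pathExtend (γ (pathExtend (γ z) s)) τ) =
        (∫ τ in (0 : ℝ)..(s + t), e (pathExtend (γ z) τ)) -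
          ∫ τ in (0 : ℝ)..s, e (pathExtend (γ z) τ) := by
    intro s hs
    rw [intervalIntegral.integral_interval_sub_left (hcont.intervalIntegrable _ _)
      (hcont.intervalIntegrable _ _), ← add_zero s, add_assoc, zero_add,
      ← intervalIntegral.integral_comp_add_left (fun τ => e (pathExtend (γ z) τ)) s, add_zero]
    refine intervalIntegral.integral_congr fun τ hτ => ?_
    rw [Set.uIcc_of_le ht] at hτ
    rw [h.pathExtend_add hL hs.1 hτ.1 (by linarith [hs.2, hτ.2])]
  have hderiv : HasDerivWithinAt (fun s : ℝ => (∫ τ in (0 : ℝ)..(s + t), e (pathExtend (γ z) τ)) -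
      ∫ τ in (0 : ℝ)..s, e (pathExtend (γ z) τ)) (e (pathExtend (γ z) t) - e z) (Set.Ici 0) 0 := by
    have hlower := (hcont.integral_hasStrictDerivAt 0 0).hasDerivAt
    have hupper := (hcont.integral_hasStrictDerivAt 0 (0 + t)).hasDerivAt.comp_add_const 0 t
    rw [h.zero] at hlower
    rw [zero_add] at hupper
    exact (hupper.sub hlower).hasDerivWithinAt
  refine hderiv.congr_of_eventuallyEq ?_ (hshift 0 ⟨le_rfl, by linarith⟩)
  filter_upwards [Icc_mem_nhdsGE (sub_pos.2 ht1)] with s hs using hshift s hs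

end IsFlowPath

end Flow

section DerivativeBounds

variable {E F : Type*} [NormedAddCommGroup E] [NormedSpace ℝ E]
  [NormedAddCommGroup F] [NormedSpace ℝ F]

lemma exists_common_bound {ι α : Type*} (s : Finset ι) {u : ι → α → ℝ} {v : α → ℝ}
    (hv : ∀ z, 0 ≤ v z) (h : ∀ i ∈ s, ∃ C, ∀ z, u i z ≤ C * v z) :
    ∃ C, 1 ≤ C ∧ ∀ i ∈ s, ∀ z, u i z ≤ C * v z := by
  choose! C hC using h
  obtain ⟨M, hM⟩ := (s.image C).exists_le
  refine ⟨max 1 M, le_max_left 1 M, fun i hi z => (hC i hi z).trans ?_⟩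
  exact mul_le_mul_of_nonneg_right
    ((hM _ (Finset.mem_image_of_mem C hi)).trans (le_max_right 1 M)) (hv z)

lemma exists_bound_iteratedFDeriv {G : E → F} (hG : ContDiff ℝ ∞ G) (hc : HasCompactSupport G)
    (i : ℕ) : ∃ C, ∀ z, ‖iteratedFDeriv ℝ i G z‖ ≤ C :=
  (hc.iteratedFDeriv i).exists_bound_of_continuous
    (hG.continuous_iteratedFDeriv (by exact_mod_cast le_top))

lemma norm_iteratedFDeriv_sub_const (f : E → F) (c : F) {i : ℕ} (hi : 1 ≤ i) (x : E) :
    ‖iteratedFDeriv ℝ i (fun z => f z - c) x‖ = ‖iteratedFDeriv ℝ i f x‖ := by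
  obtain ⟨m, rfl⟩ := Nat.exists_eq_add_of_le' hi
  rw [← norm_iteratedFDeriv_fderiv, ← norm_iteratedFDeriv_fderiv]
  congr 2
  ext1 z
  exact fderiv_sub_const c

lemma exists_bound_iteratedFDeriv_clm (A : E →L[ℝ] F) {i : ℕ} (hi : 1 ≤ i) :
    ∃ C, ∀ z, ‖iteratedFDeriv ℝ i A z‖ ≤ C := by
  obtain ⟨m, rfl⟩ := Nat.exists_eq_add_of_le' hi
  refine ⟨‖iteratedFDeriv ℝ m (fun _ : E => A) 0‖, fun z => le_of_eq ?_⟩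
  have hA : fderiv ℝ A = fun _ => A := funext fun z => A.fderiv
  rw [← norm_iteratedFDeriv_fderiv, hA]
  rcases Nat.eq_zero_or_pos m with rfl | hm
  · simp
  · simp [iteratedFDeriv_const_of_ne hm.ne']

lemma norm_iteratedFDeriv_comp_le_pow {Φ : F → F} (hΦ : ContDiff ℝ ∞ Φ) {w : E → F}
    (hw : ContDiff ℝ ∞ w) {k : ℕ} {C D : ℝ} (hC1 : 1 ≤ C)
    (hC : ∀ i ∈ Finset.Icc 1 k, ∀ z, ‖iteratedFDeriv ℝ i Φ z‖ ≤ C)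
    (hD : ∀ i ∈ Finset.Icc 1 k, ∀ z, ‖iteratedFDeriv ℝ i w z‖ ≤ D ^ i) (hD0 : 0 ≤ D) :
    ∀ i ∈ Finset.Icc 1 k, ∀ z, ‖iteratedFDeriv ℝ i (Φ ∘ w) z‖ ≤ (k.factorial * C * D) ^ i := by
  intro i hi z
  obtain ⟨hi1, hik⟩ := Finset.mem_Icc.1 hi
  have hfactorial : (i.factorial : ℝ) * C ≤ (k.factorial * C) ^ i := by
    have hone : (1 : ℝ) ≤ k.factorial * C :=
      one_le_mul_of_one_le_of_one_le (by exact_mod_cast k.factorial_pos) hC1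
    calc (i.factorial : ℝ) * C ≤ k.factorial * C := by gcongr
      _ ≤ (k.factorial * C) ^ i := le_self_pow₀ hone (by omega)
  -- Subtracting the value at `z` leaves the derivatives of order `≥ 1` unchanged and makes the
  -- bound `C` valid at order `0` as well, as Faà di Bruno's estimate requires.
  have hcomp := norm_iteratedFDeriv_comp_le (g := fun y => Φ y - Φ (w z)) (f := w) (n := i)
    (N := ∞) (hΦ.sub contDiff_const) hw (by exact_mod_cast le_top) z (C := C) (D := D)
    (fun m hm => by
      rcases Nat.eq_zero_or_pos m with rfl | hm0
      · rw [norm_iteratedFDeriv_zero, sub_self, norm_zero]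
        linarith
      · rw [norm_iteratedFDeriv_sub_const _ _ hm0]
        exact hC m (Finset.mem_Icc.2 ⟨hm0, hm.trans hik⟩) _)
    (fun m hm hmi => hD m (Finset.mem_Icc.2 ⟨hm, hmi.trans hik⟩) z)
  calc ‖iteratedFDeriv ℝ i (Φ ∘ w) z‖
      = ‖iteratedFDeriv ℝ i (fun y => (Φ ∘ w) y - Φ (w z)) z‖ :=
        (norm_iteratedFDeriv_sub_const (Φ ∘ w) _ hi1 z).symm
    _ ≤ i.factorial * C * D ^ i := hcomp
    _ ≤ (k.factorial * C) ^ i * D ^ i := by gcongr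
    _ = (k.factorial * C * D) ^ i := (mul_pow _ _ _).symm

lemma contDiff_iterate {Φ : F → F} {n : WithTop ℕ∞} (hΦ : ContDiff ℝ n Φ) (j : ℕ) :
    ContDiff ℝ n Φ^[j] := by
  induction j with
  | zero => exact contDiff_id
  | succ j ih =>
    rw [Function.iterate_succ']
    exact hΦ.comp ih

lemma norm_iteratedFDeriv_iterate_comp_le {Φ : F → F} (hΦ : ContDiff ℝ ∞ Φ) {w : E → F}
    (hw : ContDiff ℝ ∞ w) {k : ℕ} {C D : ℝ} (hC1 : 1 ≤ C)
    (hC : ∀ i ∈ Finset.Icc 1 k, ∀ z, ‖iteratedFDeriv ℝ i Φ z‖ ≤ C)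
    (hD : ∀ i ∈ Finset.Icc 1 k, ∀ z, ‖iteratedFDeriv ℝ i w z‖ ≤ D ^ i) (hD0 : 0 ≤ D) (j : ℕ) :
    ∀ i ∈ Finset.Icc 1 k, ∀ z,
      ‖iteratedFDeriv ℝ i (Φ^[j] ∘ w) z‖ ≤ ((k.factorial * C) ^ j * D) ^ i := by
  induction j with
  | zero => simpa using hD
  | succ j ih =>
    have hstep := norm_iteratedFDeriv_comp_le_pow hΦ ((contDiff_iterate hΦ j).comp hw) hC1 hC ih
      (by positivity)
    simpa only [Function.iterate_succ', Function.comp_assoc, pow_succ', mul_assoc] using hstep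

lemma exists_norm_iteratedFDeriv_pow_le (l : E →L[ℝ] ℝ) (N i : ℕ) :
    ∃ C, ∀ z, ‖iteratedFDeriv ℝ i (fun z => l z ^ (N + i)) z‖ ≤ C * |l z| ^ N := by
  induction i with
  | zero => exact ⟨1, fun z => by simp [norm_iteratedFDeriv_zero]⟩
  | succ i ih =>
    obtain ⟨C, hC⟩ := ih
    let A : ℝ →L[ℝ] E →L[ℝ] ℝ := ContinuousLinearMap.toSpanSingleton ℝ (((N + i + 1 : ℕ) : ℝ) • l)
    have hderiv : fderiv ℝ (fun z => l z ^ (N + i + 1)) = A ∘ fun z => l z ^ (N + i) := by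
      ext1 z
      refine ((l.hasFDerivAt (x := z)).pow (N + i + 1)).fderiv.trans ?_
      ext v
      simp [A]
      ring
    refine ⟨‖A‖ * C, fun z => ?_⟩
    rw [← norm_iteratedFDeriv_fderiv, ← add_assoc, hderiv]
    calc ‖iteratedFDeriv ℝ i (A ∘ fun z => l z ^ (N + i)) z‖
        ≤ ‖A‖ * ‖iteratedFDeriv ℝ i (fun z => l z ^ (N + i)) z‖ :=
          A.norm_iteratedFDeriv_comp_left (N := ∞) (l.contDiff.pow _).contDiffAt
            (by exact_mod_cast le_top)
      _ ≤ ‖A‖ * (C * |l z| ^ N) := by gcongr; exact hC z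
      _ = ‖A‖ * C * |l z| ^ N := by ring

lemma exists_norm_iteratedFDeriv_pow_mul_le (l : E →L[ℝ] ℝ) (N i : ℕ) {G : E → ℝ}
    (hG : ContDiff ℝ ∞ G) (hc : HasCompactSupport G) :
    ∃ C, ∀ z, ‖iteratedFDeriv ℝ i (fun z => l z ^ (N + i) * G z) z‖ ≤ C * |l z| ^ N := by
  have hcont (m : ℕ) : Continuous (iteratedFDeriv ℝ m G) :=
    hG.continuous_iteratedFDeriv (by exact_mod_cast le_top)
  have hterm : ∀ j ∈ Finset.range (i + 1), ∃ C, ∀ z,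
      (i.choose j : ℝ) * ‖iteratedFDeriv ℝ j (fun z => l z ^ (N + i)) z‖ *
        ‖iteratedFDeriv ℝ (i - j) G z‖ ≤ C * |l z| ^ N := by
    intro j hj
    obtain ⟨C, hC⟩ := exists_norm_iteratedFDeriv_pow_le l (N + (i - j)) j
    obtain ⟨B, hB⟩ := ((hc.iteratedFDeriv (𝕜 := ℝ) (i - j)).smul_left
      (f := fun z => l z ^ (i - j))).exists_bound_of_continuous
        ((l.continuous.pow _).smul (hcont (i - j)))
    refine ⟨i.choose j * |C| * B, fun z => ?_⟩
    rw [show N + i = N + (i - j) + j by have := Finset.mem_range.1 hj; omega]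
    calc (i.choose j : ℝ) * ‖iteratedFDeriv ℝ j (fun z => l z ^ (N + (i - j) + j)) z‖ *
          ‖iteratedFDeriv ℝ (i - j) G z‖
        ≤ i.choose j * (|C| * |l z| ^ (N + (i - j))) * ‖iteratedFDeriv ℝ (i - j) G z‖ := by
          gcongr
          exact (hC z).trans (by gcongr; exact le_abs_self C)
      _ = i.choose j * |C| * ‖l z ^ (i - j) • iteratedFDeriv ℝ (i - j) G z‖ * |l z| ^ N := by
          rw [norm_smul, norm_pow, Real.norm_eq_abs]
          ring
      _ ≤ i.choose j * |C| * B * |l z| ^ N := by gcongr; exact hB z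
  choose! C hC using hterm
  refine ⟨∑ j ∈ Finset.range (i + 1), C j, fun z => ?_⟩
  rw [Finset.sum_mul]
  exact (norm_iteratedFDeriv_mul_le (n := i) (N := ∞) (l.contDiff.pow _) hG z
    (by exact_mod_cast le_top)).trans (Finset.sum_le_sum fun j hj => hC j hj z)

end DerivativeBounds

section FlatFunctions

/-- A compactly supported smooth function is flat along the hyperplane `l = 0` if it is divisible
by every power of `l`; equivalently, all its derivatives vanish on that hyperplane. -/
def IsFlatAlong {E : Type*} [NormedAddCommGroup E] [NormedSpace ℝ E] (l : E →L[ℝ] ℝ)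
    (e : E → ℝ) : Prop :=
  ∀ N : ℕ, ∃ H : E → ℝ, ContDiff ℝ ∞ H ∧ HasCompactSupport H ∧ ∀ z, e z = l z ^ N * H z

variable {E : Type*} [NormedAddCommGroup E] [NormedSpace ℝ E] {l : E →L[ℝ] ℝ} {e : E → ℝ}

lemma IsFlatAlong.contDiff (he : IsFlatAlong l e) : ContDiff ℝ ∞ e := by
  obtain ⟨H, hH, -, heH⟩ := he 0
  rwa [show e = H by ext z; simpa using heH z]

lemma IsFlatAlong.exists_abs_le (he : IsFlatAlong l e) : ∃ K, 0 ≤ K ∧ ∀ z, |e z| ≤ K * |l z| := by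
  obtain ⟨H, hH, hc, heH⟩ := he 1
  obtain ⟨K, hK⟩ := hc.exists_bound_of_continuous hH.continuous
  refine ⟨K, (norm_nonneg _).trans (hK 0), fun z => ?_⟩
  rw [heH, pow_one, abs_mul, mul_comm]
  gcongr
  exact hK z

lemma IsFlatAlong.exists_norm_iteratedFDeriv_le (he : IsFlatAlong l e) (k M : ℕ) :
    ∃ C, 1 ≤ C ∧ ∀ i ∈ Finset.range (k + 1), ∀ z,
      ‖iteratedFDeriv ℝ i e z‖ ≤ C * |l z| ^ M := by
  refine exists_common_bound _ (fun z => by positivity) fun i _ => ?_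
  obtain ⟨H, hH, hc, heH⟩ := he (M + i)
  rw [show e = fun z => l z ^ (M + i) * H z from funext heH]
  exact exists_norm_iteratedFDeriv_pow_mul_le l M i hH hc

lemma isFlatAlong_of_hasCompactSupport [FiniteDimensional ℝ E] (hc : HasCompactSupport e)
    (h : ∀ N : ℕ, ∃ H : E → ℝ, ContDiff ℝ ∞ H ∧ ∀ z, e z = l z ^ N * H z) : IsFlatAlong l e := by
  intro N
  obtain ⟨H, hH, heH⟩ := h N
  obtain ⟨χ, hχ⟩ : ∃ χ : ContDiffBump (0 : E), ∀ z, e z ≠ 0 → χ z = 1 := by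
    obtain ⟨R, hR⟩ := hc.isCompact.isBounded.subset_closedBall 0
    refine ⟨⟨max R 1, max R 1 + 1, by positivity, by simp⟩, fun z hz => ?_⟩
    refine ContDiffBump.one_of_mem_closedBall _ ?_
    exact Metric.closedBall_subset_closedBall (le_max_left R 1)
      (hR (subset_tsupport _ hz))
  refine ⟨fun z => χ z * H z, χ.contDiff.mul hH, χ.hasCompactSupport.mul_right, fun z => ?_⟩
  by_cases hz : e z = 0
  · have : l z ^ N * H z = 0 := (heH z).symm.trans hz
    rw [hz, mul_left_comm, this, mul_zero]
  · simp only [hχ z hz, one_mul, heH]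

end FlatFunctions

section ContractedIteration

variable {E : Type*} [NormedAddCommGroup E] [NormedSpace ℝ E] {l : E →L[ℝ] ℝ} {Φ : E → E} {q : ℝ}

lemma abs_iterate_le_pow_mul (hq0 : 0 ≤ q) (hl : ∀ z, |l (Φ z)| ≤ q * |l z|) (j : ℕ) (z : E) :
    |l (Φ^[j] z)| ≤ q ^ j * |l z| := by
  induction j with
  | zero => simp
  | succ j ih =>
    rw [Function.iterate_succ_apply']
    calc |l (Φ (Φ^[j] z))| ≤ q * |l (Φ^[j] z)| := hl _
      _ ≤ q * (q ^ j * |l z|) := by gcongr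
      _ = q ^ (j + 1) * |l z| := by ring

lemma fderiv_iterate_apply_eq {Z : E → E} (hΦ : ContDiff ℝ ∞ Φ)
    (hZ : ∀ z, fderiv ℝ Φ z (Z z) = Z (Φ z)) (j : ℕ) (z : E) :
    fderiv ℝ Φ^[j] z (Z z) = Z (Φ^[j] z) := by
  induction j with
  | zero => simp
  | succ j ih =>
    rw [Function.iterate_succ', fderiv_comp _ (hΦ.differentiable (by simp) _)
      ((contDiff_iterate hΦ j).differentiable (by simp) _), ContinuousLinearMap.comp_apply, ih, hZ]
    rfl

/- The derivatives of `Φ^[j]` of order at most `k` grow at most like `L ^ (k * j)` for some `L`;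
flatness supplies a factor `q ^ (M * j)` with `M` as large as needed to compensate. -/
lemma IsFlatAlong.exists_norm_iteratedFDeriv_iterate_comp_le {g : E → ℝ} (hg : IsFlatAlong l g)
    (hΦ : ContDiff ℝ ∞ Φ) (hb : ∀ i, 1 ≤ i → ∃ C, ∀ z, ‖iteratedFDeriv ℝ i Φ z‖ ≤ C)
    (hq0 : 0 ≤ q) (hq : q < 1) (hl : ∀ z, |l (Φ z)| ≤ q * |l z|) {w : E → E}
    (hw : ContDiff ℝ ∞ w) (hwc : HasCompactSupport w) (k : ℕ) :
    ∃ A : ℝ, ∀ j z, ‖iteratedFDeriv ℝ k (g ∘ (Φ^[j] ∘ w)) z‖ ≤ A * (1 / 2) ^ j := by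
  obtain ⟨C, hC1, hC⟩ := exists_common_bound (Finset.Icc 1 k) (v := fun _ : E => 1)
    (fun _ => zero_le_one) fun i hi => by simpa using hb i (Finset.mem_Icc.1 hi).1
  obtain ⟨D, hD1, hD⟩ := exists_common_bound (Finset.Icc 1 k) (v := fun _ : E => 1)
    (fun _ => zero_le_one) fun i _ => by simpa using exists_bound_iteratedFDeriv hw hwc i
  simp only [mul_one] at hC hD
  obtain ⟨B, hB⟩ := (hwc.comp_left (map_zero l)).exists_bound_of_continuous
    (l.continuous.comp hw.continuous)
  have hB0 : 0 ≤ B := (norm_nonneg _).trans (hB 0)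
  set L : ℝ := k.factorial * C
  have : 0 < L := by positivity
  obtain ⟨M, hM⟩ : ∃ M : ℕ, q ^ M * L ^ k ≤ 1 / 2 := by
    have hlim := (tendsto_pow_atTop_nhds_zero_of_lt_one hq0 hq).mul_const (L ^ k)
    rw [zero_mul] at hlim
    exact (hlim.eventually_le_const (by norm_num)).exists
  obtain ⟨Cg, hCg1, hCg⟩ := hg.exists_norm_iteratedFDeriv_le k M
  refine ⟨k.factorial * (Cg * B ^ M) * D ^ k, fun j z => ?_⟩
  have hlz : |l ((Φ^[j] ∘ w) z)| ≤ q ^ j * B :=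
    (abs_iterate_le_pow_mul hq0 hl j (w z)).trans (by gcongr; exact hB z)
  have hiterate := norm_iteratedFDeriv_iterate_comp_le hΦ hw hC1 hC
    (fun i hi z => (hD i hi z).trans (le_self_pow₀ hD1 (by have := Finset.mem_Icc.1 hi; omega)))
    (zero_le_one.trans hD1) j
  calc ‖iteratedFDeriv ℝ k (g ∘ (Φ^[j] ∘ w)) z‖
      ≤ k.factorial * (Cg * (q ^ j * B) ^ M) * (L ^ j * D) ^ k :=
        norm_iteratedFDeriv_comp_le (N := ∞) hg.contDiff ((contDiff_iterate hΦ j).comp hw)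
          (by exact_mod_cast le_top) z
          (fun i hi => (hCg i (Finset.mem_range_succ_iff.2 hi) _).trans (by gcongr))
          (fun i hi hik => hiterate i (Finset.mem_Icc.2 ⟨hi, hik⟩) z)
    _ = k.factorial * (Cg * B ^ M) * D ^ k * (q ^ M * L ^ k) ^ j := by
        simp only [mul_pow, ← pow_mul, mul_comm j]
        ring
    _ ≤ k.factorial * (Cg * B ^ M) * D ^ k * (1 / 2) ^ j := by gcongr

lemma contDiff_tsum_of_norm_iteratedFDeriv_le_geometric {u : ℕ → E → ℝ}
    (hu : ∀ j, ContDiff ℝ ∞ (u j))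
    (hA : ∀ k, ∃ A : ℝ, ∀ j z, ‖iteratedFDeriv ℝ k (u j) z‖ ≤ A * (1 / 2) ^ j) :
    ContDiff ℝ ∞ fun z => ∑' j, u j z := by
  choose A hA using hA
  exact contDiff_tsum (N := ⊤) (v := fun k j => A k * (1 / 2) ^ j) hu
    (fun k _ => summable_geometric_two.mul_left _) (fun k j z _ => hA k j z)

lemma hasSum_fderiv_apply_of_norm_iteratedFDeriv_le_geometric {u : ℕ → E → ℝ}
    (hu : ∀ j, ContDiff ℝ ∞ (u j))
    (hA : ∀ k, ∃ A : ℝ, ∀ j z, ‖iteratedFDeriv ℝ k (u j) z‖ ≤ A * (1 / 2) ^ j) (z v : E) :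
    HasSum (fun j => fderiv ℝ (u j) z v) (fderiv ℝ (fun z => ∑' j, u j z) z v) := by
  obtain ⟨A₀, hA₀⟩ := hA 0
  obtain ⟨A₁, hA₁⟩ := hA 1
  simp only [norm_iteratedFDeriv_zero] at hA₀
  simp only [norm_iteratedFDeriv_one] at hA₁
  have hderiv := hasFDerivAt_tsum (summable_geometric_two.mul_left A₁)
    (fun j x => ((hu j).differentiable (by simp) x).hasFDerivAt) hA₁
    (Summable.of_norm_bounded (summable_geometric_two.mul_left A₀) fun j => hA₀ j z) z
  have hsummable : Summable fun j => fderiv ℝ (u j) z :=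
    Summable.of_norm_bounded (summable_geometric_two.mul_left A₁) fun j => hA₁ j z
  rw [hderiv.fderiv]
  exact (ContinuousLinearMap.apply ℝ ℝ v).hasSum hsummable.hasSum

lemma exists_hasCompactSupport_eventuallyEq_id [FiniteDimensional ℝ E] :
    ∃ w : E → E, ContDiff ℝ ∞ w ∧ HasCompactSupport w ∧ w =ᶠ[𝓝 0] id := by
  let χ : ContDiffBump (0 : E) := ⟨1, 2, one_pos, one_lt_two⟩
  refine ⟨fun z => χ z • z, χ.contDiff.smul contDiff_id, χ.hasCompactSupport.smul_right, ?_⟩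
  filter_upwards [χ.eventuallyEq_one] with z hz
  rw [hz, Pi.one_apply, one_smul, id]

/- If `g` is the increment of the solution along `Φ`, the solution is `-∑ g ∘ Φ^[j]`, since
`Φ^[j]` tends to the hyperplane `l = 0`; the cutoff `w` makes the sum converge globally. -/
lemma exists_contDiff_fderiv_apply_eq_of_contracting [FiniteDimensional ℝ E]
    (hΦ : ContDiff ℝ ∞ Φ) (hb : ∀ i, 1 ≤ i → ∃ C, ∀ z, ‖iteratedFDeriv ℝ i Φ z‖ ≤ C)
    (hq0 : 0 ≤ q) (hq : q < 1) (hl : ∀ z, |l (Φ z)| ≤ q * |l z|) {g e : E → ℝ}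
    (hg : IsFlatAlong l g) {Z : E → E} (hZ : ∀ z, fderiv ℝ Φ z (Z z) = Z (Φ z))
    (hgZ : ∀ z, fderiv ℝ g z (Z z) = e (Φ z) - e z) {K : ℝ} (hK : 0 ≤ K)
    (he : ∀ z, |e z| ≤ K * |l z|) :
    ∃ f : E → ℝ, ContDiff ℝ ∞ f ∧ ∀ᶠ z in 𝓝 (0 : E), fderiv ℝ f z (Z z) = e z := by
  obtain ⟨w, hw, hwc, hwid⟩ := exists_hasCompactSupport_eventuallyEq_id (E := E)
  have hu : ∀ j, ContDiff ℝ ∞ (g ∘ (Φ^[j] ∘ w)) := fun j =>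
    hg.contDiff.comp ((contDiff_iterate hΦ j).comp hw)
  have hA := hg.exists_norm_iteratedFDeriv_iterate_comp_le hΦ hb hq0 hq hl hw hwc
  refine ⟨fun z => -∑' j, (g ∘ (Φ^[j] ∘ w)) z,
    (contDiff_tsum_of_norm_iteratedFDeriv_le_geometric hu hA).neg, ?_⟩
  filter_upwards [hwid.eventually_nhds] with z hz
  have hterm : ∀ j, fderiv ℝ (g ∘ (Φ^[j] ∘ w)) z (Z z) = e (Φ^[j + 1] z) - e (Φ^[j] z) := by
    intro j
    have hcut : g ∘ (Φ^[j] ∘ w) =ᶠ[𝓝 z] g ∘ Φ^[j] :=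
      hz.mono fun y hy => by simp only [Function.comp_apply, hy, id]
    rw [hcut.fderiv_eq, fderiv_comp _ (hg.contDiff.differentiable (by simp) _)
      ((contDiff_iterate hΦ j).differentiable (by simp) _), ContinuousLinearMap.comp_apply,
      fderiv_iterate_apply_eq hΦ hZ, hgZ, Function.iterate_succ_apply']
  have htelescope :=
    (hasSum_fderiv_apply_of_norm_iteratedFDeriv_le_geometric hu hA z (Z z)).tendsto_sum_nat
  simp only [hterm, Finset.sum_range_sub fun j => e (Φ^[j] z)] at htelescope
  have hlim : Tendsto (fun j => e (Φ^[j] z)) atTop (𝓝 0) := by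
    have hgeometric : Tendsto (fun j : ℕ => K * (q ^ j * |l z|)) atTop (𝓝 0) := by
      simpa using ((tendsto_pow_atTop_nhds_zero_of_lt_one hq0 hq).mul_const |l z|).const_mul K
    refine squeeze_zero_norm (fun j => (he _).trans ?_) hgeometric
    gcongr
    exact abs_iterate_le_pow_mul hq0 hl j z
  rw [fderiv_fun_neg, neg_apply, tendsto_nhds_unique htelescope (hlim.sub_const _)]
  simp

end ContractedIteration

section FlatEquation

variable {E : Type*} [NormedAddCommGroup E] [NormedSpace ℝ E]
  {Z : E → E} {γ : E → C(I, E)} {k : NNReal} {l : E →L[ℝ] ℝ} {e κ : E → ℝ} {L : E →L[ℝ] E}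
  {K : Set E}

lemma exists_lipschitzWith_of_hasCompactSupport_sub (hZ : ContDiff ℝ ∞ Z)
    (hc : HasCompactSupport fun z => Z z - L z) : ∃ k, LipschitzWith k Z := by
  obtain ⟨C, hC⟩ := (hZ.sub L.contDiff).lipschitzWith_of_hasCompactSupport hc (by simp)
  exact ⟨‖L‖₊ + C, by simpa using L.lipschitz.add hC⟩

lemma IsFlowPath.apply_pathExtend_eq_mul_exp (h : IsFlowPath Z γ) (hκ : Continuous κ)
    (hlZ : ∀ z, l (Z z) = -(κ z * l z)) (z : E) {s : ℝ} (hs : s ∈ Set.Icc (0 : ℝ) 1) :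
    l (pathExtend (γ z) s) = l z * Real.exp (-∫ τ in (0 : ℝ)..s, κ (pathExtend (γ z) τ)) := by
  have hcont : Continuous fun τ => κ (pathExtend (γ z) τ) := hκ.comp (continuous_pathExtend _)
  have hint (t : ℝ) : HasDerivAt (fun s => ∫ τ in (0 : ℝ)..s, κ (pathExtend (γ z) τ))
      (κ (pathExtend (γ z) t)) t := (hcont.integral_hasStrictDerivAt 0 t).hasDerivAt
  have hconst := constant_of_has_deriv_right_zero (a := 0) (b := 1)
    (f := fun s => l (pathExtend (γ z) s) *
      Real.exp (∫ τ in (0 : ℝ)..s, κ (pathExtend (γ z) τ)))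
    ((l.continuous.comp (continuous_pathExtend _)).mul (Real.continuous_exp.comp
      (continuous_iff_continuousAt.2 fun t => (hint t).continuousAt))).continuousOn
    (fun t ht => by
      have hl := l.hasFDerivAt.comp_hasDerivWithinAt t (h.deriv z t ht)
      refine (hl.mul (hint t).exp.hasDerivWithinAt).congr_deriv ?_
      simp only [Function.comp_apply, hlZ]
      ring) s hs
  simp only [h.zero, intervalIntegral.integral_same, Real.exp_zero, mul_one] at hconst
  rw [← hconst, mul_assoc, ← Real.exp_add, add_neg_cancel, Real.exp_zero, mul_one]

lemma IsFlowPath.abs_apply_pathExtend_le (h : IsFlowPath Z γ) (hκ : Continuous κ)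
    (hlZ : ∀ z, l (Z z) = -(κ z * l z)) {c : ℝ} (hcκ : ∀ z, c ≤ κ z) (z : E) {s : ℝ}
    (hs : s ∈ Set.Icc (0 : ℝ) 1) : |l (pathExtend (γ z) s)| ≤ Real.exp (-(s * c)) * |l z| := by
  rw [h.apply_pathExtend_eq_mul_exp hκ hlZ z hs, abs_mul, Real.abs_exp, mul_comm]
  gcongr
  have hmono := intervalIntegral.integral_mono_on hs.1 (μ := MeasureTheory.volume)
    (f := fun _ => c) intervalIntegrable_const
    ((hκ.comp (continuous_pathExtend (γ z))).intervalIntegrable 0 s) fun τ _ => hcκ _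
  simpa using hmono

lemma IsFlowPath.exists_contDiff_integral_eq_pow_mul (h : IsFlowPath Z γ) (hκ : ContDiff ℝ ∞ κ)
    (hlZ : ∀ z, l (Z z) = -(κ z * l z)) {N : ℕ} {H : E → ℝ} (hH : ContDiff ℝ ∞ H)
    (heH : ∀ z, e z = l z ^ N * H z) {t : ℝ} (ht : t ∈ Set.Icc (0 : ℝ) 1) :
    ∃ G : E → ℝ, ContDiff ℝ ∞ G ∧
      ∀ z, ∫ s in (0 : ℝ)..t, e (pathExtend (γ z) s) = l z ^ N * G z := by
  have hexp : ContDiff ℝ ∞ fun y : ℝ => Real.exp (-y) ^ N := contDiff_id.neg.exp.pow N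
  let κpath (z : E) : C(I, ℝ) := volterraCLM ℝ ((⟨κ, hκ.continuous⟩ : C(E, ℝ)).comp (γ z))
  have hκpath : ContDiff ℝ ∞ κpath :=
    (volterraCLM ℝ).contDiff.comp ((contDiff_infty_continuousMap_comp _ hκ).comp h.contDiff)
  let m (z : E) : C(I, ℝ) := (⟨_, hexp.continuous⟩ : C(ℝ, ℝ)).comp (κpath z) *
    (⟨H, hH.continuous⟩ : C(E, ℝ)).comp (γ z)
  have hm : ContDiff ℝ ∞ m := ((contDiff_infty_continuousMap_comp _ hexp).comp hκpath).mul
    ((contDiff_infty_continuousMap_comp _ hH).comp h.contDiff)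
  refine ⟨fun z => volterraCLM ℝ (m z) ⟨t, ht⟩,
    ((ContinuousMap.evalCLM ℝ (⟨t, ht⟩ : I) : C(I, ℝ) →L[ℝ] ℝ).comp
      (volterraCLM ℝ)).contDiff.comp hm, fun z => ?_⟩
  dsimp only
  rw [volterraCLM_apply, ← intervalIntegral.integral_const_mul]
  refine intervalIntegral.integral_congr fun s hs => ?_
  have hs' : s ∈ Set.Icc (0 : ℝ) 1 := by
    rw [Set.uIcc_of_le ht.1] at hs
    exact ⟨hs.1, hs.2.trans ht.2⟩
  simp only [heH, h.apply_pathExtend_eq_mul_exp hκ.continuous hlZ z hs', mul_pow,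
    mul_assoc]
  simp only [pathExtend, Set.IccExtend_of_mem zero_le_one _ hs', m, κpath,
    ContinuousMap.mul_apply, ContinuousMap.comp_apply, ContinuousMap.coe_mk, volterraCLM_apply]
  rfl

section Complete

variable [CompleteSpace E]

lemma exp_neg_smul_apply_exp_smul (L : E →L[ℝ] E) (s : ℝ) (z : E) :
    NormedSpace.exp (-s • L) (NormedSpace.exp (s • L) z) = z := by
  let _ := NormedAlgebra.restrictScalars ℚ ℝ (E →L[ℝ] E)
  rw [← mul_apply_eq_comp, ← NormedSpace.exp_add_of_commute
    (((Commute.refl L).smul_left _).smul_right _), ← add_smul, neg_add_cancel, zero_smul,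
    NormedSpace.exp_zero, one_apply_eq_self]

lemma hasDerivAt_exp_smul_apply (L : E →L[ℝ] E) (s : ℝ) (z : E) :
    HasDerivAt (fun s : ℝ => NormedSpace.exp (s • L) z) (L (NormedSpace.exp (s • L) z)) s :=
  (ContinuousLinearMap.apply ℝ E z).hasFDerivAt.comp_hasDerivAt s
    (hasDerivAt_exp_smul_const' L s)

lemma IsFlowPath.exists_isCompact_forall_eq_exp (h : IsFlowPath Z γ) (hL : LipschitzWith k Z)
    (hK : IsCompact K) (hZL : ∀ z ∉ K, Z z = L z) :
    ∃ K', IsCompact K' ∧ ∀ z ∉ K', ∀ s ∈ Set.Icc (0 : ℝ) 1,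
      pathExtend (γ z) s = NormedSpace.exp (s • L) z ∧ pathExtend (γ z) s ∉ K := by
  have hcurve (z : E) : Continuous fun s : ℝ => NormedSpace.exp (s • L) z :=
    continuous_iff_continuousAt.2 fun s => (hasDerivAt_exp_smul_apply L s z).continuousAt
  have hexp : Continuous fun s : ℝ => NormedSpace.exp (s • L) :=
    continuous_iff_continuousAt.2 fun s => (hasDerivAt_exp_smul_const L s).continuousAt
  refine ⟨(fun x : ℝ × E => NormedSpace.exp (-x.1 • L) x.2) '' (Set.Icc 0 1 ×ˢ K),
    (isCompact_Icc.prod hK).image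
      ((hexp.comp continuous_fst.neg).clm_apply continuous_snd), fun z hz => ?_⟩
  have houtside : ∀ s ∈ Set.Icc (0 : ℝ) 1, NormedSpace.exp (s • L) z ∉ K := fun s hs hmem =>
    hz ⟨(s, _), ⟨hs, hmem⟩, exp_neg_smul_apply_exp_smul L s z⟩
  have heq : ∀ s ∈ Set.Icc (0 : ℝ) 1, pathExtend (γ z) s = NormedSpace.exp (s • L) z := by
    refine fun s hs => h.eq_of_hasDerivWithinAt hL (c := fun s => NormedSpace.exp (s • L) z) le_rfl
      (by simp) (hcurve z).continuousOn (fun t ht => ?_) hs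
    rw [hZL _ (houtside t ⟨ht.1, ht.2.le⟩)]
    exact (hasDerivAt_exp_smul_apply L t z).hasDerivWithinAt
  exact fun s hs => ⟨heq s hs, heq s hs ▸ houtside s hs⟩

lemma IsFlowPath.exists_bound_iteratedFDeriv_time (h : IsFlowPath Z γ) (hL : LipschitzWith k Z)
    (hc : HasCompactSupport fun z => Z z - L z) {s : ℝ} (hs : s ∈ Set.Icc (0 : ℝ) 1) {i : ℕ}
    (hi : 1 ≤ i) : ∃ C, ∀ z, ‖iteratedFDeriv ℝ i (fun z => pathExtend (γ z) s) z‖ ≤ C := by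
  obtain ⟨K', hK', hfar⟩ := h.exists_isCompact_forall_eq_exp (L := L) hL hc.isCompact
    fun z hz => sub_eq_zero.1 (image_eq_zero_of_notMem_tsupport (f := fun z => Z z - L z) hz)
  set A : E →L[ℝ] E := NormedSpace.exp (s • L)
  have hdiff : ContDiff ℝ ∞ fun z => pathExtend (γ z) s - A z :=
    (h.contDiff_time s).sub A.contDiff
  obtain ⟨C, hC⟩ := exists_bound_iteratedFDeriv hdiff
    (HasCompactSupport.intro hK' fun z hz => by rw [(hfar z hz s hs).1, sub_self]) i
  obtain ⟨C', hC'⟩ := exists_bound_iteratedFDeriv_clm A hi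
  refine ⟨C + C', fun z => ?_⟩
  have hsum : (fun z => pathExtend (γ z) s) = (fun z => pathExtend (γ z) s - A z) + A := by
    ext z
    simp
  rw [hsum, iteratedFDeriv_add (hdiff.of_le (by exact_mod_cast le_top)) A.contDiff]
  exact norm_add_le_of_le (hC z) (hC' z)

end Complete

variable [FiniteDimensional ℝ E]

lemma IsFlowPath.isFlatAlong_integral (h : IsFlowPath Z γ) (hL : LipschitzWith k Z)
    (hc : HasCompactSupport fun z => Z z - L z) (hκ : ContDiff ℝ ∞ κ)
    (hlZ : ∀ z, l (Z z) = -(κ z * l z)) (he : IsFlatAlong l e) (hec : HasCompactSupport e)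
    {t : ℝ} (ht : t ∈ Set.Icc (0 : ℝ) 1) :
    IsFlatAlong l fun z => ∫ s in (0 : ℝ)..t, e (pathExtend (γ z) s) := by
  have hmem : ∀ s ∈ Set.uIcc 0 t, s ∈ Set.Icc (0 : ℝ) 1 := fun s hs => by
    rw [Set.uIcc_of_le ht.1] at hs
    exact ⟨hs.1, hs.2.trans ht.2⟩
  have := FiniteDimensional.complete ℝ E
  refine isFlatAlong_of_hasCompactSupport ?_ fun N => ?_
  · obtain ⟨K', hK', hfar⟩ := h.exists_isCompact_forall_eq_exp (L := L) hL
      (hc.isCompact.union hec.isCompact) fun z hz => sub_eq_zero.1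
        (image_eq_zero_of_notMem_tsupport (f := fun z => Z z - L z) fun hmem => hz (Or.inl hmem))
    refine HasCompactSupport.intro hK' fun z hz => ?_
    rw [intervalIntegral.integral_congr (g := fun _ => 0) fun s hs =>
      image_eq_zero_of_notMem_tsupport fun hmem' => (hfar z hz s (hmem s hs)).2 (Or.inr hmem'),
      intervalIntegral.integral_zero]
  · obtain ⟨H, hH, -, heH⟩ := he N
    exact h.exists_contDiff_integral_eq_pow_mul hκ hlZ hH heH ht

lemma exists_contDiff_fderiv_apply_eq_of_isFlatAlong_of_lipschitzWith (hZ : ContDiff ℝ ∞ Z)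
    (hk : k < 1) (hL : LipschitzWith k Z) (hc : HasCompactSupport fun z => Z z - L z)
    (hκ : ContDiff ℝ ∞ κ) {c : ℝ} (hc0 : 0 < c) (hcκ : ∀ z, c ≤ κ z)
    (hlZ : ∀ z, l (Z z) = -(κ z * l z)) (he : IsFlatAlong l e) (hec : HasCompactSupport e) :
    ∃ f : E → ℝ, ContDiff ℝ ∞ f ∧ ∀ᶠ z in 𝓝 (0 : E), fderiv ℝ f z (Z z) = e z := by
  have := FiniteDimensional.complete ℝ E
  obtain ⟨γ, hγ⟩ := exists_isFlowPath hZ hk hL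
  have hhalf : (1 / 2 : ℝ) ∈ Set.Icc (0 : ℝ) 1 := by norm_num
  have hg := hγ.isFlatAlong_integral hL hc hκ hlZ he hec hhalf
  obtain ⟨K, hK, heK⟩ := he.exists_abs_le
  exact exists_contDiff_fderiv_apply_eq_of_contracting (hγ.contDiff_time (1 / 2))
    (fun i hi => hγ.exists_bound_iteratedFDeriv_time hL hc hhalf hi) (Real.exp_pos _).le
    (Real.exp_lt_one_iff.2 (by linarith))
    (fun z => hγ.abs_apply_pathExtend_le hκ.continuous hlZ hcκ z hhalf) hg
    (fun z => hγ.fderiv_time_apply hL hhalf.1 (by norm_num) z)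
    (fun z => hγ.fderiv_integral_apply hL he.contDiff.continuous hhalf.1 (by norm_num)
      (hg.contDiff.differentiable (by simp) z)) hK heK

lemma exists_contDiff_fderiv_apply_eq_of_isFlatAlong (hZ : ContDiff ℝ ∞ Z)
    (hc : HasCompactSupport fun z => Z z - L z) (hκ : ContDiff ℝ ∞ κ) {c : ℝ} (hc0 : 0 < c)
    (hcκ : ∀ z, c ≤ κ z) (hlZ : ∀ z, l (Z z) = -(κ z * l z)) (he : IsFlatAlong l e)
    (hec : HasCompactSupport e) :
    ∃ f : E → ℝ, ContDiff ℝ ∞ f ∧ ∀ᶠ z in 𝓝 (0 : E), fderiv ℝ f z (Z z) = e z := by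
  obtain ⟨k, hk⟩ := exists_lipschitzWith_of_hasCompactSupport_sub hZ hc
  obtain ⟨h, hh0, hhk⟩ : ∃ h : NNReal, 0 < h ∧ h * k < 1 :=
    ⟨(k + 1)⁻¹, by positivity, by
      rw [inv_mul_lt_one₀ (by positivity)]
      exact lt_add_one k⟩
  have hrescaled : LipschitzWith (h * k) fun z => (h : ℝ) • Z z := by
    refine LipschitzWith.of_dist_le_mul fun a b => ?_
    rw [dist_smul₀, Real.norm_eq_abs, NNReal.abs_eq, NNReal.coe_mul, mul_assoc]
    gcongr
    exact hk.dist_le_mul a b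
  have hcrescaled : HasCompactSupport fun z => (h : ℝ) • Z z - ((h : ℝ) • L) z := by
    simpa only [smul_apply, ← smul_sub, Function.comp_def] using
      hc.comp_left (g := fun y : E => (h : ℝ) • y) (smul_zero _)
  obtain ⟨f, hf, hfe⟩ := exists_contDiff_fderiv_apply_eq_of_isFlatAlong_of_lipschitzWith
    (Z := fun z => (h : ℝ) • Z z) (L := (h : ℝ) • L) (κ := fun z => h * κ z) (hZ.const_smul (h : ℝ))
    hhk hrescaled hcrescaled
    (contDiff_const.mul hκ) (c := h * c) (by positivity)
    (fun z => by gcongr; exact hcκ z)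
    (fun z => by rw [map_smul, hlZ, smul_eq_mul]; ring) he hec
  refine ⟨fun z => (h : ℝ) • f z, hf.const_smul (h : ℝ), ?_⟩
  filter_upwards [hfe] with z hz
  rw [fderiv_fun_const_smul (hf.differentiable (by simp) z), ← hz, map_smul]
  rfl

end FlatEquation

section Borel

variable {E : Type*} [NormedAddCommGroup E] [NormedSpace ℝ E]

lemma contDiff_pow_mul_bump_mul (χ : ContDiffBump (0 : ℝ)) (ε : ℝ) (i : ℕ) {f : E → ℝ}
    (hf : ContDiff ℝ ∞ f) : ContDiff ℝ ∞ fun y : ℝ × E => y.1 ^ i * χ (ε⁻¹ * y.1) * f y.2 :=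
  ((contDiff_fst.pow i).mul (χ.contDiff.comp (contDiff_const.mul contDiff_fst))).mul
    (hf.comp contDiff_snd)

lemma exists_norm_iteratedFDeriv_pow_mul_bump_mul_le (χ : ContDiffBump (0 : ℝ)) {f : E → ℝ}
    (hf : ContDiff ℝ ∞ f) (hc : HasCompactSupport f) (k : ℕ) :
    ∃ A, 0 ≤ A ∧ ∀ i ≤ k, ∀ j ≤ k, ∀ y : ℝ × E,
      ‖iteratedFDeriv ℝ j (fun y : ℝ × E => y.1 ^ i * χ y.1 * f y.2) y‖ ≤ A := by
  have hB (i : ℕ) : ContDiff ℝ ∞ fun y : ℝ × E => y.1 ^ i * χ y.1 * f y.2 := by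
    simpa using contDiff_pow_mul_bump_mul χ 1 i hf
  have hBc (i : ℕ) : HasCompactSupport fun y : ℝ × E => y.1 ^ i * χ y.1 * f y.2 := by
    refine HasCompactSupport.of_support_subset_isCompact
      (χ.hasCompactSupport.isCompact.prod hc.isCompact) fun y hy => ?_
    simp only [Function.mem_support, mul_ne_zero_iff] at hy
    exact ⟨subset_tsupport _ hy.1.2, subset_tsupport _ hy.2⟩
  obtain ⟨A, hA, h⟩ := exists_common_bound (Finset.range (k + 1) ×ˢ Finset.range (k + 1))
    (u := fun ij (y : ℝ × E) =>
      ‖iteratedFDeriv ℝ ij.2 (fun y : ℝ × E => y.1 ^ ij.1 * χ y.1 * f y.2) y‖)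
    (v := fun _ => 1) (fun _ => zero_le_one)
    (fun ij _ => (exists_bound_iteratedFDeriv (hB ij.1) (hBc ij.1) ij.2).imp fun C hC y => by
      simpa using hC y)
  refine ⟨A, zero_le_one.trans hA, fun i hi j hj y => ?_⟩
  simpa using h (i, j) (Finset.mem_product.2
    ⟨Finset.mem_range_succ_iff.2 hi, Finset.mem_range_succ_iff.2 hj⟩) y

/- Rescaling the first variable by `ε⁻¹` costs a factor `ε⁻¹ ^ j` in the `j`-th derivative, which
`y.1 ^ i = ε ^ i * (ε⁻¹ * y.1) ^ i` more than compensates for `j < i`. -/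
lemma norm_iteratedFDeriv_pow_mul_bump_mul_le (χ : ContDiffBump (0 : ℝ)) {f : E → ℝ}
    (hf : ContDiff ℝ ∞ f) {i j : ℕ} (hji : j < i) {A : ℝ} (hA0 : 0 ≤ A)
    (hA : ∀ y : ℝ × E, ‖iteratedFDeriv ℝ j (fun y : ℝ × E => y.1 ^ i * χ y.1 * f y.2) y‖ ≤ A)
    {ε : ℝ} (hε : 0 < ε) (hε1 : ε ≤ 1) (y : ℝ × E) :
    ‖iteratedFDeriv ℝ j (fun y : ℝ × E => y.1 ^ i * χ (ε⁻¹ * y.1) * f y.2) y‖ ≤ A * ε := by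
  let B (y : ℝ × E) : ℝ := y.1 ^ i * χ y.1 * f y.2
  have hB : ContDiff ℝ ∞ B := by simpa using contDiff_pow_mul_bump_mul χ 1 i hf
  let L : ℝ × E →L[ℝ] ℝ × E :=
    (ε⁻¹ • ContinuousLinearMap.fst ℝ ℝ E).prod (ContinuousLinearMap.snd ℝ ℝ E)
  have hL : ‖L‖ ≤ ε⁻¹ := by
    refine L.opNorm_le_bound (by positivity) fun y => max_le ?_ ?_
    · change ‖ε⁻¹ • y.1‖ ≤ _
      rw [norm_smul, Real.norm_eq_abs, abs_of_pos (by positivity)]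
      gcongr
      exact norm_fst_le y
    · exact (norm_snd_le y).trans
        (le_mul_of_one_le_left (norm_nonneg _) ((one_le_inv₀ hε).2 hε1))
  have hBL : (fun y : ℝ × E => y.1 ^ i * χ (ε⁻¹ * y.1) * f y.2) = ε ^ i • (B ∘ L) := by
    ext y
    have hpow : y.1 ^ i = ε ^ i * (ε⁻¹ * y.1) ^ i := by
      rw [← mul_pow, mul_inv_cancel_left₀ hε.ne']
    change y.1 ^ i * χ (ε⁻¹ * y.1) * f y.2 = ε ^ i * ((ε⁻¹ * y.1) ^ i * χ (ε⁻¹ * y.1) * f y.2)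
    rw [hpow]
    ring
  have hj : ((j : ℕ) : WithTop ℕ∞) ≤ ∞ := by exact_mod_cast le_top
  have hcomp := (iteratedFDeriv ℝ j B (L y)).norm_compContinuousLinearMap_le fun _ => L
  rw [Finset.prod_const, Finset.card_univ, Fintype.card_fin] at hcomp
  rw [hBL, iteratedFDeriv_const_smul_apply ((hB.comp L.contDiff).contDiffAt.of_le hj), norm_smul,
    L.iteratedFDeriv_comp_right hB y hj, norm_pow, Real.norm_eq_abs, abs_of_pos hε]
  calc ε ^ i * ‖(iteratedFDeriv ℝ j B (L y)).compContinuousLinearMap fun _ => L‖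
      ≤ ε ^ i * (A * ε⁻¹ ^ j) := by
        gcongr
        refine hcomp.trans ?_
        gcongr
        exact hA _
    _ = A * ε ^ (i - j) := by
        rw [← pow_sub_mul_pow ε hji.le, inv_pow]
        field_simp
    _ ≤ A * ε := by
        gcongr
        exact pow_le_of_le_one hε.le hε1 (by lia)

lemma exists_scale_norm_iteratedFDeriv_le (χ : ContDiffBump (0 : ℝ)) {f : E → ℝ}
    (hf : ContDiff ℝ ∞ f) (hc : HasCompactSupport f) (k : ℕ) {δ : ℝ} (hδ : 0 < δ) :
    ∃ ε : ℝ, 0 < ε ∧ ∀ i ≤ k, ∀ j < i, ∀ y : ℝ × E,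
      ‖iteratedFDeriv ℝ j (fun y : ℝ × E => y.1 ^ i * χ (ε⁻¹ * y.1) * f y.2) y‖ ≤ δ := by
  obtain ⟨A, hA0, hA⟩ := exists_norm_iteratedFDeriv_pow_mul_bump_mul_le χ hf hc k
  have hε : 0 < min 1 (δ / (A + 1)) := lt_min one_pos (by positivity)
  refine ⟨_, hε, fun i hi j hj y => (norm_iteratedFDeriv_pow_mul_bump_mul_le χ hf hj hA0
    (hA i hi j (hj.le.trans hi)) hε (min_le_left _ _) y).trans ?_⟩
  calc A * min 1 (δ / (A + 1)) ≤ A * (δ / (A + 1)) := by gcongr; exact min_le_right _ _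
    _ ≤ δ := by rw [mul_div_assoc', div_le_iff₀ (by positivity)]; nlinarith

lemma exists_contDiff_pow_mul_eq_one_sub_bump (χ : ContDiffBump (0 : ℝ)) (ε : ℝ) (N : ℕ) :
    ∃ r : ℝ → ℝ, ContDiff ℝ ∞ r ∧ ∀ s, s ^ N * r s = 1 - χ (ε⁻¹ * s) := by
  have hχ : ∀ᶠ s in 𝓝 (0 : ℝ), χ (ε⁻¹ * s) = 1 := by
    have hs : Tendsto (fun s : ℝ => ε⁻¹ * s) (𝓝 0) (𝓝 0) := by
      simpa using (continuous_const_mul ε⁻¹).tendsto 0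
    exact hs.eventually χ.eventuallyEq_one
  refine ⟨fun s => (1 - χ (ε⁻¹ * s)) * (s ^ N)⁻¹, contDiff_iff_contDiffAt.2 fun s => ?_,
    fun s => ?_⟩
  · rcases eq_or_ne s 0 with rfl | hs
    · refine contDiffAt_const (c := (0 : ℝ)) |>.congr_of_eventuallyEq ?_
      filter_upwards [hχ] with s hs
      simp only [hs, sub_self, zero_mul]
    · exact (contDiff_const.sub (χ.contDiff.comp (contDiff_const.mul contDiff_id))).contDiffAt.mul
        ((contDiffAt_id.pow N).inv (pow_ne_zero N hs))
  · rcases eq_or_ne s 0 with rfl | hs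
    · have hχ0 : χ (0 : ℝ) = 1 := χ.eventuallyEq_one.self_of_nhds
      simp [hχ0]
    · field_simp

section BorelTerm

/-- The `i`-th term of the Borel series of `f`, cut off at scale `ε (N + i)` and divided by
`y.1 ^ N`; the exponent shift `N` describes the remainders of the series. -/
noncomputable def borelTerm {E : Type*} (χ : ContDiffBump (0 : ℝ)) (ε : ℕ → ℝ) (f : ℕ → E → ℝ)
    (N i : ℕ) (y : ℝ × E) : ℝ :=
  y.1 ^ i * χ ((ε (N + i))⁻¹ * y.1) * f (N + i) y.2

variable {χ : ContDiffBump (0 : ℝ)} {ε : ℕ → ℝ} {f : ℕ → E → ℝ}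

lemma contDiff_tsum_borelTerm (hf : ∀ k, ContDiff ℝ ∞ (f k)) {N : ℕ}
    (hb : ∀ i, ∀ j < i, ∀ y, ‖iteratedFDeriv ℝ j (borelTerm χ ε f N i) y‖ ≤ (1 / 2) ^ i) :
    ContDiff ℝ ∞ fun y => ∑' i, borelTerm χ ε f N i y := by
  refine contDiff_tsum_of_eventually (N := ⊤) (v := fun _ i => (1 / 2) ^ i)
    (fun i => contDiff_pow_mul_bump_mul χ _ i (hf _)) (fun _ _ => summable_geometric_two)
    fun j _ => ?_
  rw [Nat.cofinite_eq_atTop]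
  filter_upwards [eventually_gt_atTop j] with i hi y
  exact hb i j hi y

lemma tsum_borelTerm_eq_sum_add {E : Type*} {f : ℕ → E → ℝ} {N : ℕ} (y : ℝ × E)
    (hs : Summable fun i => borelTerm χ ε f 0 i y) :
    ∑' i, borelTerm χ ε f 0 i y =
      ∑ k ∈ Finset.range N, borelTerm χ ε f 0 k y + y.1 ^ N * ∑' i, borelTerm χ ε f N i y := by
  rw [← hs.sum_add_tsum_nat_add N, ← tsum_mul_left]
  congr 2 with i
  simp only [borelTerm, zero_add, add_comm i N, pow_add]
  ring

lemma exists_contDiff_sum_borelTerm_eq (hf : ∀ k, ContDiff ℝ ∞ (f k)) (N : ℕ) :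
    ∃ G : ℝ × E → ℝ, ContDiff ℝ ∞ G ∧ ∀ y, ∑ k ∈ Finset.range N, borelTerm χ ε f 0 k y =
      ∑ k ∈ Finset.range N, y.1 ^ k * f k y.2 + y.1 ^ N * G y := by
  choose r hr hrs using fun k => exists_contDiff_pow_mul_eq_one_sub_bump χ (ε k) N
  refine ⟨fun y => -∑ k ∈ Finset.range N, y.1 ^ k * r k y.1 * f k y.2,
    (ContDiff.sum fun k _ => (((contDiff_fst.pow k).mul
      ((hr k).comp contDiff_fst)).mul ((hf k).comp contDiff_snd))).neg, fun y => ?_⟩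
  rw [mul_neg, ← sub_eq_add_neg, Finset.mul_sum, ← Finset.sum_sub_distrib]
  refine Finset.sum_congr rfl fun k _ => ?_
  simp only [borelTerm, zero_add]
  linear_combination (y.1 ^ k * f k y.2) * hrs k y.1

end BorelTerm

lemma exists_contDiff_forall_eq_sum_pow_mul_add (f : ℕ → E → ℝ) (hf : ∀ k, ContDiff ℝ ∞ (f k))
    (hc : ∀ k, HasCompactSupport (f k)) :
    ∃ F : ℝ × E → ℝ, ContDiff ℝ ∞ F ∧ ∀ N : ℕ, ∃ G : ℝ × E → ℝ, ContDiff ℝ ∞ G ∧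
      ∀ y, F y = ∑ k ∈ Finset.range N, y.1 ^ k * f k y.2 + y.1 ^ N * G y := by
  let χ : ContDiffBump (0 : ℝ) := ⟨1, 2, one_pos, one_lt_two⟩
  choose ε _ hb using fun k => exists_scale_norm_iteratedFDeriv_le χ (hf k) (hc k) k
    (δ := (1 / 2) ^ k) (by positivity)
  have hb' (N i j : ℕ) (hj : j < i) (y : ℝ × E) :
      ‖iteratedFDeriv ℝ j (borelTerm χ ε f N i) y‖ ≤ (1 / 2) ^ i :=
    (hb (N + i) i (by lia) j hj y).trans
      (pow_le_pow_of_le_one (by norm_num) (by norm_num) (by lia))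
  have hsum (y : ℝ × E) : Summable fun i => borelTerm χ ε f 0 i y := by
    refine Summable.of_norm_bounded_eventually summable_geometric_two ?_
    rw [Nat.cofinite_eq_atTop]
    filter_upwards [eventually_gt_atTop 0] with i hi
    simpa only [norm_iteratedFDeriv_zero] using hb' 0 i 0 hi y
  refine ⟨_, contDiff_tsum_borelTerm hf (hb' 0), fun N => ?_⟩
  obtain ⟨G, hG, hGs⟩ := exists_contDiff_sum_borelTerm_eq (χ := χ) (ε := ε) hf N
  refine ⟨fun y => G y + ∑' i, borelTerm χ ε f N i y,
    hG.add (contDiff_tsum_borelTerm hf (hb' N)), fun y => ?_⟩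
  rw [tsum_borelTerm_eq_sum_add y (hsum y), hGs]
  ring

end Borel

section Hadamard

variable {E : Type*} [NormedAddCommGroup E] [NormedSpace ℝ E]

lemma hasDerivAt_apply_add_smul {h : E → ℝ} (hh : Differentiable ℝ h) (z e : E) (s : ℝ) :
    HasDerivAt (fun s : ℝ => h (z + s • e)) (fderiv ℝ h (z + s • e) e) s := by
  have hline : HasDerivAt (fun s : ℝ => z + s • e) e s := by
    simpa using ((hasDerivAt_id s).smul_const e).const_add z
  exact (hh (z + s • e)).hasFDerivAt.comp_hasDerivAt s hline

lemma contDiff_sub_smul_add_smul (l : E →L[ℝ] ℝ) (e : E) :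
    ContDiff ℝ ∞ fun y : ℝ × E => y.2 - l y.2 • e + y.1 • l y.2 • e := by
  fun_prop

lemma exists_contDiff_sub_eq_mul (l : E →L[ℝ] ℝ) (e : E) {h : E → ℝ} (hh : ContDiff ℝ ∞ h) :
    ∃ A : E → ℝ, ContDiff ℝ ∞ A ∧ ∀ z, h z - h (z - l z • e) = l z * A z := by
  have hg : ContDiff ℝ ∞ fun y : ℝ × E =>
      fderiv ℝ h (y.2 - l y.2 • e + y.1 • l y.2 • e) e :=
    ((hh.fderiv_right (m := ∞) (by simp)).comp (contDiff_sub_smul_add_smul l e)).clm_apply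
      contDiff_const
  refine ⟨_, contDiff_integral_unitInterval hg, fun z => ?_⟩
  have hderiv (s : ℝ) : HasDerivAt (fun s : ℝ => h (z - l z • e + s • l z • e))
      (l z * fderiv ℝ h (z - l z • e + s • l z • e) e) s := by
    simpa only [map_smul, smul_eq_mul] using
      hasDerivAt_apply_add_smul (hh.differentiable (by simp)) (z - l z • e) (l z • e) s
  rw [← intervalIntegral.integral_const_mul,
    intervalIntegral.integral_eq_sub_of_hasDerivAt (fun s _ => hderiv s)]
  · simp
  · have hline : Continuous fun s : ℝ => (s, z) := by fun_prop
    exact (continuous_const.mul (hg.continuous.comp hline)).intervalIntegrable _ _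

lemma exists_contDiff_fderiv_apply_eq {l : E →L[ℝ] ℝ} {e : E} (hle : l e = 1) {A : E → ℝ}
    (hA : ContDiff ℝ ∞ A) : ∃ f : E → ℝ, ContDiff ℝ ∞ f ∧ ∀ z, fderiv ℝ f z e = A z := by
  let f (z : E) : ℝ := ∫ s in (0 : ℝ)..1, l z * A (z - l z • e + s • l z • e)
  have hf : ContDiff ℝ ∞ f := contDiff_integral_unitInterval
    ((l.contDiff.comp contDiff_snd).mul (hA.comp (contDiff_sub_smul_add_smul l e)))
  have hline (z : E) (τ : ℝ) :
      f (z - l z • e + τ • e) = ∫ s in (0 : ℝ)..τ, A (z - l z • e + s • e) := by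
    have hsub := intervalIntegral.smul_integral_comp_mul_right (a := 0) (b := 1)
      (fun s : ℝ => A (z - l z • e + s • e)) τ
    rw [zero_mul, one_mul] at hsub
    simp only [f, map_add, map_sub, map_smul, smul_eq_mul, hle, mul_one, sub_self, zero_add,
      add_sub_cancel_right, smul_smul, intervalIntegral.integral_const_mul, ← hsub]
  refine ⟨f, hf, fun z => ?_⟩
  have hderiv := hasDerivAt_apply_add_smul (hf.differentiable (by simp)) (z - l z • e) e (l z)
  have hcont : Continuous fun s : ℝ => A (z - l z • e + s • e) := hA.continuous.comp (by fun_prop)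
  have hFTC := (hcont.integral_hasStrictDerivAt 0 (l z)).hasDerivAt
  simp only [hline] at hderiv
  rw [sub_add_cancel] at hderiv hFTC
  exact hderiv.unique hFTC

end Hadamard

section Derivative

variable {E F : Type*} [NormedAddCommGroup E] [NormedSpace ℝ E] [NormedAddCommGroup F]
  [NormedSpace ℝ F] {f g : E → ℝ} {z : E}

lemma contDiff_fderiv_apply (hf : ContDiff ℝ ∞ f) {W : E → E} (hW : ContDiff ℝ ∞ W) :
    ContDiff ℝ ∞ fun z => fderiv ℝ f z (W z) :=
  (hf.fderiv_right (m := ∞) (by simp)).clm_apply hW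

lemma fderiv_fun_add_apply (hf : DifferentiableAt ℝ f z) (hg : DifferentiableAt ℝ g z) (w : E) :
    fderiv ℝ (fun z => f z + g z) z w = fderiv ℝ f z w + fderiv ℝ g z w := by
  rw [fderiv_fun_add hf hg, add_apply]

lemma fderiv_fun_mul_apply (hf : DifferentiableAt ℝ f z) (hg : DifferentiableAt ℝ g z) (w : E) :
    fderiv ℝ (fun z => f z * g z) z w = f z * fderiv ℝ g z w + g z * fderiv ℝ f z w := by
  rw [fderiv_fun_mul hf hg]
  rfl

lemma fderiv_exp_apply (hf : DifferentiableAt ℝ f z) (w : E) :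
    fderiv ℝ (fun z => Real.exp (f z)) z w = Real.exp (f z) * fderiv ℝ f z w := by
  rw [hf.hasFDerivAt.exp.fderiv]
  rfl

lemma fderiv_comp_clm_apply {h : F → ℝ} (L : E →L[ℝ] F) (hh : DifferentiableAt ℝ h (L z)) (w : E) :
    fderiv ℝ (fun z => h (L z)) z w = fderiv ℝ h (L z) (L w) :=
  congrArg (· w) (hh.hasFDerivAt.comp z L.hasFDerivAt).fderiv

lemma fderiv_pow_mul_apply {U : E → ℝ} {w : E} {s : ℝ} (hU : DifferentiableAt ℝ U z)
    (hUs : fderiv ℝ U z w = U z * s) (hf : DifferentiableAt ℝ f z) (k : ℕ) :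
    fderiv ℝ (fun z => U z ^ k * f z) z w = U z ^ k * (fderiv ℝ f z w + k * s * f z) := by
  have hpow (k : ℕ) : fderiv ℝ (fun z => U z ^ k) z w = k * U z ^ k * s := by
    induction k with
    | zero => simp
    | succ k ih =>
      simp only [pow_succ]
      rw [fderiv_fun_mul_apply (hU.fun_pow k) hU, ih, hUs]
      push_cast
      ring
  rw [fderiv_fun_mul_apply (hU.fun_pow k) hf, hpow]
  ring

lemma fderiv_apply_eq_d1_add_d2 (h : ℝ × ℝ → ℝ) (q w : ℝ × ℝ) :
    fderiv ℝ h q w = w.1 * d1 h q + w.2 * d2 h q := by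
  have hw : w = w.1 • ((1 : ℝ), (0 : ℝ)) + w.2 • ((0 : ℝ), (1 : ℝ)) := by ext <;> simp
  rw [hw, map_add, map_smul, map_smul, ← hw]
  rfl

end Derivative

section Bump

variable {E : Type*} [NormedAddCommGroup E] [NormedSpace ℝ E] [FiniteDimensional ℝ E]

lemma exists_contDiff_cutoff {a : E} {s : Set E} (hs : s ∈ 𝓝 a) :
    ∃ ψ : E → ℝ, ContDiff ℝ ∞ ψ ∧ HasCompactSupport ψ ∧ tsupport ψ ⊆ s ∧ (∀ᶠ z in 𝓝 a, ψ z = 1) ∧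
      ∀ z, ψ z ∈ Set.Icc (0 : ℝ) 1 := by
  obtain ⟨ε, hε, hεs⟩ := Metric.nhds_basis_closedBall.mem_iff.1 hs
  let χ : ContDiffBump a := ⟨ε / 2, ε, by positivity, by linarith⟩
  exact ⟨χ, χ.contDiff, χ.hasCompactSupport, χ.tsupport_eq ▸ hεs, χ.eventuallyEq_one,
    fun z => ⟨χ.nonneg, χ.le_one⟩⟩

lemma exists_contDiff_cutoff_mul {a : E} {f : E → ℝ} (hf : ∀ᶠ z in 𝓝 a, ContDiffAt ℝ ∞ f z)
    {s : Set E} (hs : s ∈ 𝓝 a) :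
    ∃ ψ : E → ℝ, HasCompactSupport ψ ∧ tsupport ψ ⊆ s ∧ (∀ᶠ z in 𝓝 a, ψ z = 1) ∧
      (∀ z, ψ z ∈ Set.Icc (0 : ℝ) 1) ∧ ContDiff ℝ ∞ fun z => ψ z * f z := by
  obtain ⟨ψ, hψ, hψc, hψs, hψ1, hψI⟩ := exists_contDiff_cutoff (Filter.inter_mem hs hf)
  refine ⟨ψ, hψc, fun z hz => (hψs hz).1, hψ1, hψI, contDiff_iff_contDiffAt.2 fun z => ?_⟩
  by_cases hz : z ∈ tsupport ψ
  · exact hψ.contDiffAt.mul (hψs hz).2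
  · refine contDiffAt_const (c := (0 : ℝ)) |>.congr_of_eventuallyEq ?_
    filter_upwards [notMem_tsupport_iff_eventuallyEq.1 hz] with y hy
    rw [hy, Pi.zero_apply, zero_mul]

end Bump

section FormalSolution

variable {E : Type*} [NormedAddCommGroup E] [NormedSpace ℝ E]

/-- The formal power series `∑ U ^ k * f k` solves the equation `Y F = T 0`, for a function `U`
with `Y U = U * s`; `U ^ k * T k` is what the first `k` terms leave unsolved. -/
structure IsFormalSolution (Y : E → E) (U s : E → ℝ) (f T : ℕ → E → ℝ) : Prop where
  contDiff_base : ContDiff ℝ ∞ U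
  contDiff_rate : ContDiff ℝ ∞ s
  contDiff_coeff : ∀ k, ContDiff ℝ ∞ (f k)
  contDiff_remainder : ∀ k, ContDiff ℝ ∞ (T k)
  fderiv_base : ∀ z, fderiv ℝ U z (Y z) = U z * s z
  fderiv_coeff : ∀ k z, fderiv ℝ (f k) z (Y z) = T k z - U z * T (k + 1) z - k * s z * f k z

variable {Y : E → E} {U s : E → ℝ} {f T : ℕ → E → ℝ}

lemma IsFormalSolution.contDiff_sum (h : IsFormalSolution Y U s f T) (N : ℕ) :
    ContDiff ℝ ∞ fun z => ∑ k ∈ Finset.range N, U z ^ k * f k z :=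
  ContDiff.sum fun k _ => (h.contDiff_base.pow k).mul (h.contDiff_coeff k)

lemma IsFormalSolution.fderiv_sum_apply (h : IsFormalSolution Y U s f T) (N : ℕ) (z : E) :
    fderiv ℝ (fun z => ∑ k ∈ Finset.range N, U z ^ k * f k z) z (Y z) =
      T 0 z - U z ^ N * T N z := by
  induction N with
  | zero => simp
  | succ N ih =>
    have hU := h.contDiff_base.differentiable (by simp) z
    have hf := (h.contDiff_coeff N).differentiable (by simp) z
    simp only [Finset.sum_range_succ]
    rw [fderiv_fun_add_apply ((h.contDiff_sum N).differentiable (by simp) z)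
      ((hU.fun_pow N).fun_mul hf), ih, fderiv_pow_mul_apply hU (h.fderiv_base z) hf,
      h.fderiv_coeff]
    ring

lemma IsFormalSolution.exists_contDiff_fderiv_sub_eq_pow_mul [FiniteDimensional ℝ E]
    (h : IsFormalSolution Y U s f T) (hY : ContDiff ℝ ∞ Y) (a : E) :
    ∃ F : E → ℝ, ContDiff ℝ ∞ F ∧ ∃ S ∈ 𝓝 a, ∀ N : ℕ, ∃ K : E → ℝ, ContDiff ℝ ∞ K ∧
      ∀ z ∈ S, fderiv ℝ F z (Y z) - T 0 z = U z ^ N * K z := by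
  obtain ⟨ψ, hψ, hψc, -, hψ1, -⟩ := exists_contDiff_cutoff (univ_mem : _ ∈ 𝓝 a)
  obtain ⟨B, hB, hBG⟩ := exists_contDiff_forall_eq_sum_pow_mul_add (fun k z => ψ z * f k z)
    (fun k => hψ.mul (h.contDiff_coeff k)) (fun k => hψc.mul_right)
  have hUz : ContDiff ℝ ∞ fun z => (U z, z) := h.contDiff_base.prodMk contDiff_id
  refine ⟨fun z => B (U z, z), hB.comp hUz, {z | ∀ᶠ y in 𝓝 z, ψ y = 1},
    eventually_eventually_nhds.2 hψ1, fun N => ?_⟩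
  obtain ⟨G, hG, hBe⟩ := hBG N
  have hGU : ContDiff ℝ ∞ fun z => G (U z, z) := hG.comp hUz
  refine ⟨fun z => -T N z + (fderiv ℝ (fun z => G (U z, z)) z (Y z) + N * s z * G (U z, z)),
    (h.contDiff_remainder N).neg.add ((contDiff_fderiv_apply hGU hY).add
      ((contDiff_const.mul h.contDiff_rate).mul hGU)), fun z hz => ?_⟩
  have hlocal : (fun z => B (U z, z)) =ᶠ[𝓝 z] fun z =>
      (∑ k ∈ Finset.range N, U z ^ k * f k z) + U z ^ N * G (U z, z) := by
    filter_upwards [hz] with y hy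
    simp only [hBe, hy, one_mul]
  have hU := h.contDiff_base.differentiable (by simp) z
  have hGz := hGU.differentiable (by simp) z
  rw [hlocal.fderiv_eq, fderiv_fun_add_apply ((h.contDiff_sum N).differentiable (by simp) z)
    ((hU.fun_pow N).fun_mul hGz), h.fderiv_sum_apply,
    fderiv_pow_mul_apply hU (h.fderiv_base z) hGz]
  ring

end FormalSolution

section SaddleField

/-- The vector field `(v, v p, -p (1 - r))` in coordinates `(v, x, p)`. It is singular along the
line `v = p = 0`, transversally to which it is a saddle when `r < 1`. -/
def saddleField (r : ℝ × ℝ × ℝ → ℝ) (z : ℝ × ℝ × ℝ) : ℝ × ℝ × ℝ :=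
  (z.1, z.1 * z.2.2, -(z.2.2 * (1 - r z)))

variable {r R : ℝ × ℝ × ℝ → ℝ}

lemma contDiff_saddleField (hr : ContDiff ℝ ∞ r) : ContDiff ℝ ∞ (saddleField r) := by
  unfold saddleField
  fun_prop

lemma exists_contDiff_sub_eq_fst_mul (hR : ContDiff ℝ ∞ R) :
    ∃ A : ℝ × ℝ × ℝ → ℝ, ContDiff ℝ ∞ A ∧ ∀ z, R z - R (0, z.2) = z.1 * A z := by
  obtain ⟨A, hA, hRA⟩ := exists_contDiff_sub_eq_mul (.fst ℝ ℝ (ℝ × ℝ)) (1, 0) hR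
  refine ⟨A, hA, fun z => ?_⟩
  have hproj : z - z.1 • ((1, 0) : ℝ × ℝ × ℝ) = (0, z.2) := by ext <;> simp
  rw [← hproj]
  exact hRA z

lemma exists_contDiff_sub_eq_snd_snd_mul (hR : ContDiff ℝ ∞ R) :
    ∃ A : ℝ × ℝ × ℝ → ℝ, ContDiff ℝ ∞ A ∧ ∀ z, R z - R (z.1, z.2.1, 0) = z.2.2 * A z := by
  obtain ⟨A, hA, hRA⟩ :=
    exists_contDiff_sub_eq_mul ((ContinuousLinearMap.snd ℝ ℝ ℝ).comp (.snd ℝ ℝ (ℝ × ℝ)))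
      (0, 0, 1) hR
  refine ⟨A, hA, fun z => ?_⟩
  have hproj : z - z.2.2 • ((0, 0, 1) : ℝ × ℝ × ℝ) = (z.1, z.2.1, 0) := by ext <;> simp
  rw [← hproj]
  exact hRA z

lemma exists_contDiff_eq_fst_mul_add_snd_snd_mul_add (hR : ContDiff ℝ ∞ R)
    (hR0 : ∀ x, R (0, x, 0) = 0) :
    ∃ A B : ℝ × ℝ → ℝ, ∃ S : ℝ × ℝ × ℝ → ℝ, ContDiff ℝ ∞ A ∧ ContDiff ℝ ∞ B ∧ ContDiff ℝ ∞ S ∧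
      ∀ z, R z = z.1 * A (z.1, z.2.1) + z.2.2 * B z.2 + z.1 * z.2.2 * S z := by
  obtain ⟨A, hA, hRA⟩ := exists_contDiff_sub_eq_fst_mul hR
  obtain ⟨B, hB, hRB⟩ := exists_contDiff_sub_eq_snd_snd_mul hR
  obtain ⟨S, hS, hAS⟩ := exists_contDiff_sub_eq_snd_snd_mul hA
  refine ⟨fun y => A (y.1, y.2, 0), fun y => B (0, y), S, hA.comp (by fun_prop),
    hB.comp (by fun_prop), hS, fun z => ?_⟩
  have hRB0 := hRB (0, z.2)
  dsimp only at hRB0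
  rw [hR0] at hRB0
  linear_combination hRA z + hRB0 + z.1 * hAS z

lemma exists_contDiff_fderiv_saddleField_eq_fst_mul {A : ℝ × ℝ → ℝ} (hA : ContDiff ℝ ∞ A) :
    ∃ f R' : ℝ × ℝ × ℝ → ℝ, ContDiff ℝ ∞ f ∧ ContDiff ℝ ∞ R' ∧
      ∀ z, fderiv ℝ f z (saddleField r z) = z.1 * A (z.1, z.2.1) + z.1 * z.2.2 * R' z := by
  obtain ⟨F, hF, hFA⟩ :=
    exists_contDiff_fderiv_apply_eq (l := .fst ℝ ℝ ℝ) (e := ((1, 0) : ℝ × ℝ)) rfl hA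
  let L : ℝ × ℝ × ℝ →L[ℝ] ℝ × ℝ :=
    (ContinuousLinearMap.fst ℝ ℝ (ℝ × ℝ)).prod ((ContinuousLinearMap.fst ℝ ℝ ℝ).comp (.snd ℝ ℝ _))
  refine ⟨fun z => F (L z), fun z => fderiv ℝ F (L z) (0, 1), hF.comp L.contDiff,
    (contDiff_fderiv_apply hF contDiff_const).comp L.contDiff, fun z => ?_⟩
  have hL : L (saddleField r z) = z.1 • (1, 0) + (z.1 * z.2.2) • (0, 1) := by
    ext <;> simp [L, saddleField]
  rw [fderiv_comp_clm_apply L (hF.differentiable (by simp) _), hL, map_add, map_smul, map_smul, hFA]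
  rfl

lemma exists_contDiff_fderiv_saddleField_eq_snd_snd_mul (hr : ContDiff ℝ ∞ r) (hr1 : ∀ z, r z ≠ 1)
    {B : ℝ × ℝ → ℝ} (hB : ContDiff ℝ ∞ B) :
    ∃ f R' : ℝ × ℝ × ℝ → ℝ, ContDiff ℝ ∞ f ∧ ContDiff ℝ ∞ R' ∧
      ∀ z, fderiv ℝ f z (saddleField r z) = z.2.2 * B z.2 + z.1 * z.2.2 * R' z := by
  obtain ⟨q, hq, hrq⟩ := exists_contDiff_sub_eq_fst_mul hr
  have hne (y : ℝ × ℝ) : 1 - r (0, y) ≠ 0 := sub_ne_zero.2 (hr1 _).symm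
  have hb : ContDiff ℝ ∞ fun y => -(B y / (1 - r (0, y))) :=
    (hB.div (contDiff_const.sub (hr.comp (by fun_prop))) hne).neg
  obtain ⟨F, hF, hFb⟩ :=
    exists_contDiff_fderiv_apply_eq (l := .snd ℝ ℝ ℝ) (e := ((0, 1) : ℝ × ℝ)) rfl hb
  let L : ℝ × ℝ × ℝ →L[ℝ] ℝ × ℝ := .snd ℝ ℝ (ℝ × ℝ)
  refine ⟨fun z => F (L z), fun z => fderiv ℝ F (L z) (1, 0) + q z * -(B z.2 / (1 - r (0, z.2))),
    hF.comp L.contDiff, ((contDiff_fderiv_apply hF contDiff_const).comp L.contDiff).add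
      (hq.mul (hb.comp contDiff_snd)), fun z => ?_⟩
  have hL : L (saddleField r z) = (z.1 * z.2.2) • (1, 0) + (-(z.2.2 * (1 - r z))) • (0, 1) := by
    ext <;> simp [L, saddleField]
  have hB : B z.2 / (1 - r (0, z.2)) * (1 - r (0, z.2)) = B z.2 := div_mul_cancel₀ _ (hne _)
  rw [fderiv_comp_clm_apply L (hF.differentiable (by simp) _), hL, map_add, map_smul, map_smul, hFb,
    smul_eq_mul, smul_eq_mul]
  change _ + -(z.2.2 * (1 - r z)) * -(B z.2 / (1 - r (0, z.2))) = _
  linear_combination z.2.2 * hB - z.2.2 * (B z.2 / (1 - r (0, z.2))) * hrq z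

lemma exists_contDiff_fderiv_apply_eq_snd_fst_mul {A : ℝ → ℝ} (hA : ContDiff ℝ ∞ A) :
    ∃ g : ℝ × ℝ × ℝ → ℝ, ContDiff ℝ ∞ g ∧ ∀ z w, fderiv ℝ g z w = w.2.1 * A z.2.1 := by
  obtain ⟨G, hG, hGA⟩ := exists_contDiff_fderiv_apply_eq (l := .id ℝ ℝ) (e := 1) rfl hA
  let L : ℝ × ℝ × ℝ →L[ℝ] ℝ := (ContinuousLinearMap.fst ℝ ℝ ℝ).comp (.snd ℝ ℝ (ℝ × ℝ))
  refine ⟨fun z => G (L z), hG.comp L.contDiff, fun z w => ?_⟩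
  rw [fderiv_comp_clm_apply L (hG.differentiable (by simp) _), ← mul_one (L w), ← smul_eq_mul,
    map_smul, hGA]
  rfl

lemma exists_contDiff_fderiv_saddleField_eq_sub (hr : ContDiff ℝ ∞ r) (hr1 : ∀ z, r z ≠ 1)
    (hR : ContDiff ℝ ∞ R) (hR0 : ∀ x, R (0, x, 0) = 0) :
    ∃ f R' : ℝ × ℝ × ℝ → ℝ, ContDiff ℝ ∞ f ∧ ContDiff ℝ ∞ R' ∧ (∀ x, R' (0, x, 0) = 0) ∧
      ∀ z, fderiv ℝ f z (saddleField r z) = R z - z.1 * z.2.2 * R' z := by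
  obtain ⟨A, B, S, hA, hB, hS, hRe⟩ := exists_contDiff_eq_fst_mul_add_snd_snd_mul_add hR hR0
  obtain ⟨f, F', hf, hF', hfe⟩ := exists_contDiff_fderiv_saddleField_eq_fst_mul (r := r) hA
  obtain ⟨g, G', hg, hG', hge⟩ := exists_contDiff_fderiv_saddleField_eq_snd_snd_mul hr hr1 hB
  let Q (z : ℝ × ℝ × ℝ) : ℝ := S z - F' z - G' z
  have hQ : ContDiff ℝ ∞ Q := (hS.sub hF').sub hG'
  obtain ⟨h, hh, hhe⟩ := exists_contDiff_fderiv_apply_eq_snd_fst_mul (A := fun x => Q (0, x, 0))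
    (hQ.comp (by fun_prop))
  refine ⟨fun z => f z + g z + h z, fun z => Q z - Q (0, z.2.1, 0), (hf.add hg).add hh,
    hQ.sub (hQ.comp (by fun_prop)), fun x => sub_self _, fun z => ?_⟩
  rw [fderiv_fun_add_apply ((hf.add hg).differentiable (by simp) z) (hh.differentiable (by simp) z),
    fderiv_fun_add_apply (hf.differentiable (by simp) z) (hg.differentiable (by simp) z), hfe, hge,
    hhe, hRe]
  simp only [saddleField, Q]
  ring

lemma fderiv_fst_mul_snd_snd_saddleField (z : ℝ × ℝ × ℝ) :
    fderiv ℝ (fun z : ℝ × ℝ × ℝ => z.1 * z.2.2) z (saddleField r z) = z.1 * z.2.2 * r z := by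
  rw [fderiv_fun_mul_apply differentiableAt_fst (by fun_prop), fderiv_fst, fderiv.snd (by fun_prop),
    fderiv_snd]
  simp only [saddleField, ContinuousLinearMap.comp_apply, ContinuousLinearMap.coe_fst',
    ContinuousLinearMap.coe_snd']
  ring

/- For a solution `φ` of `Y φ = r - v p S`, the function `v p exp (-φ)` is a first integral of `Y`
up to second order, as `Y (v p) = v p r`. -/
lemma fderiv_mul_exp_neg_saddleField {φ S : ℝ × ℝ × ℝ → ℝ} (hφ : ContDiff ℝ ∞ φ)
    (hφS : ∀ z, fderiv ℝ φ z (saddleField r z) = r z - z.1 * z.2.2 * S z) (z : ℝ × ℝ × ℝ) :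
    fderiv ℝ (fun z : ℝ × ℝ × ℝ => z.1 * z.2.2 * Real.exp (-φ z)) z (saddleField r z) =
      z.1 * z.2.2 * Real.exp (-φ z) * (z.1 * z.2.2 * S z) := by
  have hφz := (hφ.differentiable (by simp) z).fun_neg
  rw [fderiv_fun_mul_apply (by fun_prop) hφz.exp, fderiv_fst_mul_snd_snd_saddleField,
    fderiv_exp_apply hφz, fderiv_fun_neg, neg_apply, hφS]
  ring

lemma exists_isFormalSolution_saddleField (hr : ContDiff ℝ ∞ r) (hr1 : ∀ z, r z ≠ 1)
    (hr0 : ∀ x, r (0, x, 0) = 0) (hR : ContDiff ℝ ∞ R) (hR0 : ∀ x, R (0, x, 0) = 0) :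
    ∃ (φ s : ℝ × ℝ × ℝ → ℝ) (f T : ℕ → ℝ × ℝ × ℝ → ℝ), ContDiff ℝ ∞ φ ∧ T 0 = R ∧
      IsFormalSolution (saddleField r) (fun z => z.1 * z.2.2 * Real.exp (-φ z)) s f T := by
  obtain ⟨φ, S, hφ, hS, hS0, hφS⟩ := exists_contDiff_fderiv_saddleField_eq_sub hr hr1 hr hr0
  have hstep (k : ℕ) (T : {T : ℝ × ℝ × ℝ → ℝ // ContDiff ℝ ∞ T ∧ ∀ x, T (0, x, 0) = 0}) :
      ∃ (f : ℝ × ℝ × ℝ → ℝ) (T' : {T : ℝ × ℝ × ℝ → ℝ // ContDiff ℝ ∞ T ∧ ∀ x, T (0, x, 0) = 0}),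
        ContDiff ℝ ∞ f ∧ ∀ z, fderiv ℝ f z (saddleField r z) =
          T.1 z - z.1 * z.2.2 * Real.exp (-φ z) * T'.1 z - k * (z.1 * z.2.2 * S z) * f z := by
    obtain ⟨f, R', hf, hR', hR'0, hfe⟩ :=
      exists_contDiff_fderiv_saddleField_eq_sub hr hr1 T.2.1 T.2.2
    refine ⟨f, ⟨fun z => Real.exp (φ z) * (R' z - k * S z * f z),
      hφ.exp.mul (hR'.sub ((contDiff_const.mul hS).mul hf)), fun x => by simp [hR'0, hS0]⟩, hf,
      fun z => ?_⟩
    have hexp : Real.exp (-φ z) * Real.exp (φ z) = 1 := by rw [← Real.exp_add]; simp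
    linear_combination hfe z + z.1 * z.2.2 * (R' z - k * S z * f z) * hexp
  choose f T' hf hfe using hstep
  let T (k : ℕ) : {T : ℝ × ℝ × ℝ → ℝ // ContDiff ℝ ∞ T ∧ ∀ x, T (0, x, 0) = 0} :=
    Nat.rec ⟨R, hR, hR0⟩ (fun k T => T' k T) k
  exact ⟨φ, fun z => z.1 * z.2.2 * S z, fun k => f k (T k), fun k => (T k).1, hφ, rfl,
    { contDiff_base := (contDiff_fst.mul contDiff_snd.snd).mul hφ.neg.exp
      contDiff_rate := (contDiff_fst.mul contDiff_snd.snd).mul hS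
      contDiff_coeff := fun k => hf k _
      contDiff_remainder := fun k => (T k).2.1
      fderiv_base := fderiv_mul_exp_neg_saddleField hφ hφS
      fderiv_coeff := fun k => hfe k (T k) }⟩

lemma exists_contDiff_fderiv_saddleField_eq_of_isFlatAlong (hr : ContDiff ℝ ∞ r)
    (hrc : HasCompactSupport r) {c : ℝ} (hc0 : 0 < c) (hc : ∀ z, c ≤ 1 - r z)
    {e : ℝ × ℝ × ℝ → ℝ} (hec : HasCompactSupport e)
    (he : IsFlatAlong ((ContinuousLinearMap.snd ℝ ℝ ℝ).comp (.snd ℝ ℝ (ℝ × ℝ))) e) :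
    ∃ f : ℝ × ℝ × ℝ → ℝ, ContDiff ℝ ∞ f ∧ ∀ᶠ z in 𝓝 0, fderiv ℝ f z (saddleField r z) = e z := by
  obtain ⟨ψ, hψ, hψc, -, hψ1, -⟩ := exists_contDiff_cutoff (univ_mem : _ ∈ 𝓝 (0 : ℝ × ℝ × ℝ))
  let Z (z : ℝ × ℝ × ℝ) : ℝ × ℝ × ℝ := (z.1, ψ z * (z.1 * z.2.2), -(z.2.2 * (1 - r z)))
  have hZ : ContDiff ℝ ∞ Z := by fun_prop
  let lp : ℝ × ℝ × ℝ →L[ℝ] ℝ := (ContinuousLinearMap.snd ℝ ℝ ℝ).comp (.snd ℝ ℝ (ℝ × ℝ))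
  let L : ℝ × ℝ × ℝ →L[ℝ] ℝ × ℝ × ℝ :=
    (ContinuousLinearMap.fst ℝ ℝ (ℝ × ℝ)).prod ((0 : ℝ × ℝ × ℝ →L[ℝ] ℝ).prod (-lp))
  have hZL : HasCompactSupport fun z => Z z - L z := by
    refine (hψc.isCompact.union hrc.isCompact).of_isClosed_subset (isClosed_tsupport _)
      (closure_minimal (fun z hz => ?_) ((isClosed_tsupport _).union (isClosed_tsupport _)))
    contrapose! hz
    rw [Set.mem_union, not_or] at hz
    simp [Z, L, lp, image_eq_zero_of_notMem_tsupport hz.1, image_eq_zero_of_notMem_tsupport hz.2]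
  obtain ⟨f, hf, hfe⟩ := exists_contDiff_fderiv_apply_eq_of_isFlatAlong hZ hZL
    (contDiff_const.sub hr) hc0 hc (fun z => neg_inj.2 (mul_comm _ _)) he hec
  refine ⟨f, hf, ?_⟩
  filter_upwards [hfe, hψ1] with z hz hψz
  simpa only [Z, hψz, one_mul, saddleField] using hz

theorem exists_contDiff_fderiv_saddleField_eq (hr : ContDiff ℝ ∞ r) (hrc : HasCompactSupport r)
    {c : ℝ} (hc0 : 0 < c) (hc : ∀ z, c ≤ 1 - r z) (hr0 : ∀ x, r (0, x, 0) = 0)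
    (hR : ContDiff ℝ ∞ R) (hR0 : ∀ x, R (0, x, 0) = 0) :
    ∃ f : ℝ × ℝ × ℝ → ℝ, ContDiff ℝ ∞ f ∧ ∀ᶠ z in 𝓝 0, fderiv ℝ f z (saddleField r z) = R z := by
  have hr1 (z : ℝ × ℝ × ℝ) : r z ≠ 1 := fun h => by linarith [hc z]
  obtain ⟨φ, s, f, T, hφ, hT0, hfT⟩ := exists_isFormalSolution_saddleField hr hr1 hr0 hR hR0
  obtain ⟨F, hF, S, hS, hFS⟩ :=
    hfT.exists_contDiff_fderiv_sub_eq_pow_mul (contDiff_saddleField hr) 0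
  rw [hT0] at hFS
  obtain ⟨ψ, hψ, hψc, hψS, hψ1, -⟩ := exists_contDiff_cutoff hS
  obtain ⟨g, hg, hge⟩ := exists_contDiff_fderiv_saddleField_eq_of_isFlatAlong hr hrc hc0 hc
    (e := fun z => ψ z * (fderiv ℝ F z (saddleField r z) - R z)) hψc.mul_right
    (isFlatAlong_of_hasCompactSupport hψc.mul_right fun N => by
      obtain ⟨K, hK, hKe⟩ := hFS N
      refine ⟨fun z => ψ z * (z.1 ^ N * Real.exp (-φ z) ^ N * K z),
        hψ.mul (((contDiff_fst.pow N).mul (hφ.neg.exp.pow N)).mul hK), fun z => ?_⟩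
      by_cases hz : z ∈ tsupport ψ
      · rw [hKe z (hψS hz)]
        simp only [mul_pow, ContinuousLinearMap.comp_apply, ContinuousLinearMap.coe_snd']
        ring
      · simp [image_eq_zero_of_notMem_tsupport hz])
  refine ⟨fun z => F z - g z, hF.sub hg, ?_⟩
  filter_upwards [hge, hψ1] with z hgz hψz
  rw [fderiv_fun_sub (hF.differentiable (by simp) z) (hg.differentiable (by simp) z), sub_apply,
    hgz, hψz]
  ring

end SaddleField

section GermConj

/-- The germ of `Φ` at `a` is a smooth diffeomorphism onto a neighbourhood of `b` taking the germ
of the vector field `V` to that of `W`. Invertibility is encoded, as the inverse function theorem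
allows in finite dimensions, by injectivity of the derivative at `a`. -/
structure IsGermConj {E : Type*} [NormedAddCommGroup E] [NormedSpace ℝ E] (Φ V W : E → E)
    (a b : E) : Prop where
  map_eq : Φ a = b
  contDiffAt : ∀ᶠ z in 𝓝 a, ContDiffAt ℝ ∞ Φ z
  injective : Function.Injective (fderiv ℝ Φ a)
  conj : ∀ᶠ z in 𝓝 a, fderiv ℝ Φ z (V z) = W (Φ z)

variable {E : Type*} [NormedAddCommGroup E] [NormedSpace ℝ E] {Φ Ψ V V' W X : E → E} {a b c : E}

namespace IsGermConj

lemma tendsto (hΦ : IsGermConj Φ V W a b) : Tendsto Φ (𝓝 a) (𝓝 b) :=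
  hΦ.map_eq ▸ hΦ.contDiffAt.self_of_nhds.continuousAt.tendsto

lemma congr_left (hΦ : IsGermConj Φ V W a b) (hV : V' =ᶠ[𝓝 a] V) : IsGermConj Φ V' W a b where
  __ := hΦ
  conj := by
    filter_upwards [hΦ.conj, hV] with z hz hVz
    rw [hVz, hz]

lemma comp (hΨ : IsGermConj Ψ W X b c) (hΦ : IsGermConj Φ V W a b) :
    IsGermConj (Ψ ∘ Φ) V X a c := by
  have hchain : ∀ᶠ z in 𝓝 a, fderiv ℝ (Ψ ∘ Φ) z = (fderiv ℝ Ψ (Φ z)).comp (fderiv ℝ Φ z) := by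
    filter_upwards [hΦ.contDiffAt, hΦ.tendsto.eventually hΨ.contDiffAt] with z hΦz hΨz
    exact fderiv_comp z (hΨz.differentiableAt (by simp)) (hΦz.differentiableAt (by simp))
  refine ⟨by simp [hΦ.map_eq, hΨ.map_eq], ?_, ?_, ?_⟩
  · filter_upwards [hΦ.contDiffAt, hΦ.tendsto.eventually hΨ.contDiffAt] with z hΦz hΨz
    exact hΨz.comp z hΦz
  · rw [hchain.self_of_nhds, hΦ.map_eq]
    exact hΨ.injective.comp hΦ.injective
  · filter_upwards [hchain, hΦ.conj, hΦ.tendsto.eventually hΨ.conj] with z hz hΦz hΨz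
    rw [hz, ContinuousLinearMap.comp_apply, hΦz, hΨz, Function.comp_apply]

/- Differentiate `DΦ(V) = W ∘ Φ`; the term with the second derivative of `Φ` vanishes together
with `V`. -/
lemma fderiv_fderiv_apply (hΦ : IsGermConj Φ V W a b) (hV : ∀ᶠ z in 𝓝 a, ContDiffAt ℝ ∞ V z)
    (hW : ∀ᶠ y in 𝓝 b, ContDiffAt ℝ ∞ W y) :
    ∀ᶠ z in 𝓝 a, V z = 0 → ∀ w, fderiv ℝ W (Φ z) (fderiv ℝ Φ z w) =
      fderiv ℝ Φ z (fderiv ℝ V z w) := by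
  filter_upwards [hΦ.contDiffAt, hΦ.conj.eventually_nhds, hV, hΦ.tendsto.eventually hW]
    with z hΦz hconj hVz hWz hz w
  have hDΦ : DifferentiableAt ℝ (fderiv ℝ Φ) z :=
    (hΦz.fderiv_right (m := 1) (by norm_cast)).differentiableAt (by simp)
  have hchain := fderiv_comp z (hWz.differentiableAt (by simp)) (hΦz.differentiableAt (by simp))
  have hconj' : W ∘ Φ =ᶠ[𝓝 z] fun z => fderiv ℝ Φ z (V z) := hconj.mono fun _ hz => hz.symm
  rw [hconj'.fderiv_eq, fderiv_clm_apply hDΦ (hVz.differentiableAt (by simp)), hz, map_zero,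
    add_zero] at hchain
  exact (congrArg (fun L => L w) hchain).symm

end IsGermConj

lemma fderiv_symm_fderiv_apply {F : Type*} [NormedAddCommGroup F] [NormedSpace ℝ F]
    {P : OpenPartialHomeomorph E F} {z : E} (hz : z ∈ P.source) (hP : DifferentiableAt ℝ P z)
    (hPsymm : DifferentiableAt ℝ P.symm (P z)) (w : E) :
    fderiv ℝ P.symm (P z) (fderiv ℝ P z w) = w := by
  have hid : P.symm ∘ P =ᶠ[𝓝 z] id := P.eventually_left_inverse hz
  rw [← ContinuousLinearMap.comp_apply, ← fderiv_comp z hPsymm hP, hid.fderiv_eq, fderiv_id,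
    ContinuousLinearMap.id_apply]

variable [FiniteDimensional ℝ E]

lemma exists_openPartialHomeomorph_of_injective (hΦ : ∀ᶠ z in 𝓝 a, ContDiffAt ℝ ∞ Φ z)
    (hinj : Function.Injective (fderiv ℝ Φ a)) {U : Set E} (hU : U ∈ 𝓝 a) :
    ∃ P : OpenPartialHomeomorph E E, ⇑P = Φ ∧ a ∈ P.source ∧ P.source ⊆ U ∧
      (∀ z ∈ P.source, ContDiffAt ℝ ∞ P z) ∧ ∀ y ∈ P.target, ContDiffAt ℝ ∞ P.symm y := by
  let e : E ≃L[ℝ] E :=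
    (LinearEquiv.ofInjectiveEndo (fderiv ℝ Φ a : E →ₗ[ℝ] E) hinj).toContinuousLinearEquiv
  have he : HasFDerivAt Φ (e : E →L[ℝ] E) a :=
    (hΦ.self_of_nhds.differentiableAt (by simp)).hasFDerivAt
  obtain ⟨P, rfl, hP⟩ := exists_smooth_openPartialHomeomorph hΦ he hU
  exact ⟨P, rfl, hP⟩

lemma map_nhds_eq_of_injective_fderiv (hΦ : ∀ᶠ z in 𝓝 a, ContDiffAt ℝ ∞ Φ z)
    (hinj : Function.Injective (fderiv ℝ Φ a)) : map Φ (𝓝 a) = 𝓝 (Φ a) := by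
  obtain ⟨P, rfl, ha, -⟩ := exists_openPartialHomeomorph_of_injective hΦ hinj univ_mem
  exact P.map_nhds_eq ha

lemma eventually_injective_fderiv (hΦ : ∀ᶠ z in 𝓝 a, ContDiffAt ℝ ∞ Φ z)
    (hinj : Function.Injective (fderiv ℝ Φ a)) :
    ∀ᶠ z in 𝓝 a, Function.Injective (fderiv ℝ Φ z) := by
  obtain ⟨P, rfl, ha, -, hP, hPsymm⟩ := exists_openPartialHomeomorph_of_injective hΦ hinj univ_mem
  filter_upwards [P.open_source.mem_nhds ha] with z hz
  exact Function.LeftInverse.injective (fderiv_symm_fderiv_apply hz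
    ((hP z hz).differentiableAt (by simp))
    ((hPsymm _ (P.map_source hz)).differentiableAt (by simp)))

lemma IsGermConj.exists_symm (hΦ : IsGermConj Φ V W a b) : ∃ Ψ, IsGermConj Ψ W V b a := by
  obtain ⟨P, rfl, ha, hPconj, hP, hPsymm⟩ :=
    exists_openPartialHomeomorph_of_injective hΦ.contDiffAt hΦ.injective hΦ.conj
  have hd {z : E} (hz : z ∈ P.source) : DifferentiableAt ℝ P z :=
    (hP z hz).differentiableAt (by simp)
  have hd' {y : E} (hy : y ∈ P.target) : DifferentiableAt ℝ P.symm y :=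
    (hPsymm y hy).differentiableAt (by simp)
  obtain rfl := hΦ.map_eq
  have htarget := P.open_target.mem_nhds (P.map_source ha)
  refine ⟨P.symm, P.left_inv ha, eventually_of_mem htarget hPsymm, ?_, ?_⟩
  · refine Function.LeftInverse.injective (fderiv_symm_fderiv_apply (P := P.symm)
      (P.map_source ha) (hd' (P.map_source ha)) ?_)
    simpa [ha] using hd ha
  · filter_upwards [htarget] with y hy
    have hz := P.map_target hy
    have hWy : fderiv ℝ P (P.symm y) (V (P.symm y)) = W (P (P.symm y)) := hPconj hz
    rw [P.right_inv hy] at hWy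
    rw [← hWy]
    simpa only [P.right_inv hy] using
      fderiv_symm_fderiv_apply hz (hd hz) (hd' (P.map_source hz)) (V (P.symm y))

lemma exists_isGermConj (hΦ : ∀ᶠ z in 𝓝 a, ContDiffAt ℝ ∞ Φ z)
    (hinj : Function.Injective (fderiv ℝ Φ a)) (hV : ∀ᶠ z in 𝓝 a, ContDiffAt ℝ ∞ V z) :
    ∃ W : E → E, (∀ᶠ y in 𝓝 (Φ a), ContDiffAt ℝ ∞ W y) ∧ IsGermConj Φ V W a (Φ a) := by
  obtain ⟨P, rfl, ha, hPV, hP, hPsymm⟩ := exists_openPartialHomeomorph_of_injective hΦ hinj hV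
  refine ⟨fun y => fderiv ℝ P (P.symm y) (V (P.symm y)), ?_, rfl, hΦ, hinj, ?_⟩
  · filter_upwards [P.open_target.mem_nhds (P.map_source ha)] with y hy
    have hDP : ContDiffAt ℝ ∞ (fderiv ℝ P) (P.symm y) :=
      (hP _ (P.map_target hy)).fderiv_right (by norm_cast)
    exact (hDP.comp y (hPsymm y hy)).clm_apply
      (ContDiffAt.comp y (hPV (P.map_target hy)) (hPsymm y hy))
  · filter_upwards [P.open_source.mem_nhds ha] with z hz
    rw [P.left_inv hz]

lemma IsGermConj.orbEquiv {k : E → ℝ} (hΦ : IsGermConj Φ V' W a b)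
    (hk : ∀ᶠ z in 𝓝 a, ContDiffAt ℝ ∞ k z) (hk0 : k a ≠ 0) (hV : ∀ᶠ z in 𝓝 a, V z = k z • V' z)
    {D : Set E} (hD : D ∈ 𝓝 a) : OrbEquiv D V W a b := by
  have hk0' : ∀ᶠ z in 𝓝 a, k z ≠ 0 := hk.self_of_nhds.continuousAt.eventually_ne hk0
  obtain ⟨P, rfl, ha, hPU, hP, hPsymm⟩ := exists_openPartialHomeomorph_of_injective hΦ.contDiffAt
    hΦ.injective (inter_mem hD (hk.and (hk0'.and (hV.and hΦ.conj))))
  refine ⟨P.source, P.target, P, P.symm, k, P.open_source, P.open_target, ha,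
    hΦ.map_eq ▸ P.map_source ha, fun z hz => (hPU hz).1, fun z hz => (hP z hz).contDiffWithinAt,
    fun y hy => (hPsymm y hy).contDiffWithinAt, hΦ.map_eq, P.mapsTo, P.mapsTo_symm,
    fun z => P.left_inv, fun y => P.right_inv, fun z hz => (hPU hz).2.1.contDiffWithinAt,
    fun z hz => (hPU hz).2.2.1, fun z hz => ?_⟩
  obtain ⟨-, -, -, hVz, hconj⟩ := hPU hz
  rw [hVz, map_smul, hconj]

end GermConj

section Model

/-- The normal form `(ξ, -η, ξ η)` of the theorem. -/
def modelField (y : ℝ × ℝ × ℝ) : ℝ × ℝ × ℝ := (y.1, -y.2.1, y.1 * y.2.1)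

lemma fderiv_triple_apply {E F₁ F₂ F₃ : Type*} [NormedAddCommGroup E] [NormedSpace ℝ E]
    [NormedAddCommGroup F₁] [NormedSpace ℝ F₁] [NormedAddCommGroup F₂] [NormedSpace ℝ F₂]
    [NormedAddCommGroup F₃] [NormedSpace ℝ F₃] {f : E → F₁} {g : E → F₂} {h : E → F₃} {z : E}
    (hf : DifferentiableAt ℝ f z) (hg : DifferentiableAt ℝ g z) (hh : DifferentiableAt ℝ h z)
    (w : E) :
    fderiv ℝ (fun z => (f z, g z, h z)) z w =
      (fderiv ℝ f z w, fderiv ℝ g z w, fderiv ℝ h z w) := by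
  rw [(hf.hasFDerivAt.prodMk (hg.hasFDerivAt.prodMk hh.hasFDerivAt)).fderiv]
  rfl

lemma fderiv_snd_snd_apply (z w : ℝ × ℝ × ℝ) :
    fderiv ℝ (fun z : ℝ × ℝ × ℝ => z.2.2) z w = w.2.2 :=
  congrArg (· w) ((ContinuousLinearMap.snd ℝ ℝ ℝ).comp (.snd ℝ ℝ (ℝ × ℝ))).fderiv

variable {r f g κ : ℝ × ℝ × ℝ → ℝ} {z : ℝ × ℝ × ℝ}

lemma fderiv_snd_snd_mul_exp_neg_saddleField (hf : DifferentiableAt ℝ f z)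
    (hfz : fderiv ℝ f z (saddleField r z) = r z) :
    fderiv ℝ (fun z => z.2.2 * Real.exp (-f z)) z (saddleField r z) =
      -(z.2.2 * Real.exp (-f z)) := by
  rw [fderiv_fun_mul_apply (by fun_prop) hf.fun_neg.exp, fderiv_exp_apply hf.fun_neg,
    fderiv_fun_neg, neg_apply, hfz, fderiv_snd_snd_apply]
  simp only [saddleField]
  ring

lemma fderiv_add_mul_saddleField {A : ℝ × ℝ × ℝ → ℝ} (hf : DifferentiableAt ℝ f z)
    (hfz : fderiv ℝ f z (saddleField r z) = r z) (hg : DifferentiableAt ℝ g z)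
    (hgz : fderiv ℝ g z (saddleField r z) = z.1 * z.2.2 * A z) (hκ : DifferentiableAt ℝ κ z)
    (hκz : fderiv ℝ κ z (saddleField r z) = 1 - Real.exp (f z) * A z) :
    fderiv ℝ (fun z => g z + z.1 * (z.2.2 * Real.exp (-f z)) * κ z) z (saddleField r z) =
      z.1 * (z.2.2 * Real.exp (-f z)) := by
  have hη : DifferentiableAt ℝ (fun z : ℝ × ℝ × ℝ => z.2.2 * Real.exp (-f z)) z := by fun_prop
  have hU₀ : fderiv ℝ (fun z => z.1 * (z.2.2 * Real.exp (-f z))) z (saddleField r z) = 0 := by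
    rw [fderiv_fun_mul_apply differentiableAt_fst hη,
      fderiv_snd_snd_mul_exp_neg_saddleField hf hfz, fderiv_fst]
    simp only [saddleField, ContinuousLinearMap.coe_fst']
    ring
  have hU := differentiableAt_fst.fun_mul hη
  have hexp : Real.exp (-f z) * Real.exp (f z) = 1 := by rw [← Real.exp_add]; simp
  rw [fderiv_fun_add_apply hg (hU.fun_mul hκ), fderiv_fun_mul_apply hU hκ, hgz, hκz, hU₀]
  linear_combination (-z.1 * z.2.2 * A z) * hexp

theorem exists_isGermConj_saddleField_modelField (hr : ContDiff ℝ ∞ r) (hrc : HasCompactSupport r)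
    {c : ℝ} (hc0 : 0 < c) (hc : ∀ z, c ≤ 1 - r z) (hr0 : ∀ x, r (0, x, 0) = 0) :
    ∃ Φ, IsGermConj Φ (saddleField r) modelField 0 0 := by
  obtain ⟨f, hf, hfr⟩ := exists_contDiff_fderiv_saddleField_eq hr hrc hc0 hc hr0 hr hr0
  let A (x : ℝ) : ℝ := Real.exp (-f (0, x, 0))
  have hA : ContDiff ℝ ∞ A :=
    (hf.comp (g := f) (f := fun x : ℝ => (0, x, 0)) (by fun_prop)).neg.exp
  obtain ⟨g, hg, hgA⟩ := exists_contDiff_fderiv_apply_eq_snd_fst_mul hA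
  obtain ⟨κ, hκ, hκA⟩ := exists_contDiff_fderiv_saddleField_eq hr hrc hc0 hc hr0
    (R := fun z => 1 - Real.exp (f z) * A z.2.1)
    (contDiff_const.sub (hf.exp.mul (hA.comp contDiff_snd.fst)))
    (fun x => by simp [A, ← Real.exp_add])
  let η (z : ℝ × ℝ × ℝ) : ℝ := z.2.2 * Real.exp (-f z)
  have hη : ContDiff ℝ ∞ η := contDiff_snd.snd.mul hf.neg.exp
  let ζ (z : ℝ × ℝ × ℝ) : ℝ := g z + z.1 * η z * κ z
  have hζ : ContDiff ℝ ∞ ζ := hg.add ((contDiff_fst.mul hη).mul hκ)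
  have hd {h : ℝ × ℝ × ℝ → ℝ} (hh : ContDiff ℝ ∞ h) (z : ℝ × ℝ × ℝ) : DifferentiableAt ℝ h z :=
    hh.differentiable (by simp) z
  have hD (z w : ℝ × ℝ × ℝ) : fderiv ℝ (fun z => (z.1, η z, ζ z - g 0)) z w =
      (w.1, fderiv ℝ η z w, fderiv ℝ ζ z w) := by
    rw [fderiv_triple_apply differentiableAt_fst (hd hη z) ((hd hζ z).sub_const _), fderiv_fst,
      fderiv_sub_const, ContinuousLinearMap.coe_fst']
  refine ⟨fun z => (z.1, η z, ζ z - g 0), by simp [η, ζ], Eventually.of_forall fun z =>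
    (contDiff_fst.prodMk (hη.prodMk (hζ.sub contDiff_const))).contDiffAt, ?_, ?_⟩
  · refine (injective_iff_map_eq_zero _).2 fun w hw => ?_
    have hη0 : fderiv ℝ η 0 w = Real.exp (-f 0) * w.2.2 := by
      simp only [η]
      rw [fderiv_fun_mul_apply (by fun_prop) (hd hf.neg.exp 0), fderiv_snd_snd_apply]
      simp
    have hζ0 : fderiv ℝ ζ 0 w = w.2.1 * A 0 := by
      rw [fderiv_fun_add_apply (hd hg 0) (hd ((contDiff_fst.mul hη).mul hκ) 0),
        fderiv_fun_mul_apply (hd (contDiff_fst.mul hη) 0) (hd hκ 0),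
        fderiv_fun_mul_apply differentiableAt_fst (hd hη 0), hgA]
      simp [η]
    obtain ⟨hw1, hw2, hw3⟩ : w.1 = 0 ∧ w.2.2 = 0 ∧ w.2.1 = 0 := by
      simpa [hD, hη0, hζ0, A] using hw
    exact Prod.ext hw1 (Prod.ext hw3 hw2)
  · filter_upwards [hfr, hκA] with z hfz hκz
    rw [hD, fderiv_snd_snd_mul_exp_neg_saddleField (hd hf z) hfz,
      fderiv_add_mul_saddleField (A := fun z => A z.2.1) (hd hf z) hfz (hd hg z)
        (by rw [hgA]; rfl) (hd hκ z) hκz]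
    rfl

end Model

section PathScaling

variable {F : Type*} [NormedAddCommGroup F]

lemma norm_comp_mulLeft_le (s : I) (γ : C(I, F)) : ‖γ.comp (ContinuousMap.mulLeft s)‖ ≤ ‖γ‖ :=
  (ContinuousMap.norm_le _ (norm_nonneg _)).2 fun _ => γ.norm_coe_le_norm _

lemma pathExtend_comp_mulLeft (s : I) (γ : C(I, F)) {τ : ℝ} (hτ : τ ∈ Set.Icc (0 : ℝ) 1) :
    pathExtend (γ.comp (ContinuousMap.mulLeft s)) τ = pathExtend γ (s * τ) :=
  (Set.IccExtend_of_mem zero_le_one _ hτ).trans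
    (Set.IccExtend_of_mem zero_le_one γ (s * (⟨τ, hτ⟩ : I)).2).symm

variable [NormedSpace ℝ F]

lemma averageCLM_comp_mulLeft (s : I) (γ : C(I, F)) :
    averageCLM F (γ.comp (ContinuousMap.mulLeft s)) =
      (averageCLM F γ).comp (ContinuousMap.mulLeft s) := by
  ext τ
  rw [ContinuousMap.comp_apply, ContinuousMap.coe_mulLeft, averageCLM_apply, averageCLM_apply]
  refine intervalIntegral.integral_congr fun θ hθ => ?_
  rw [Set.uIcc_of_le zero_le_one] at hθ
  have hτθ : (τ : ℝ) * θ ∈ Set.Icc (0 : ℝ) 1 := (τ * ⟨θ, hθ⟩ : I).2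
  simp only [pathExtend_comp_mulLeft s γ hτθ, Set.Icc.coe_mul, mul_assoc]

lemma smul_volterraCLM_comp_mulLeft (s : I) (γ : C(I, F)) (τ : I) :
    (s : ℝ) • volterraCLM F (γ.comp (ContinuousMap.mulLeft s)) τ = volterraCLM F γ (s * τ) := by
  rw [volterraCLM_eq_smul, volterraCLM_eq_smul, averageCLM_comp_mulLeft, smul_smul,
    Set.Icc.coe_mul]
  rfl

lemma hasDerivAt_integral_pathExtend [CompleteSpace F] (γ : C(I, F)) :
    HasDerivAt (fun s : ℝ => ∫ τ in (0 : ℝ)..s, pathExtend γ τ) (γ 1) 1 := by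
  have h := ((continuous_pathExtend γ).integral_hasStrictDerivAt 0 1).hasDerivAt
  rwa [pathExtend, Set.IccExtend_right] at h

end PathScaling

section BriotBouquet

lemma contDiff_continuousMap_prodMk {K E F G : Type*} [TopologicalSpace K] [CompactSpace K]
    [NormedAddCommGroup E] [NormedSpace ℝ E] [NormedAddCommGroup F] [NormedSpace ℝ F]
    [NormedAddCommGroup G] [NormedSpace ℝ G] {γ : G → C(K, E)} {η : G → C(K, F)}
    (hγ : ContDiff ℝ ∞ γ) (hη : ContDiff ℝ ∞ η) : ContDiff ℝ ∞ fun z => (γ z).prodMk (η z) := by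
  have h : (fun z => (γ z).prodMk (η z)) = fun z =>
      (ContinuousLinearMap.inl ℝ E F).compLeftContinuous ℝ K (γ z) +
        (ContinuousLinearMap.inr ℝ E F).compLeftContinuous ℝ K (η z) := by
    ext z s <;> simp
  rw [h]
  exact ((ContinuousLinearMap.contDiff _).comp hγ).add ((ContinuousLinearMap.contDiff _).comp hη)

/-- The path `s ↦ (v s, y + v ∫₀ˢ π, π s)`, where `z = ((v, y), π)`: the segment of the curve
`p = p(v)`, `x = x(v)`, `x' = p`, `x(0) = y`, that lies over `[0, v]`, where `p(v s) = π s`. -/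
noncomputable def leafPath (z : (ℝ × ℝ) × C(I, ℝ)) : C(I, ℝ × ℝ × ℝ) :=
  (z.1.1 • (⟨Subtype.val, continuous_subtype_val⟩ : C(I, ℝ))).prodMk
    ((constCLM I ℝ z.1.2 + z.1.1 • volterraCLM ℝ z.2).prodMk z.2)

lemma leafPath_apply (z : (ℝ × ℝ) × C(I, ℝ)) (s : I) :
    leafPath z s = (z.1.1 * s, z.1.2 + z.1.1 * volterraCLM ℝ z.2 s, z.2 s) := rfl

lemma contDiff_leafPath : ContDiff ℝ ∞ leafPath :=
  contDiff_continuousMap_prodMk (contDiff_fst.fst.smul contDiff_const)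
    (contDiff_continuousMap_prodMk
      (((constCLM I ℝ).contDiff.comp contDiff_fst.snd).add
        (contDiff_fst.fst.smul ((volterraCLM ℝ).contDiff.comp contDiff_snd))) contDiff_snd)

/-- The operator `π ↦ (s ↦ ∫₀¹ g (v s τ, x(v s τ), π(s τ)) dτ)` for the leaf `x` of slope `π`. Its
fixed points are the solutions of the Briot–Bouquet equation `v p' = g (v, x, p) - p`, `x' = p`. -/
noncomputable def leafOperator (g : C(ℝ × ℝ × ℝ, ℝ)) (z : (ℝ × ℝ) × C(I, ℝ)) : C(I, ℝ) :=
  averageCLM ℝ (g.comp (leafPath z))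

variable {g : C(ℝ × ℝ × ℝ, ℝ)}

lemma contDiff_leafOperator (hg : ContDiff ℝ ∞ g) : ContDiff ℝ ∞ (leafOperator g) :=
  (averageCLM ℝ).contDiff.comp ((contDiff_infty_continuousMap_comp g hg).comp contDiff_leafPath)

lemma leafOperator_zero (hg0 : g 0 = 0) : leafOperator g 0 = 0 := by
  have h : g.comp (leafPath 0) = 0 := by
    ext s
    have hs : leafPath 0 s = 0 := by simp [leafPath_apply]
    rw [ContinuousMap.comp_apply, hs, hg0, ContinuousMap.zero_apply]
  rw [leafOperator, h, map_zero]

lemma hasFDerivAt_leafOperator_zero (hg : ContDiff ℝ ∞ g) (hgp : fderiv ℝ g 0 (0, 0, 1) = 0) :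
    HasFDerivAt (fun π => leafOperator g (0, π)) (0 : C(I, ℝ) →L[ℝ] C(I, ℝ)) 0 := by
  let L : C(I, ℝ) →L[ℝ] C(I, ℝ × ℝ × ℝ) := ((ContinuousLinearMap.inr ℝ ℝ (ℝ × ℝ)).comp
    (ContinuousLinearMap.inr ℝ ℝ ℝ)).compLeftContinuous ℝ I
  let g' : C(ℝ × ℝ × ℝ, ℝ × ℝ × ℝ →L[ℝ] ℝ) := ⟨fderiv ℝ g, hg.continuous_fderiv (by simp)⟩
  have hleaf (π : C(I, ℝ)) : leafOperator g (0, π) = averageCLM ℝ (g.comp (L π)) := by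
    rw [leafOperator]
    congr 2
    ext s <;> simp [leafPath_apply, L]
  have hcomp : HasFDerivAt (fun γ : C(I, ℝ × ℝ × ℝ) => g.comp γ) (pointwiseApply (g'.comp (L 0)))
      (L 0) :=
    hasFDerivAt_continuousMap_comp (fun x => (hg.differentiable (by simp) x).hasFDerivAt) (L 0)
  have hzero : (pointwiseApply (g'.comp (L 0))).comp L = 0 := by
    ext π s
    have hLs : L π s = π s • ((0, 0, 1) : ℝ × ℝ × ℝ) := by simp [L]
    simp only [ContinuousLinearMap.comp_apply, pointwiseApply_apply, hLs, map_smul]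
    simp [g', hgp]
  simp only [hleaf]
  refine ((averageCLM ℝ).hasFDerivAt.comp 0 (hcomp.comp 0 L.hasFDerivAt)).congr_fderiv ?_
  rw [hzero, ContinuousLinearMap.comp_zero]

lemma leafOperator_comp_mulLeft (s : I) (u : ℝ × ℝ) (π : C(I, ℝ)) :
    leafOperator g ((s * u.1, u.2), π.comp (ContinuousMap.mulLeft s)) =
      (leafOperator g (u, π)).comp (ContinuousMap.mulLeft s) := by
  rw [leafOperator, leafOperator, ← averageCLM_comp_mulLeft, ContinuousMap.comp_assoc]
  congr 2
  ext1 τ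
  have hscale := smul_volterraCLM_comp_mulLeft s π τ
  rw [smul_eq_mul] at hscale
  simp only [ContinuousMap.comp_apply, leafPath_apply, ContinuousMap.coe_mulLeft,
    Set.Icc.coe_mul, ← hscale]
  refine Prod.ext ?_ (Prod.ext ?_ rfl) <;> ring

/- By uniqueness of the fixed point, the leaf through `y` over `[0, s v]` is the restriction of the
one over `[0, v]`. -/
lemma exists_leafFamily (hg : ContDiff ℝ ∞ g) (hg0 : g 0 = 0) (hgp : fderiv ℝ g 0 (0, 0, 1) = 0) :
    ∃ S : ℝ × ℝ → C(I, ℝ), S 0 = 0 ∧ (∀ᶠ u in 𝓝 0, ContDiffAt ℝ ∞ S u) ∧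
      (∀ᶠ u in 𝓝 0, leafOperator g (u, S u) = S u) ∧
      ∀ᶠ u in 𝓝 0, ∀ s : I, S (s * u.1, u.2) = (S u).comp (ContinuousMap.mulLeft s) := by
  obtain ⟨S, hS0, hS, hfix, hunique⟩ := exists_smooth_fixedPoint (contDiff_leafOperator hg)
    (leafOperator_zero hg0) (hasFDerivAt_leafOperator_zero hg hgp)
  obtain ⟨ε, hε, hball⟩ := Metric.eventually_nhds_iff_ball.1 hunique
  have hSball : ∀ᶠ u in 𝓝 0, ‖S u‖ < ε :=
    hS.self_of_nhds.continuousAt.norm.eventually_lt_const (by simpa [hS0] using hε)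
  refine ⟨S, hS0, hS, hfix, ?_⟩
  filter_upwards [hfix, hSball, Metric.ball_mem_nhds 0 hε] with u hu hSu hu_ball s
  refine hball ((s * u.1, u.2), (S u).comp (ContinuousMap.mulLeft s)) ?_ ?_
  · rw [mem_ball_zero_iff, Prod.norm_def, max_lt_iff] at hu_ball
    simp only [mem_ball_zero_iff, Prod.norm_def, max_lt_iff]
    refine ⟨⟨?_, hu_ball.2⟩, (norm_comp_mulLeft_le s (S u)).trans_lt hSu⟩
    rw [norm_mul, Real.norm_of_nonneg s.2.1]
    exact (mul_le_of_le_one_left (norm_nonneg _) s.2.2).trans_lt hu_ball.1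
  · rw [leafOperator_comp_mulLeft, hu]

end BriotBouquet

section LeafFunctions

variable {f : ℝ × ℝ → ℝ} {u : ℝ × ℝ}

lemma fst_mul_d1_eq_of_hasDerivAt (hf : DifferentiableAt ℝ f u) {φ : ℝ → ℝ} {c : ℝ}
    (hφ : HasDerivAt φ c 1) (hfφ : ∀ s ∈ Set.Ioc (0 : ℝ) 1, f (s * u.1, u.2) = φ s) :
    u.1 * d1 f u = c := by
  have hline : HasDerivAt (fun s : ℝ => (s * u.1, u.2)) (u.1, 0) 1 := by
    simpa using ((hasDerivAt_id (1 : ℝ)).mul_const u.1).prodMk (hasDerivAt_const (1 : ℝ) u.2)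
  have hcomp : HasDerivAt (fun s : ℝ => f (s * u.1, u.2)) (u.1 * d1 f u) 1 := by
    refine (HasFDerivAt.comp_hasDerivAt 1 (by simpa using hf.hasFDerivAt) hline).congr_deriv ?_
    rw [fderiv_apply_eq_d1_add_d2, zero_mul, add_zero]
  have hφf : HasDerivWithinAt (fun s : ℝ => f (s * u.1, u.2)) c (Set.Ioc 0 1) 1 :=
    hφ.hasDerivWithinAt.congr hfφ (hfφ 1 (by simp))
  exact (uniqueDiffOn_Ioc 0 1 1 (by simp)).eq_deriv _ hcomp.hasDerivWithinAt hφf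

variable {g : C(ℝ × ℝ × ℝ, ℝ)} {S : ℝ × ℝ → C(I, ℝ)}

lemma fst_mul_d1_leafPosition
    (hscale : ∀ s : I, S (s * u.1, u.2) = (S u).comp (ContinuousMap.mulLeft s))
    (hX : DifferentiableAt ℝ (fun u => u.2 + u.1 * volterraCLM ℝ (S u) 1) u) :
    u.1 * d1 (fun u => u.2 + u.1 * volterraCLM ℝ (S u) 1) u = u.1 * S u 1 := by
  refine fst_mul_d1_eq_of_hasDerivAt hX
    (((hasDerivAt_integral_pathExtend (S u)).const_mul u.1).const_add u.2) fun s hs => ?_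
  let t : I := ⟨s, hs.1.le, hs.2⟩
  have ht : S (s * u.1, u.2) = (S u).comp (ContinuousMap.mulLeft t) := hscale t
  have hvolterra : s * volterraCLM ℝ (S (s * u.1, u.2)) 1 = volterraCLM ℝ (S u) t := by
    rw [ht, ← smul_eq_mul, smul_volterraCLM_comp_mulLeft t (S u) 1, mul_one]
  rw [← volterraCLM_apply (S u) t, ← hvolterra]
  ring

lemma fst_mul_d1_leafSlope
    (hscale : ∀ s : I, S (s * u.1, u.2) = (S u).comp (ContinuousMap.mulLeft s))
    (hfix : leafOperator g (u, S u) = S u) (hQ : DifferentiableAt ℝ (fun u => S u 1) u) :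
    u.1 * d1 (fun u => S u 1) u =
      g (u.1, u.2 + u.1 * volterraCLM ℝ (S u) 1, S u 1) - S u 1 := by
  let γ : C(I, ℝ) := g.comp (leafPath (u, S u))
  have hγ (s : I) : s * S u s = ∫ τ in (0 : ℝ)..s, pathExtend γ τ := by
    rw [← smul_averageCLM, smul_eq_mul]
    exact congrArg (fun π : C(I, ℝ) => s * π s) hfix.symm
  have hγ1 : γ 1 = g (u.1, u.2 + u.1 * volterraCLM ℝ (S u) 1, S u 1) := by
    simp [γ, leafPath_apply]
  have hderiv : HasDerivAt (fun s : ℝ => s⁻¹ * ∫ τ in (0 : ℝ)..s, pathExtend γ τ)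
      (γ 1 - S u 1) 1 := by
    have hint : ∫ τ in (0 : ℝ)..1, pathExtend γ τ = S u 1 := by simpa using (hγ 1).symm
    refine ((hasDerivAt_inv one_ne_zero).mul (hasDerivAt_integral_pathExtend γ)).congr_deriv ?_
    rw [hint]
    ring
  rw [← hγ1]
  refine fst_mul_d1_eq_of_hasDerivAt hQ hderiv fun s hs => ?_
  let t : I := ⟨s, hs.1.le, hs.2⟩
  have ht1 : S (s * u.1, u.2) 1 = S u t := by
    rw [hscale t]
    simp
  rw [ht1, ← hγ t, inv_mul_cancel_left₀ hs.1.ne']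

lemma exists_contDiff_eventuallyEq {E : Type*} [NormedAddCommGroup E] [NormedSpace ℝ E]
    [FiniteDimensional ℝ E] {f : E → ℝ} {a : E} (hf : ∀ᶠ z in 𝓝 a, ContDiffAt ℝ ∞ f z) :
    ∃ g : E → ℝ, ContDiff ℝ ∞ g ∧ g =ᶠ[𝓝 a] f := by
  obtain ⟨ψ, -, -, hψ1, -, hψf⟩ := exists_contDiff_cutoff_mul hf univ_mem
  exact ⟨_, hψf, hψ1.mono fun z hz => by simp [hz]⟩

/- The solutions `x(v)` of the Briot–Bouquet equation `v x'' = g (v, x, x') - x'`, parametrized by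
`x(0) = y`, depend smoothly on `(v, y)`: they are `x = X (v, y)`, with slope `x' = Q (v, y)`. -/
theorem exists_leafFunctions (hg : ContDiff ℝ ∞ g) (hg0 : g 0 = 0)
    (hgp : fderiv ℝ g 0 (0, 0, 1) = 0) :
    ∃ X Q : ℝ × ℝ → ℝ, ContDiff ℝ ∞ X ∧ ContDiff ℝ ∞ Q ∧ Q 0 = 0 ∧
      (∀ᶠ y in 𝓝 (0 : ℝ), X (0, y) = y) ∧
      (∀ᶠ u in 𝓝 (0 : ℝ × ℝ), u.1 * d1 X u = u.1 * Q u) ∧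
      ∀ᶠ u in 𝓝 (0 : ℝ × ℝ), u.1 * d1 Q u = g (u.1, X u, Q u) - Q u := by
  obtain ⟨S, hS0, hS, hfix, hscale⟩ := exists_leafFamily hg hg0 hgp
  have hQS : ∀ᶠ u in 𝓝 0, ContDiffAt ℝ ∞ (fun u => S u 1) u := by
    filter_upwards [hS] with u hu
    exact (ContinuousMap.evalCLM ℝ (1 : I)).contDiff.contDiffAt.comp u hu
  have hXS : ∀ᶠ u in 𝓝 0, ContDiffAt ℝ ∞ (fun u => u.2 + u.1 * volterraCLM ℝ (S u) 1) u := by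
    filter_upwards [hS] with u hu
    exact contDiffAt_snd.add (contDiffAt_fst.mul
      (((ContinuousMap.evalCLM ℝ (1 : I)).comp (volterraCLM ℝ)).contDiff.contDiffAt.comp u hu))
  obtain ⟨X, hX, hXeq⟩ := exists_contDiff_eventuallyEq hXS
  obtain ⟨Q, hQ, hQeq⟩ := exists_contDiff_eventuallyEq hQS
  refine ⟨X, Q, hX, hQ, by simp [hQeq.self_of_nhds, hS0], ?_, ?_, ?_⟩
  · have hy : Tendsto (fun y : ℝ => ((0 : ℝ), y)) (𝓝 0) (𝓝 0) :=
      (by fun_prop : Continuous fun y : ℝ => ((0 : ℝ), y)).tendsto' _ _ rfl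
    filter_upwards [hy.eventually hXeq] with y hXy
    simp [hXy]
  · filter_upwards [hXeq.eventuallyEq_nhds, hQeq, hXS, hscale] with u hXu hQu hXSu hscale_u
    rw [d1, hXu.fderiv_eq, hQu]
    exact fst_mul_d1_leafPosition hscale_u (hXSu.differentiableAt (by simp))
  · filter_upwards [hXeq, hQeq.eventuallyEq_nhds, hQS, hfix, hscale]
      with u hXu hQu hQSu hfix_u hscale_u
    rw [d1, hQu.fderiv_eq, hQu.eq_of_nhds, hXu]
    exact fst_mul_d1_leafSlope hscale_u hfix_u (hQSu.differentiableAt (by simp))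

end LeafFunctions

section Derivative

variable {h : ℝ × ℝ → ℝ} {q : ℝ × ℝ}

lemma contDiffAt_d1 (hh : ContDiffAt ℝ ∞ h q) : ContDiffAt ℝ ∞ (d1 h) q :=
  (hh.fderiv_right (m := ∞) (by simp)).clm_apply contDiffAt_const

lemma contDiffAt_d2 (hh : ContDiffAt ℝ ∞ h q) : ContDiffAt ℝ ∞ (d2 h) q :=
  (hh.fderiv_right (m := ∞) (by simp)).clm_apply contDiffAt_const

end Derivative

section Straightening

/-- The projection `(v, x, p) ↦ (v, x)`. -/
def dropLast : ℝ × ℝ × ℝ →L[ℝ] ℝ × ℝ :=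
  (ContinuousLinearMap.fst ℝ ℝ (ℝ × ℝ)).prod
    ((ContinuousLinearMap.fst ℝ ℝ ℝ).comp (ContinuousLinearMap.snd ℝ ℝ (ℝ × ℝ)))

lemma dropLast_apply (z : ℝ × ℝ × ℝ) : dropLast z = (z.1, z.2.1) := rfl

lemma contDiffAt_comp_dropLast {h : ℝ × ℝ → ℝ} {z : ℝ × ℝ × ℝ}
    (hh : ContDiffAt ℝ ∞ h (dropLast z)) : ContDiffAt ℝ ∞ (fun z => h (dropLast z)) z :=
  hh.comp z dropLast.contDiff.contDiffAt

lemma fderiv_comp_dropLast_apply {h : ℝ × ℝ → ℝ} {z : ℝ × ℝ × ℝ}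
    (hh : DifferentiableAt ℝ h (dropLast z)) (w : ℝ × ℝ × ℝ) :
    fderiv ℝ (fun z => h (dropLast z)) z w =
      w.1 * d1 h (dropLast z) + w.2.1 * d2 h (dropLast z) := by
  rw [fderiv_comp_clm_apply dropLast hh, fderiv_apply_eq_d1_add_d2]
  rfl

lemma fderiv_snd_snd_eq_of_sub_eq_mul {h A : ℝ × ℝ × ℝ → ℝ} (hh : Differentiable ℝ h)
    (hA : Differentiable ℝ A) (hhA : ∀ z, h z - h (z.1, z.2.1, 0) = z.2.2 * A z) (v x : ℝ) :
    fderiv ℝ h (v, x, 0) (0, 0, 1) = A (v, x, 0) := by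
  let π : ℝ × ℝ × ℝ →L[ℝ] ℝ × ℝ × ℝ := (ContinuousLinearMap.fst ℝ ℝ (ℝ × ℝ)).prod
    (((ContinuousLinearMap.fst ℝ ℝ ℝ).comp (ContinuousLinearMap.snd ℝ ℝ (ℝ × ℝ))).prod 0)
  have hsplit : h = fun z => h (π z) + z.2.2 * A z := funext fun z => by
    rw [← hhA]
    exact (add_sub_cancel _ _).symm
  have hhπ : Differentiable ℝ fun z => h (π z) := hh.comp π.differentiable
  rw [hsplit, fderiv_fun_add_apply (hhπ _) (by fun_prop),
    fderiv_comp_clm_apply π (hh _), fderiv_fun_mul_apply (by fun_prop) (hA _),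
    fderiv_snd_snd_apply]
  have hπ : π (0, 0, 1) = 0 := rfl
  simp [hπ]

/-- The coordinates `(v, y, p)` in which the leaf `x = X (v, y)`, with slope `x' = Q (v, y)`, is the
line `y = const`, `p = 0`. The derivative of `X` in `y` scales the last coordinate, so that
`x' = v p` keeps its form. -/
noncomputable def leafChart (X Q : ℝ × ℝ → ℝ) (z : ℝ × ℝ × ℝ) : ℝ × ℝ × ℝ :=
  (z.1, X (dropLast z), Q (dropLast z) + d2 X (dropLast z) * z.2.2)

variable {X Q : ℝ × ℝ → ℝ} {m A : ℝ × ℝ × ℝ → ℝ}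

lemma contDiff_leafChart (hX : ContDiff ℝ ∞ X) (hQ : ContDiff ℝ ∞ Q) :
    ContDiff ℝ ∞ (leafChart X Q) := by
  have hY : ContDiff ℝ ∞ (d2 X) := contDiff_fderiv_apply hX contDiff_const
  exact contDiff_fst.prodMk ((hX.comp dropLast.contDiff).prodMk
    ((hQ.comp dropLast.contDiff).add ((hY.comp dropLast.contDiff).mul contDiff_snd.snd)))

lemma fderiv_leafChart_apply (hX : ContDiff ℝ ∞ X) (hQ : ContDiff ℝ ∞ Q) (z w : ℝ × ℝ × ℝ) :
    fderiv ℝ (leafChart X Q) z w =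
      (w.1, w.1 * d1 X (dropLast z) + w.2.1 * d2 X (dropLast z),
        w.1 * d1 Q (dropLast z) + w.2.1 * d2 Q (dropLast z) + (d2 X (dropLast z) * w.2.2 +
          z.2.2 * (w.1 * d1 (d2 X) (dropLast z) + w.2.1 * d2 (d2 X) (dropLast z)))) := by
  have hd {h : ℝ × ℝ → ℝ} (hh : ContDiff ℝ ∞ h) (u : ℝ × ℝ) : DifferentiableAt ℝ h u :=
    hh.differentiable (by simp) u
  have hd' {h : ℝ × ℝ → ℝ} (hh : ContDiff ℝ ∞ h) : DifferentiableAt ℝ (fun z => h (dropLast z)) z :=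
    (hd hh _).comp z dropLast.differentiableAt
  have hY : ContDiff ℝ ∞ (d2 X) := contDiff_fderiv_apply hX contDiff_const
  have hmul : DifferentiableAt ℝ (fun z : ℝ × ℝ × ℝ => d2 X (dropLast z) * z.2.2) z :=
    (hd' hY).fun_mul (by fun_prop)
  unfold leafChart
  rw [fderiv_triple_apply differentiableAt_fst (hd' hX) ((hd' hQ).fun_add hmul), fderiv_fst,
    fderiv_comp_dropLast_apply (hd hX _), fderiv_fun_add_apply (hd' hQ) hmul,
    fderiv_comp_dropLast_apply (hd hQ _), fderiv_fun_mul_apply (hd' hY) (by fun_prop),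
    fderiv_snd_snd_apply, fderiv_comp_dropLast_apply (hd hY _)]
  rfl

lemma injective_fderiv_leafChart (hX : ContDiff ℝ ∞ X) (hQ : ContDiff ℝ ∞ Q) (hX0 : d2 X 0 ≠ 0) :
    Function.Injective (fderiv ℝ (leafChart X Q) 0) := by
  refine (injective_iff_map_eq_zero _).2 fun w hw => ?_
  rw [fderiv_leafChart_apply hX hQ, map_zero] at hw
  have hw1 : w.1 = 0 := congrArg Prod.fst hw
  have hw2 : w.2.1 = 0 := by simpa [hw1, hX0] using congrArg (fun z => z.2.1) hw
  have hw3 : w.2.2 = 0 := by simpa [hw1, hw2, hX0] using congrArg (fun z => z.2.2) hw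
  exact Prod.ext hw1 (Prod.ext hw2 hw3)

/-- The function `r` for which `saddleField r` is, in the chart `leafChart X Q`, the field
`(v, v p, m)`; here `m (v, X, Q + X_y p) = m (v, X, Q) + p A`. -/
noncomputable def leafResidue (X Q : ℝ × ℝ → ℝ) (A : ℝ × ℝ × ℝ → ℝ) (z : ℝ × ℝ × ℝ) : ℝ :=
  1 + (A z - z.1 * (d2 Q (dropLast z) + d1 (d2 X) (dropLast z) +
    z.2.2 * d2 (d2 X) (dropLast z))) / d2 X (dropLast z)

lemma contDiffAt_leafResidue (hX : ContDiff ℝ ∞ X) (hQ : ContDiff ℝ ∞ Q) (hA : ContDiff ℝ ∞ A)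
    {z : ℝ × ℝ × ℝ} (hXz : d2 X (dropLast z) ≠ 0) : ContDiffAt ℝ ∞ (leafResidue X Q A) z := by
  have hY := contDiffAt_d2 (q := dropLast z) hX.contDiffAt
  have hQy := contDiffAt_comp_dropLast (contDiffAt_d2 (q := dropLast z) hQ.contDiffAt)
  have hYv := contDiffAt_comp_dropLast (contDiffAt_d1 hY)
  have hYy := contDiffAt_comp_dropLast (contDiffAt_d2 hY)
  exact contDiffAt_const.add ((hA.contDiffAt.sub (contDiffAt_fst.mul
    ((hQy.add hYv).add (contDiffAt_snd.snd.mul hYy)))).div (contDiffAt_comp_dropLast hY) hXz)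

lemma fderiv_leafChart_saddleField (hX : ContDiff ℝ ∞ X) (hQ : ContDiff ℝ ∞ Q)
    {r : ℝ × ℝ × ℝ → ℝ} {z : ℝ × ℝ × ℝ} (hXz : d2 X (dropLast z) ≠ 0)
    (hXQ : z.1 * d1 X (dropLast z) = z.1 * Q (dropLast z))
    (hQm : z.1 * d1 Q (dropLast z) = m (leafChart X Q (z.1, z.2.1, 0)))
    (hA : m (leafChart X Q z) - m (leafChart X Q (z.1, z.2.1, 0)) = z.2.2 * A z)
    (hr : r z = leafResidue X Q A z) :
    fderiv ℝ (leafChart X Q) z (saddleField r z) =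
      ((leafChart X Q z).1, (leafChart X Q z).1 * (leafChart X Q z).2.2, m (leafChart X Q z)) := by
  have hres : d2 X (dropLast z) * (1 - r z) = z.1 * (d2 Q (dropLast z) + d1 (d2 X) (dropLast z) +
      z.2.2 * d2 (d2 X) (dropLast z)) - A z := by
    rw [hr, leafResidue]
    field_simp
    ring
  rw [fderiv_leafChart_apply hX hQ]
  refine Prod.ext rfl (Prod.ext ?_ ?_)
  · simp only [saddleField, leafChart]
    linear_combination hXQ
  · simp only [saddleField]
    linear_combination hQm - hA - z.2.2 * hres

lemma eq_d2_mul_fderiv_of_sub_eq_mul (hX : ContDiff ℝ ∞ X) (hQ : ContDiff ℝ ∞ Q)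
    (hm : ContDiff ℝ ∞ m) (hA : ContDiff ℝ ∞ A)
    (hmA : ∀ z, m (leafChart X Q z) - m (leafChart X Q (z.1, z.2.1, 0)) = z.2.2 * A z) (v y : ℝ) :
    A (v, y, 0) = d2 X (v, y) * fderiv ℝ m (leafChart X Q (v, y, 0)) (0, 0, 1) := by
  have hchart := (contDiff_leafChart hX hQ).differentiable (by simp)
  have hm' := hm.differentiable (by simp)
  have hcol : fderiv ℝ (leafChart X Q) (v, y, 0) (0, 0, 1) = d2 X (v, y) • (0, 0, 1) := by
    simp [fderiv_leafChart_apply hX hQ, dropLast_apply]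
  rw [← fderiv_snd_snd_eq_of_sub_eq_mul (hm'.comp hchart) (hA.differentiable (by simp)) hmA v y,
    fderiv_comp _ (hm' _) (hchart _), ContinuousLinearMap.comp_apply, hcol, map_smul, smul_eq_mul]

lemma exists_contDiff_cutoff_of_vanishing {ρ : ℝ × ℝ × ℝ → ℝ}
    (hρ : ∀ᶠ z in 𝓝 0, ContDiffAt ℝ ∞ ρ z)
    (hρ0 : ∀ᶠ z : ℝ × ℝ × ℝ in 𝓝 0, z.1 = 0 → z.2.2 = 0 → ρ z = 0) {ε : ℝ} (hε : 0 < ε) :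
    ∃ r : ℝ × ℝ × ℝ → ℝ, ContDiff ℝ ∞ r ∧ HasCompactSupport r ∧ (∀ z, r z ≤ ε) ∧
      (∀ x, r (0, x, 0) = 0) ∧ r =ᶠ[𝓝 0] ρ := by
  have hρε : ∀ᶠ z in 𝓝 0, ρ z ≤ ε := by
    have hρ00 : ρ 0 < ε := by rwa [hρ0.self_of_nhds rfl rfl]
    exact (hρ.self_of_nhds.continuousAt.eventually_lt_const hρ00).mono fun z => le_of_lt
  obtain ⟨ψ, hψc, hψs, hψ1, hψI, hψρ⟩ := exists_contDiff_cutoff_mul hρ (inter_mem hρ0 hρε)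
  refine ⟨_, hψρ, hψc.mul_right, fun z => ?_, fun x => ?_, hψ1.mono fun z hz => by simp [hz]⟩
  · by_cases hz : z ∈ tsupport ψ
    · have hρz : ρ z ≤ ε := (hψs hz).2
      calc ψ z * ρ z ≤ ψ z * ε := mul_le_mul_of_nonneg_left hρz (hψI z).1
        _ ≤ ε := mul_le_of_le_one_left hε.le (hψI z).2
    · simpa [image_eq_zero_of_notMem_tsupport hz] using hε.le
  · by_cases hz : (0, x, 0) ∈ tsupport ψ
    · rw [show ρ (0, x, 0) = 0 from (hψs hz).1 rfl rfl, mul_zero]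
    · rw [image_eq_zero_of_notMem_tsupport hz, zero_mul]

lemma d2_eq_one_of_eventuallyEq (hX : DifferentiableAt ℝ X 0)
    (hX0 : ∀ᶠ y in 𝓝 (0 : ℝ), X (0, y) = y) : d2 X 0 = 1 := by
  have hline : HasDerivAt (fun y : ℝ => ((0 : ℝ), y)) (0, 1) 0 :=
    (hasDerivAt_const _ _).prodMk (hasDerivAt_id _)
  have hXline : HasDerivAt (fun y : ℝ => X (0, y)) (d2 X 0) 0 :=
    HasFDerivAt.comp_hasDerivAt 0 hX.hasFDerivAt hline
  exact hXline.unique ((hasDerivAt_id (0 : ℝ)).congr_of_eventuallyEq hX0)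

lemma leafResidue_eq_zero {y : ℝ} (hXy : d2 X (0, y) ≠ 0) (hA : A (0, y, 0) = -d2 X (0, y)) :
    leafResidue X Q A (0, y, 0) = 0 := by
  simp only [leafResidue, dropLast_apply, hA]
  field_simp
  ring

lemma exists_leafChart (hm : ContDiff ℝ ∞ m) (hm0 : m 0 = 0)
    (hmp : fderiv ℝ m 0 (0, 0, 1) = -1) :
    ∃ X Q : ℝ × ℝ → ℝ, ContDiff ℝ ∞ X ∧ ContDiff ℝ ∞ Q ∧ leafChart X Q 0 = 0 ∧ d2 X 0 = 1 ∧
      ∀ᶠ z : ℝ × ℝ × ℝ in 𝓝 0, z.1 * d1 X (dropLast z) = z.1 * Q (dropLast z) ∧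
        z.1 * d1 Q (dropLast z) = m (leafChart X Q (z.1, z.2.1, 0)) := by
  let g : C(ℝ × ℝ × ℝ, ℝ) := ⟨fun z => m z + z.2.2, by fun_prop⟩
  have hg : ContDiff ℝ ∞ g := hm.add contDiff_snd.snd
  have hgp : fderiv ℝ g 0 (0, 0, 1) = 0 := by
    rw [ContinuousMap.coe_mk, fderiv_fun_add_apply (hm.differentiable (by simp) 0) (by fun_prop),
      hmp, fderiv_snd_snd_apply, neg_add_cancel]
  obtain ⟨X, Q, hX, hQ, hQ0, hXy, hXQ, hQg⟩ := exists_leafFunctions hg (by simp [g, hm0]) hgp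
  have hX0 : X 0 = 0 := hXy.self_of_nhds
  have hdrop : Tendsto dropLast (𝓝 0) (𝓝 0) := dropLast.continuous.tendsto' _ _ (map_zero _)
  refine ⟨X, Q, hX, hQ, by simp [leafChart, hX0, hQ0],
    d2_eq_one_of_eventuallyEq (hX.differentiable (by simp) 0) hXy, ?_⟩
  filter_upwards [hdrop.eventually hXQ, hdrop.eventually hQg] with z hXQz hQz
  refine ⟨hXQz, hQz.trans ?_⟩
  simp [g, leafChart, dropLast_apply]

theorem exists_isGermConj_saddleField (hm : ContDiff ℝ ∞ m) (hm0 : m 0 = 0)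
    (hmp : ∀ᶠ z : ℝ × ℝ × ℝ in 𝓝 0, z.1 = 0 → m z = 0 → fderiv ℝ m z (0, 0, 1) = -1) :
    ∃ r Φ, ContDiff ℝ ∞ r ∧ HasCompactSupport r ∧ (∀ z, r z ≤ 1 / 2) ∧ (∀ x, r (0, x, 0) = 0) ∧
      IsGermConj Φ (saddleField r) (fun z => (z.1, z.1 * z.2.2, m z)) 0 0 := by
  obtain ⟨X, Q, hX, hQ, hchart0, hX0, hleaf⟩ := exists_leafChart hm hm0 (hmp.self_of_nhds rfl hm0)
  have hchart := contDiff_leafChart hX hQ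
  obtain ⟨A, hA, hmA⟩ := exists_contDiff_sub_eq_snd_snd_mul (hm.comp hchart)
  have hXne : ∀ᶠ z in 𝓝 0, d2 X (dropLast z) ≠ 0 := by
    have hcont : ContinuousAt (fun z => d2 X (dropLast z)) 0 :=
      ((contDiff_fderiv_apply hX contDiff_const).comp dropLast.contDiff).continuous.continuousAt
    exact hcont.eventually_ne (by simp [hX0])
  have hres0 : ∀ᶠ z : ℝ × ℝ × ℝ in 𝓝 0, z.1 = 0 → z.2.2 = 0 → leafResidue X Q A z = 0 := by
    have hchart_tendsto : Tendsto (leafChart X Q) (𝓝 0) (𝓝 0) :=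
      hchart.continuous.tendsto' _ _ hchart0
    filter_upwards [hXne, hleaf, hchart_tendsto.eventually hmp]
    rintro ⟨v, y, p⟩ hXz ⟨-, hQm⟩ hmpz rfl rfl
    refine leafResidue_eq_zero hXz ?_
    rw [eq_d2_mul_fderiv_of_sub_eq_mul hX hQ hm hA hmA, hmpz rfl (by simpa using hQm.symm),
      mul_neg_one]
  obtain ⟨r, hr, hrc, hr_le, hr0, hrA⟩ := exists_contDiff_cutoff_of_vanishing
    (hXne.mono fun z => contDiffAt_leafResidue hX hQ hA) hres0 (half_pos one_pos)
  refine ⟨r, leafChart X Q, hr, hrc, hr_le, hr0, hchart0,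
    Eventually.of_forall fun z => hchart.contDiffAt,
    injective_fderiv_leafChart hX hQ (by simp [hX0]), ?_⟩
  filter_upwards [hXne, hleaf, hrA] with z hXz ⟨hXQz, hQmz⟩ hrz
  exact fderiv_leafChart_saddleField hX hQ hXz hXQz hQmz (hmA z) hrz

theorem exists_isGermConj_modelField (hm : ∀ᶠ z in 𝓝 0, ContDiffAt ℝ ∞ m z) (hm0 : m 0 = 0)
    (hmp : ∀ᶠ z : ℝ × ℝ × ℝ in 𝓝 0, z.1 = 0 → m z = 0 → fderiv ℝ m z (0, 0, 1) = -1) :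
    ∃ Φ, IsGermConj Φ (fun z => (z.1, z.1 * z.2.2, m z)) modelField 0 0 := by
  obtain ⟨n, hn, hnm⟩ := exists_contDiff_eventuallyEq hm
  have hnp : ∀ᶠ z : ℝ × ℝ × ℝ in 𝓝 0, z.1 = 0 → n z = 0 → fderiv ℝ n z (0, 0, 1) = -1 := by
    filter_upwards [hnm.eventuallyEq_nhds, hmp] with z hnz hmz
    rwa [hnz.fderiv_eq, hnz.eq_of_nhds]
  obtain ⟨r, Ψ, hr, hrc, hr_le, hr0, hΨ⟩ := exists_isGermConj_saddleField hn
    (hnm.eq_of_nhds.trans hm0) hnp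
  obtain ⟨Ψ', hΨ'⟩ := hΨ.exists_symm
  obtain ⟨Φ, hΦ⟩ := exists_isGermConj_saddleField_modelField hr hrc (half_pos one_pos)
    (fun z => by linarith [hr_le z]) hr0
  refine ⟨_, (hΦ.comp hΨ').congr_left ?_⟩
  filter_upwards [hnm] with z hz
  rw [hz]

end Straightening

section Rectification

lemma fderiv_snd_snd_comp_apply {E : Type*} [NormedAddCommGroup E] [NormedSpace ℝ E]
    {N : E → ℝ × ℝ × ℝ} {y : E} (hN : DifferentiableAt ℝ N y) (w : E) :
    fderiv ℝ (fun y => (N y).2.2) y w = (fderiv ℝ N y w).2.2 :=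
  congrArg (· w) hN.hasFDerivAt.snd.snd.fderiv

/- At a zero of `W` the derivative of `N` is conjugate to that of `W`, so `w` being an eigenvector
with eigenvalue `-1` passes to the last coordinate vector. -/
theorem IsGermConj.exists_isGermConj_modelField {W N Θ : ℝ × ℝ × ℝ → ℝ × ℝ × ℝ}
    {a w : ℝ × ℝ × ℝ} (hΘ : IsGermConj Θ W N a 0) (hW : ∀ᶠ z in 𝓝 a, ContDiffAt ℝ ∞ W z)
    (hN : ∀ᶠ y in 𝓝 0, ContDiffAt ℝ ∞ N y) (hWa : W a = 0)
    (hform : ∀ᶠ y in 𝓝 0, N y = (y.1, y.1 * y.2.2, (N y).2.2)) (hw : w ≠ 0)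
    (hΘw : ∀ᶠ z in 𝓝 a, ∃ c : ℝ, fderiv ℝ Θ z w = c • (0, 0, 1))
    (hWw : ∀ᶠ z in 𝓝 a, W z = 0 → fderiv ℝ W z w = -w) :
    ∃ Φ, IsGermConj Φ W modelField a 0 := by
  have hN0 : N 0 = 0 := by
    have hconj := hΘ.conj.self_of_nhds
    rw [hWa, map_zero, hΘ.map_eq] at hconj
    exact hconj.symm
  have hNp : ∀ᶠ y : ℝ × ℝ × ℝ in 𝓝 0, y.1 = 0 → (N y).2.2 = 0 →
      fderiv ℝ (fun y => (N y).2.2) y (0, 0, 1) = -1 := by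
    rw [← hΘ.map_eq, ← map_nhds_eq_of_injective_fderiv hΘ.contDiffAt hΘ.injective, eventually_map]
    filter_upwards [hΘ.conj, hΘ.fderiv_fderiv_apply hW hN, hΘ.tendsto.eventually hform,
      hΘ.tendsto.eventually hN, eventually_injective_fderiv hΘ.contDiffAt hΘ.injective, hΘw, hWw]
      with z hconj hlin hformz hNz hinj ⟨c, hc⟩ hWwz hz1 hz2
    have hWz : W z = 0 := by
      refine hinj (?_ : fderiv ℝ Θ z (W z) = fderiv ℝ Θ z 0)
      rw [hconj, map_zero, hformz, hz1, hz2, zero_mul]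
      rfl
    have hc0 : c ≠ 0 := by
      rintro rfl
      exact hw (hinj (by rw [hc, map_zero, zero_smul]))
    have heigen : c • fderiv ℝ N (Θ z) (0, 0, 1) = c • -(0, 0, 1) := by
      rw [← map_smul, ← hc, hlin hWz, hWwz hWz, map_neg, hc, smul_neg]
    rw [fderiv_snd_snd_comp_apply (hNz.differentiableAt (by simp)),
      smul_right_injective _ hc0 heigen]
    rfl
  obtain ⟨Φ, hΦ⟩ := _root_.exists_isGermConj_modelField (hN.mono fun y hy => hy.snd.snd)
    (by simp [hN0]) hNp
  exact ⟨_, (hΦ.congr_left hform).comp hΘ⟩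

end Rectification

section GeodesicField

/-- The geodesic vector field `(Δ, p Δ, M / 2)` in the coordinates `(t, x, p)`. -/
noncomputable def geodesicField (Δ : ℝ × ℝ → ℝ) (M : ℝ × ℝ × ℝ → ℝ) (z : ℝ × ℝ × ℝ) :
    ℝ × ℝ × ℝ :=
  (Δ (z.1, z.2.1), z.2.2 * Δ (z.1, z.2.1), M z / 2)

/-- The derivative `Δ_t + p Δ_x` of `Δ` in the direction of slope `p`. -/
noncomputable def slopeDeriv (Δ : ℝ × ℝ → ℝ) (z : ℝ × ℝ × ℝ) : ℝ :=
  d1 Δ (dropLast z) + z.2.2 * d2 Δ (dropLast z)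

/-- The chart at `a = (t*, x*, p*)` that takes the geodesic field, divided by `k = Δ_t + p Δ_x`, to
the form `(v, v p, m)`; the last coordinate is `(p - p*) / k`. -/
noncomputable def rectifyingChart (Δ : ℝ × ℝ → ℝ) (a z : ℝ × ℝ × ℝ) : ℝ × ℝ × ℝ :=
  (Δ (dropLast z), z.2.1 - a.2.1 - a.2.2 * (z.1 - a.1), (z.2.2 - a.2.2) * (slopeDeriv Δ z)⁻¹)

variable {Δ : ℝ × ℝ → ℝ} {M : ℝ × ℝ × ℝ → ℝ} {a z : ℝ × ℝ × ℝ}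

lemma contDiffAt_geodesicField (hΔ : ContDiffAt ℝ ∞ Δ (dropLast z)) (hM : ContDiffAt ℝ ∞ M z) :
    ContDiffAt ℝ ∞ (geodesicField Δ M) z :=
  (contDiffAt_comp_dropLast hΔ).prodMk
    ((contDiffAt_snd.snd.mul (contDiffAt_comp_dropLast hΔ)).prodMk (hM.div_const 2))

lemma contDiffAt_slopeDeriv (hΔ : ContDiffAt ℝ ∞ Δ (dropLast z)) :
    ContDiffAt ℝ ∞ (slopeDeriv Δ) z :=
  (contDiffAt_comp_dropLast (contDiffAt_d1 hΔ)).add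
    (contDiffAt_snd.snd.mul (contDiffAt_comp_dropLast (contDiffAt_d2 hΔ)))

lemma contDiffAt_rectifyingChart (hΔ : ContDiffAt ℝ ∞ Δ (dropLast z)) (hz : slopeDeriv Δ z ≠ 0) :
    ContDiffAt ℝ ∞ (rectifyingChart Δ a) z :=
  (contDiffAt_comp_dropLast hΔ).prodMk ((by fun_prop : ContDiffAt ℝ ∞
    (fun z : ℝ × ℝ × ℝ => z.2.1 - a.2.1 - a.2.2 * (z.1 - a.1)) z).prodMk
      ((contDiffAt_snd.snd.sub contDiffAt_const).mul ((contDiffAt_slopeDeriv hΔ).inv hz)))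

lemma fderiv_rectifyingChart_apply (hΔ : ContDiffAt ℝ ∞ Δ (dropLast z)) (hz : slopeDeriv Δ z ≠ 0)
    (w : ℝ × ℝ × ℝ) :
    fderiv ℝ (rectifyingChart Δ a) z w =
      (w.1 * d1 Δ (dropLast z) + w.2.1 * d2 Δ (dropLast z), w.2.1 - a.2.2 * w.1,
        (z.2.2 - a.2.2) * fderiv ℝ (fun z => (slopeDeriv Δ z)⁻¹) z w +
          (slopeDeriv Δ z)⁻¹ * w.2.2) := by
  have hinv : DifferentiableAt ℝ (fun z => (slopeDeriv Δ z)⁻¹) z :=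
    ((contDiffAt_slopeDeriv hΔ).inv hz).differentiableAt (by simp)
  have hfst : HasFDerivAt (fun z : ℝ × ℝ × ℝ => z.1) (ContinuousLinearMap.fst ℝ ℝ (ℝ × ℝ)) z :=
    hasFDerivAt_fst
  have hsnd : HasFDerivAt (fun z : ℝ × ℝ × ℝ => z.2.1)
      ((ContinuousLinearMap.fst ℝ ℝ ℝ).comp (ContinuousLinearMap.snd ℝ ℝ (ℝ × ℝ))) z :=
    hasFDerivAt_snd.fst
  have hx := (hsnd.sub_const a.2.1).fun_sub ((hfst.sub_const a.1).const_mul a.2.2)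
  unfold rectifyingChart
  rw [fderiv_triple_apply ((contDiffAt_comp_dropLast hΔ).differentiableAt (by simp))
      hx.differentiableAt (by fun_prop), fderiv_comp_dropLast_apply (hΔ.differentiableAt (by simp)),
    hx.fderiv, fderiv_fun_mul_apply (by fun_prop) hinv, fderiv_sub_const, fderiv_snd_snd_apply]
  rfl

lemma injective_fderiv_rectifyingChart (hΔ : ContDiffAt ℝ ∞ Δ (dropLast a))
    (ha : slopeDeriv Δ a ≠ 0) : Function.Injective (fderiv ℝ (rectifyingChart Δ a) a) := by
  refine (injective_iff_map_eq_zero _).2 fun w hw => ?_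
  simp only [fderiv_rectifyingChart_apply hΔ ha, sub_self, zero_mul, zero_add,
    Prod.mk_eq_zero] at hw
  obtain ⟨hΔw, hx, hp⟩ := hw
  have hslope : slopeDeriv Δ a * w.1 = 0 := by
    rw [slopeDeriv]
    linear_combination hΔw - d2 Δ (dropLast a) * hx
  have hw1 : w.1 = 0 := (mul_eq_zero.1 hslope).resolve_left ha
  have hw2 : w.2.1 = 0 := by simpa [hw1] using hx
  exact Prod.ext hw1 (Prod.ext hw2 ((mul_eq_zero.1 hp).resolve_left (inv_ne_zero ha)))

lemma exists_fderiv_rectifyingChart_smul_geodesicField (hΔ : ContDiffAt ℝ ∞ Δ (dropLast z))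
    (hz : slopeDeriv Δ z ≠ 0) :
    ∃ m, fderiv ℝ (rectifyingChart Δ a) z ((slopeDeriv Δ z)⁻¹ • geodesicField Δ M z) =
      ((rectifyingChart Δ a z).1, (rectifyingChart Δ a z).1 * (rectifyingChart Δ a z).2.2, m) := by
  refine ⟨_, (fderiv_rectifyingChart_apply hΔ hz _).trans (Prod.ext ?_ (Prod.ext ?_ rfl))⟩
  · calc (slopeDeriv Δ z)⁻¹ * Δ (dropLast z) * d1 Δ (dropLast z) +
          (slopeDeriv Δ z)⁻¹ * (z.2.2 * Δ (dropLast z)) * d2 Δ (dropLast z)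
        = (slopeDeriv Δ z)⁻¹ * slopeDeriv Δ z * Δ (dropLast z) := by rw [slopeDeriv]; ring
      _ = Δ (dropLast z) := by rw [inv_mul_cancel₀ hz, one_mul]
  · simp only [geodesicField, rectifyingChart, Prod.smul_mk, smul_eq_mul, dropLast_apply]
    ring

lemma geodesicField_eq_zero_iff :
    geodesicField Δ M z = 0 ↔ Δ (dropLast z) = 0 ∧ M z = 0 := by
  simp +contextual [geodesicField, dropLast_apply, Prod.ext_iff]

lemma fderiv_geodesicField_apply (hΔ : DifferentiableAt ℝ Δ (dropLast z))
    (hM : DifferentiableAt ℝ M z) :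
    fderiv ℝ (geodesicField Δ M) z (0, 0, 1) =
      (0, Δ (dropLast z), fderiv ℝ M z (0, 0, 1) / 2) := by
  have hΔ' : DifferentiableAt ℝ (fun z => Δ (dropLast z)) z := hΔ.comp z dropLast.differentiableAt
  have hfield : geodesicField Δ M = fun z => (Δ (dropLast z), z.2.2 * Δ (dropLast z), 2⁻¹ * M z) :=
    funext fun z => by rw [geodesicField, div_eq_inv_mul, dropLast_apply]
  rw [hfield, fderiv_triple_apply hΔ' (by fun_prop) (by fun_prop),
    fderiv_fun_mul_apply (by fun_prop) hΔ', fderiv_comp_dropLast_apply hΔ, fderiv_snd_snd_apply,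
    fderiv_const_mul hM]
  simp [div_eq_inv_mul]

lemma fderiv_inv_slopeDeriv_smul_geodesicField (hΔ : ContDiffAt ℝ ∞ Δ (dropLast z))
    (hM : ContDiffAt ℝ ∞ M z) (hz : slopeDeriv Δ z ≠ 0) (hV : geodesicField Δ M z = 0)
    (hMp : fderiv ℝ M z (0, 0, 1) = -2 * slopeDeriv Δ z) :
    fderiv ℝ (fun z => (slopeDeriv Δ z)⁻¹ • geodesicField Δ M z) z (0, 0, 1) =
      -(0, 0, 1) := by
  have hinv : DifferentiableAt ℝ (fun z => (slopeDeriv Δ z)⁻¹) z :=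
    ((contDiffAt_slopeDeriv hΔ).inv hz).differentiableAt (by simp)
  rw [fderiv_fun_smul hinv ((contDiffAt_geodesicField hΔ hM).differentiableAt (by simp)), add_apply,
    smul_apply, fderiv_geodesicField_apply (hΔ.differentiableAt (by simp))
      (hM.differentiableAt (by simp)), hMp, (geodesicField_eq_zero_iff.1 hV).1]
  simp [hV]
  field_simp

theorem exists_isGermConj_geodesicField (hΔ : ∀ᶠ u in 𝓝 (dropLast a), ContDiffAt ℝ ∞ Δ u)
    (hM : ∀ᶠ z in 𝓝 a, ContDiffAt ℝ ∞ M z) (hk : slopeDeriv Δ a ≠ 0)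
    (ha : geodesicField Δ M a = 0)
    (hMp : ∀ᶠ z in 𝓝 a, geodesicField Δ M z = 0 → fderiv ℝ M z (0, 0, 1) = -2 * slopeDeriv Δ z) :
    ∃ Φ, IsGermConj Φ (fun z => (slopeDeriv Δ z)⁻¹ • geodesicField Δ M z) modelField a 0 := by
  have hΔz : ∀ᶠ z in 𝓝 a, ContDiffAt ℝ ∞ Δ (dropLast z) :=
    dropLast.continuous.continuousAt.eventually hΔ
  have hkz : ∀ᶠ z in 𝓝 a, slopeDeriv Δ z ≠ 0 :=
    (contDiffAt_slopeDeriv hΔ.self_of_nhds).continuousAt.eventually_ne hk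
  have hW : ∀ᶠ z in 𝓝 a,
      ContDiffAt ℝ ∞ (fun z => (slopeDeriv Δ z)⁻¹ • geodesicField Δ M z) z := by
    filter_upwards [hΔz, hM, hkz] with z hΔz hMz hkz
    exact ((contDiffAt_slopeDeriv hΔz).inv hkz).smul (contDiffAt_geodesicField hΔz hMz)
  have hΘ : ∀ᶠ z in 𝓝 a, ContDiffAt ℝ ∞ (rectifyingChart Δ a) z :=
    (hΔz.and hkz).mono fun z hz => contDiffAt_rectifyingChart hz.1 hz.2
  have hinj := injective_fderiv_rectifyingChart hΔ.self_of_nhds hk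
  have hΘa : rectifyingChart Δ a a = 0 := by
    simp [rectifyingChart, (geodesicField_eq_zero_iff.1 ha).1]
  obtain ⟨N, hN, hconj⟩ := exists_isGermConj hΘ hinj hW
  have hform : ∀ᶠ y in 𝓝 (rectifyingChart Δ a a), N y = (y.1, y.1 * y.2.2, (N y).2.2) := by
    rw [← map_nhds_eq_of_injective_fderiv hΘ hinj, eventually_map]
    filter_upwards [hΔz, hkz, hconj.conj] with z hΔz hkz hz
    obtain ⟨m, hm⟩ := exists_fderiv_rectifyingChart_smul_geodesicField (a := a) (M := M) hΔz hkz
    rw [← hz, hm]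
  rw [hΘa] at hconj hN hform
  refine hconj.exists_isGermConj_modelField (w := (0, 0, 1)) hW hN (by simp [ha]) hform
    (by simp) ?_ ?_
  · filter_upwards [hΔz, hkz] with z hΔz hkz
    refine ⟨(fderiv ℝ (rectifyingChart Δ a) z (0, 0, 1)).2.2, ?_⟩
    rw [fderiv_rectifyingChart_apply hΔz hkz]
    simp
  · filter_upwards [hΔz, hM, hkz, hMp] with z hΔz hMz hkz hMpz hWz
    have hVz := (smul_eq_zero.1 hWz).resolve_left (inv_ne_zero hkz)
    exact fderiv_inv_slopeDeriv_smul_geodesicField hΔz hMz hkz hVz (hMpz hVz)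

end GeodesicField

section Metric

/-- The discriminant `Δ = b² - a c` of the metric `a dx² + 2 b dx dt + c dt²`. -/
def discriminant (a b c : ℝ × ℝ → ℝ) (q : ℝ × ℝ) : ℝ :=
  b q ^ 2 - a q * c q

/-- The cubic polynomial `M` in the slope `p = dx / dt` that governs the geodesics of the metric
`a dx² + 2 b dx dt + c dt²`; its argument is `(t, x, p)`. -/
noncomputable def geodesicCubic (a b c : ℝ × ℝ → ℝ) (z : ℝ × ℝ × ℝ) : ℝ :=
  let q := (z.1, z.2.1)
  (a q * (d1 a q - 2 * d2 b q) + b q * d2 a q) * z.2.2 ^ 3 +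
    (b q * (3 * d1 a q - 2 * d2 b q) + c q * d2 a q - 2 * a q * d2 c q) * z.2.2 ^ 2 +
    (b q * (2 * d1 b q - 3 * d2 c q) + 2 * c q * d1 a q - a q * d1 c q) * z.2.2 +
    (c q * (2 * d1 b q - d2 c q) - b q * d1 c q)

/- Modulo `Δ = 0` and `M = 0`, the difference of the two sides is a multiple of
`F = a p² + 2 b p + c`. -/
lemma deriv_geodesicCubic_eq_neg_two_mul {R : Type*} [CommRing R] [IsDomain R]
    {a b c a₁ a₂ b₁ b₂ c₁ c₂ p : R} (hΔ : b ^ 2 - a * c = 0)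
    (hM : (a * (a₁ - 2 * b₂) + b * a₂) * p ^ 3 +
      (b * (3 * a₁ - 2 * b₂) + c * a₂ - 2 * a * c₂) * p ^ 2 +
      (b * (2 * b₁ - 3 * c₂) + 2 * c * a₁ - a * c₁) * p + (c * (2 * b₁ - c₂) - b * c₁) = 0)
    (hF : a * p ^ 2 + 2 * b * p + c ≠ 0) :
    3 * (a * (a₁ - 2 * b₂) + b * a₂) * p ^ 2 +
      2 * (b * (3 * a₁ - 2 * b₂) + c * a₂ - 2 * a * c₂) * p +
      (b * (2 * b₁ - 3 * c₂) + 2 * c * a₁ - a * c₁) =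
    -2 * (2 * b * b₁ - (a * c₁ + c * a₁) + p * (2 * b * b₂ - (a * c₂ + c * a₂))) := by
  refine mul_left_cancel₀ hF ?_
  linear_combination
    (3 * ((a₁ * p ^ 2 + 2 * b₁ * p + c₁) + p * (a₂ * p ^ 2 + 2 * b₂ * p + c₂))) * hΔ +
      3 * (a * p + b) * hM

lemma hasDerivAt_cubic (μ₃ μ₂ μ₁ μ₀ p : ℝ) :
    HasDerivAt (fun p => μ₃ * p ^ 3 + μ₂ * p ^ 2 + μ₁ * p + μ₀)
      (3 * μ₃ * p ^ 2 + 2 * μ₂ * p + μ₁) p := by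
  refine (((((hasDerivAt_pow 3 p).const_mul μ₃).fun_add ((hasDerivAt_pow 2 p).const_mul μ₂)).fun_add
    ((hasDerivAt_id' p).const_mul μ₁)).add_const μ₀).congr_deriv ?_
  push_cast
  ring

variable {a b c : ℝ × ℝ → ℝ} {q : ℝ × ℝ} {z : ℝ × ℝ × ℝ}

lemma contDiffAt_discriminant (ha : ContDiffAt ℝ ∞ a q) (hb : ContDiffAt ℝ ∞ b q)
    (hc : ContDiffAt ℝ ∞ c q) : ContDiffAt ℝ ∞ (discriminant a b c) q :=
  (hb.pow 2).sub (ha.mul hc)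

lemma contDiffAt_geodesicCubic (ha : ContDiffAt ℝ ∞ a (dropLast z))
    (hb : ContDiffAt ℝ ∞ b (dropLast z)) (hc : ContDiffAt ℝ ∞ c (dropLast z)) :
    ContDiffAt ℝ ∞ (geodesicCubic a b c) z := by
  have ha₀ := contDiffAt_comp_dropLast ha
  have hb₀ := contDiffAt_comp_dropLast hb
  have hc₀ := contDiffAt_comp_dropLast hc
  have ha₁ := contDiffAt_comp_dropLast (contDiffAt_d1 ha)
  have hb₁ := contDiffAt_comp_dropLast (contDiffAt_d1 hb)
  have hc₁ := contDiffAt_comp_dropLast (contDiffAt_d1 hc)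
  have ha₂ := contDiffAt_comp_dropLast (contDiffAt_d2 ha)
  have hb₂ := contDiffAt_comp_dropLast (contDiffAt_d2 hb)
  have hc₂ := contDiffAt_comp_dropLast (contDiffAt_d2 hc)
  unfold geodesicCubic
  simp only [dropLast_apply] at ha₀ hb₀ hc₀ ha₁ hb₁ hc₁ ha₂ hb₂ hc₂ ⊢
  fun_prop

lemma continuousAt_metric_comp_dropLast (ha : ContDiffAt ℝ ∞ a (dropLast z))
    (hb : ContDiffAt ℝ ∞ b (dropLast z)) (hc : ContDiffAt ℝ ∞ c (dropLast z)) :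
    ContinuousAt (fun z =>
      a (dropLast z) * z.2.2 ^ 2 + 2 * b (dropLast z) * z.2.2 + c (dropLast z)) z :=
  ((((contDiffAt_comp_dropLast ha).mul (contDiffAt_snd.snd.pow 2)).add
    ((contDiffAt_const.mul (contDiffAt_comp_dropLast hb)).mul contDiffAt_snd.snd)).add
      (contDiffAt_comp_dropLast hc)).continuousAt

lemma fderiv_discriminant_apply (ha : DifferentiableAt ℝ a q) (hb : DifferentiableAt ℝ b q)
    (hc : DifferentiableAt ℝ c q) (w : ℝ × ℝ) :
    fderiv ℝ (discriminant a b c) q w =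
      2 * b q * fderiv ℝ b q w - (a q * fderiv ℝ c q w + c q * fderiv ℝ a q w) := by
  have h := ((hb.hasFDerivAt.pow 2).sub (ha.hasFDerivAt.mul hc.hasFDerivAt)).fderiv
  refine (congrArg (· w) h).trans ?_
  simp

lemma fderiv_geodesicCubic_apply (hM : DifferentiableAt ℝ (geodesicCubic a b c) z) :
    fderiv ℝ (geodesicCubic a b c) z (0, 0, 1) =
      let q := dropLast z
      3 * (a q * (d1 a q - 2 * d2 b q) + b q * d2 a q) * z.2.2 ^ 2 +
        2 * (b q * (3 * d1 a q - 2 * d2 b q) + c q * d2 a q - 2 * a q * d2 c q) * z.2.2 +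
        (b q * (2 * d1 b q - 3 * d2 c q) + 2 * c q * d1 a q - a q * d1 c q) := by
  have hline : HasDerivAt (fun p : ℝ => (z.1, z.2.1, p)) ((0 : ℝ), (0 : ℝ), (1 : ℝ)) z.2.2 :=
    (hasDerivAt_const _ _).prodMk ((hasDerivAt_const _ _).prodMk (hasDerivAt_id _))
  refine (hM.hasFDerivAt.comp_hasDerivAt (f := fun p : ℝ => (z.1, z.2.1, p)) z.2.2 hline).unique
    (?_ : HasDerivAt (fun p => geodesicCubic a b c (z.1, z.2.1, p)) _ z.2.2)
  simp only [geodesicCubic]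
  exact hasDerivAt_cubic _ _ _ _ _

/- The linear part of the geodesic field in the directions transverse to its singular curve is
traceless. -/
lemma fderiv_geodesicCubic_eq_neg_two_mul_slopeDeriv (ha : ContDiffAt ℝ ∞ a (dropLast z))
    (hb : ContDiffAt ℝ ∞ b (dropLast z)) (hc : ContDiffAt ℝ ∞ c (dropLast z))
    (hz : geodesicField (discriminant a b c) (geodesicCubic a b c) z = 0)
    (hF : a (dropLast z) * z.2.2 ^ 2 + 2 * b (dropLast z) * z.2.2 + c (dropLast z) ≠ 0) :
    fderiv ℝ (geodesicCubic a b c) z (0, 0, 1) = -2 * slopeDeriv (discriminant a b c) z := by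
  obtain ⟨hΔ, hM⟩ := geodesicField_eq_zero_iff.1 hz
  have hfderiv := fderiv_discriminant_apply (ha.differentiableAt (by simp))
    (hb.differentiableAt (by simp)) (hc.differentiableAt (by simp))
  rw [fderiv_geodesicCubic_apply ((contDiffAt_geodesicCubic ha hb hc).differentiableAt (by simp)),
    slopeDeriv, d1, d2, hfderiv, hfderiv]
  exact deriv_geodesicCubic_eq_neg_two_mul hΔ hM hF

theorem stmt17_general {D : Set (ℝ × ℝ)} (hD : IsOpen D) (ha : ContDiffOn ℝ ∞ a D)
    (hb : ContDiffOn ℝ ∞ b D) (hc : ContDiffOn ℝ ∞ c D) (hq : q ∈ D)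
    (hΔ : discriminant a b c q = 0) {p : ℝ} (hroot : geodesicCubic a b c (q.1, q.2, p) = 0)
    (hsimple : fderiv ℝ (geodesicCubic a b c) (q.1, q.2, p) (0, 0, 1) ≠ 0)
    (hnoniso : a q * p ^ 2 + 2 * b q * p + c q ≠ 0) :
    geodesicField (discriminant a b c) (geodesicCubic a b c) (q.1, q.2, p) = 0 ∧
      OrbEquiv {z : ℝ × ℝ × ℝ | (z.1, z.2.1) ∈ D}
        (geodesicField (discriminant a b c) (geodesicCubic a b c)) modelField (q.1, q.2, p) 0 := by
  have hV : geodesicField (discriminant a b c) (geodesicCubic a b c) (q.1, q.2, p) = 0 :=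
    geodesicField_eq_zero_iff.2 ⟨hΔ, hroot⟩
  refine ⟨hV, ?_⟩
  have hsmooth : ∀ᶠ u in 𝓝 q, ContDiffAt ℝ ∞ a u ∧ ContDiffAt ℝ ∞ b u ∧ ContDiffAt ℝ ∞ c u := by
    filter_upwards [hD.mem_nhds hq] with u hu
    exact ⟨ha.contDiffAt (hD.mem_nhds hu), hb.contDiffAt (hD.mem_nhds hu),
      hc.contDiffAt (hD.mem_nhds hu)⟩
  have hdrop : Tendsto dropLast (𝓝 (q.1, q.2, p)) (𝓝 q) :=
    dropLast.continuous.tendsto (q.1, q.2, p)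
  obtain ⟨haq, hbq, hcq⟩ := hsmooth.self_of_nhds
  have hnoniso' : ∀ᶠ z in 𝓝 (q.1, q.2, p),
      a (dropLast z) * z.2.2 ^ 2 + 2 * b (dropLast z) * z.2.2 + c (dropLast z) ≠ 0 :=
    (continuousAt_metric_comp_dropLast haq hbq hcq).eventually_ne hnoniso
  have hk : slopeDeriv (discriminant a b c) (q.1, q.2, p) ≠ 0 := fun h => hsimple <| by
    rw [fderiv_geodesicCubic_eq_neg_two_mul_slopeDeriv haq hbq hcq hV hnoniso, h, mul_zero]
  have hΔs : ∀ᶠ u in 𝓝 q, ContDiffAt ℝ ∞ (discriminant a b c) u :=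
    hsmooth.mono fun u hu => contDiffAt_discriminant hu.1 hu.2.1 hu.2.2
  obtain ⟨Φ, hΦ⟩ := exists_isGermConj_geodesicField hΔs
    ((hdrop.eventually hsmooth).mono fun z hz => contDiffAt_geodesicCubic hz.1 hz.2.1 hz.2.2) hk hV
    (by filter_upwards [hdrop.eventually hsmooth, hnoniso'] with z hz hFz hVz using
      fderiv_geodesicCubic_eq_neg_two_mul_slopeDeriv hz.1 hz.2.1 hz.2.2 hVz hFz)
  have hks := (hdrop.eventually hΔs).mono fun z hz => contDiffAt_slopeDeriv hz
  refine hΦ.orbEquiv hks hk ?_ ((hD.preimage dropLast.continuous).mem_nhds hq)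
  filter_upwards [hks.self_of_nhds.continuousAt.eventually_ne hk] with z hz
  rw [smul_inv_smul₀ hz]

end Metric

/-- Pseudo-Riemannian metric: at a parabolic point `q*` and a non-isotropic simple root
`p*` of the cubic `M(q*, ·)`, the germ of `V = (Δ, pΔ, M/2)` at `(q*, p*)` is
`C^∞`-smoothly orbitally equivalent to `ξ̇ = ξ, η̇ = −η, ζ̇ = ξη`. -/
theorem stmt17 (D : Set (ℝ × ℝ)) (hD : IsOpen D)
    (a b c : ℝ × ℝ → ℝ)
    (ha : ContDiffOn ℝ (⊤ : ℕ∞) a D) (hb : ContDiffOn ℝ (⊤ : ℕ∞) b D)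
    (hc : ContDiffOn ℝ (⊤ : ℕ∞) c D)
    (Δ : ℝ × ℝ → ℝ) (hΔ : Δ = fun q => b q ^ 2 - a q * c q)
    (μ₃ μ₂ μ₁ μ₀ : ℝ × ℝ → ℝ)
    (hμ₃ : μ₃ = fun q => a q * (d1 a q - 2 * d2 b q) + b q * d2 a q)
    (hμ₂ : μ₂ = fun q => b q * (3 * d1 a q - 2 * d2 b q) + c q * d2 a q - 2 * a q * d2 c q)
    (hμ₁ : μ₁ = fun q => b q * (2 * d1 b q - 3 * d2 c q) + 2 * c q * d1 a q - a q * d1 c q)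
    (hμ₀ : μ₀ = fun q => c q * (2 * d1 b q - d2 c q) - b q * d1 c q)
    (M : ℝ × ℝ × ℝ → ℝ)
    (hM : M = fun z => μ₃ (z.1, z.2.1) * z.2.2 ^ 3 + μ₂ (z.1, z.2.1) * z.2.2 ^ 2 +
      μ₁ (z.1, z.2.1) * z.2.2 + μ₀ (z.1, z.2.1))
    (V : ℝ × ℝ × ℝ → ℝ × ℝ × ℝ)
    (hV : V = fun z => (Δ (z.1, z.2.1), z.2.2 * Δ (z.1, z.2.1), M z / 2))
    (q : ℝ × ℝ) (hq : q ∈ D)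
    (hq1 : Δ q = 0) (hq2 : fderiv ℝ Δ q ≠ 0) (hq3 : a q ≠ 0)
    (hq4 : a q * d1 Δ q - b q * d2 Δ q ≠ 0)
    (ps : ℝ) (hroot : M (q.1, q.2, ps) = 0)
    (hsimple : fderiv ℝ M (q.1, q.2, ps) ((0 : ℝ), (0 : ℝ), (1 : ℝ)) ≠ 0)
    (hnoniso : a q * ps ^ 2 + 2 * b q * ps + c q ≠ 0) :
    V (q.1, q.2, ps) = 0 ∧
    OrbEquiv {z : ℝ × ℝ × ℝ | (z.1, z.2.1) ∈ D} V
      (fun y : ℝ × ℝ × ℝ => (y.1, -y.2.1, y.1 * y.2.1)) (q.1, q.2, ps) 0 := by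
  subst hΔ hμ₃ hμ₂ hμ₁ hμ₀ hM hV
  exact stmt17_general hD ha hb hc hq hq1 hroot hsimple hnoniso
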